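/- Let s > 1, f ∈ H^s(𝕊) with f_φ ∈ H^{s−1/2}(𝕊), and h ∈ H^{s+3/4}(ℰ). Then the function v(r,θ,φ) = Σ_{l=0}^∞ Σ_{m=−l}^{l} (b_l^m + c_l^m) r^{−l−1} Y_l^m(θ,φ) belongs to C²(Ω) ∩ C¹(cl Ω) and is a classical solution of: Δv = 0 in the exterior Ω of 𝕊; −2 sin θ · v_r + cos θ · v_θ = f/2 on 𝕊; v → 0 uniformly as r → ∞; and v = h on the equator ℰ. -/

import Mathlib

noncomputable section

open MeasureTheory Real Filter

/-- The Legendre polynomial of degree `n`, via Rodrigues' formula. -/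
def legendreP (n : ℕ) : Polynomial ℝ :=
  Polynomial.C ((2 ^ n * n.factorial : ℝ)⁻¹) *
    Polynomial.derivative^[n] ((Polynomial.X ^ 2 - 1) ^ n)

/-- The associated Legendre function `P_l^m` (with Condon–Shortley phase),
so that `P_{|m|+2k}^{|m|}(0) = (-1)^{|m|+k} (2|m|+2k-1)!!/(2k)!!`. -/
def assocLegendre (l m : ℕ) (x : ℝ) : ℝ :=
  (-1 : ℝ) ^ m * (1 - x ^ 2) ^ ((m : ℝ) / 2) *
    (Polynomial.derivative^[m] (legendreP l)).eval x

/-- The normalizing constant `α_l^m` of the spherical harmonics. -/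
def alphaY (l : ℕ) (m : ℤ) : ℝ :=
  (-1 : ℝ) ^ ((m + |m|) / 2) *
    Real.sqrt ((2 * l + 1) * (l - m.natAbs).factorial /
      (4 * Real.pi * (l + m.natAbs).factorial))

/-- The spherical harmonic `Y_l^m` in latitude/longitude coordinates `(θ, φ)`. -/
def Ylm (l : ℕ) (m : ℤ) (θ φ : ℝ) : ℂ :=
  ((alphaY l m * assocLegendre l m.natAbs (Real.sin θ) : ℝ) : ℂ) *
    Complex.exp (Complex.I * m * φ)

/-- The surface measure `dS = cos θ dθ dφ` of the unit sphere, in the coordinate box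
`[-π/2, π/2] × [-π, π)`. -/
def sphereMeasure : Measure (ℝ × ℝ) :=
  ((volume : Measure (ℝ × ℝ)).restrict
      (Set.Icc (-(Real.pi / 2)) (Real.pi / 2) ×ˢ Set.Ico (-Real.pi) Real.pi)).withDensity
    fun p => ENNReal.ofReal (Real.cos p.1)

/-- The Fourier–Laplace coefficient `ψ̂_l^m = ∫_𝕊 ψ conj(Y_l^m) dS`. -/
def flCoeff (ψ : ℝ → ℝ → ℂ) (l : ℕ) (m : ℤ) : ℂ :=
  ∫ p : ℝ × ℝ, ψ p.1 p.2 * (starRingEnd ℂ) (Ylm l m p.1 p.2) ∂sphereMeasure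

/-- Membership in the fractional Sobolev space `H^s(𝕊)`:
`ψ ∈ L²(𝕊)` and `Σ_{l,m} (l+1)^{2s} |ψ̂_l^m|² < ∞`.
(The coefficients with `|m| > l` vanish automatically.) -/
def MemHs (s : ℝ) (ψ : ℝ → ℝ → ℂ) : Prop :=
  MeasureTheory.MemLp (fun p : ℝ × ℝ => ψ p.1 p.2) 2 sphereMeasure ∧
    Summable fun p : ℕ × ℤ =>
      ((p.1 : ℝ) + 1) ^ (2 * s) * ‖flCoeff ψ p.1 p.2‖ ^ 2

/-- The `H^s(𝕊)` norm. -/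
def HsNorm (s : ℝ) (ψ : ℝ → ℝ → ℂ) : ℝ :=
  Real.sqrt (∑' p : ℕ × ℤ, ((p.1 : ℝ) + 1) ^ (2 * s) * ‖flCoeff ψ p.1 p.2‖ ^ 2)

/-- Axially symmetric functions on the sphere: functions not depending on the longitude. -/
def Axial (ψ : ℝ → ℝ → ℂ) : Prop := ∀ θ φ₁ φ₂, ψ θ φ₁ = ψ θ φ₂

/-- Spherical (latitude/longitude) coordinates on the unit sphere of `ℝ³`. -/
def sphCoord (θ φ : ℝ) : EuclideanSpace ℝ (Fin 3) :=
  (WithLp.equiv 2 (Fin 3 → ℝ)).symm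
    ![Real.cos θ * Real.cos φ, Real.cos θ * Real.sin φ, Real.sin θ]

/-- The open exterior `Ω` of the unit sphere. -/
def extDomain : Set (EuclideanSpace ℝ (Fin 3)) := {x | 1 < ‖x‖}

/-- The closed exterior `cl Ω` of the unit sphere. -/
def closedExt : Set (EuclideanSpace ℝ (Fin 3)) := {x | 1 ≤ ‖x‖}

/-- The Laplacian of a function on `ℝ³`. -/
def lap {F : Type*} [NormedAddCommGroup F] [NormedSpace ℝ F]
    (u : EuclideanSpace ℝ (Fin 3) → F) (x : EuclideanSpace ℝ (Fin 3)) : F :=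
  ∑ i : Fin 3, fderiv ℝ (fun y => fderiv ℝ u y (EuclideanSpace.single i 1)) x
    (EuclideanSpace.single i 1)

/-- The radial derivative `u_r` at a point of the unit sphere (taken from outside). -/
def radialDeriv {F : Type*} [NormedAddCommGroup F] [NormedSpace ℝ F]
    (u : EuclideanSpace ℝ (Fin 3) → F) (θ φ : ℝ) : F :=
  derivWithin (fun r : ℝ => u (r • sphCoord θ φ)) (Set.Ici 1) 1

/-- The latitudinal derivative `u_θ` at a point of the unit sphere. -/
def thetaDeriv {F : Type*} [NormedAddCommGroup F] [NormedSpace ℝ F]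
    (u : EuclideanSpace ℝ (Fin 3) → F) (θ φ : ℝ) : F :=
  deriv (fun t => u (sphCoord t φ)) θ

/-- The boundary trace on the unit sphere of a real-valued function, in coordinates. -/
def traceR (u : EuclideanSpace ℝ (Fin 3) → ℝ) (θ φ : ℝ) : ℂ := (u (sphCoord θ φ) : ℂ)

/-- The boundary trace on the unit sphere of a complex-valued function, in coordinates. -/
def traceC (u : EuclideanSpace ℝ (Fin 3) → ℂ) (θ φ : ℝ) : ℂ := u (sphCoord θ φ)

/-- The Fourier coefficient on the equator `ℰ`. -/
def equatorCoeff (h : ℝ → ℂ) (m : ℤ) : ℂ :=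
  (1 / (2 * Real.pi)) * ∫ φ in (-Real.pi)..Real.pi, h φ * Complex.exp (-(Complex.I * m * φ))

/-- Membership in the fractional Sobolev space `H^s(ℰ)` on the equator. -/
def MemHsE (s : ℝ) (h : ℝ → ℂ) : Prop :=
  MeasureTheory.MemLp h 2 (volume.restrict (Set.Ico (-Real.pi) Real.pi)) ∧
    Summable fun m : ℤ => ((m.natAbs : ℝ) + 1) ^ (2 * s) * ‖equatorCoeff h m‖ ^ 2

/-- The `H^s(ℰ)` norm. -/
def HsNormE (s : ℝ) (h : ℝ → ℂ) : ℝ :=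
  Real.sqrt (∑' m : ℤ, ((m.natAbs : ℝ) + 1) ^ (2 * s) * ‖equatorCoeff h m‖ ^ 2)

/-- The constant `β_l^m`. -/
def betaLM (l : ℕ) (m : ℤ) : ℝ :=
  Real.sqrt (((l : ℝ) - m.natAbs) * ((l : ℝ) + m.natAbs) /
    ((2 * (l : ℝ) - 1) * (2 * (l : ℝ) + 1)))

/-- The constant `γ_l^m = -(l+1)β_l^m / (3(l+2)β_{l+1}^m)`. -/
def gammaLM (l : ℕ) (m : ℤ) : ℝ :=
  -(((l : ℝ) + 1) * betaLM l m) / (3 * ((l : ℝ) + 2) * betaLM (l + 1) m)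

/-- The product `Γ_k^m = ∏_{j=1}^k γ_{|m|+2j-1}^m` (with `Γ_0^m = 1`). -/
def GammaKM (m : ℤ) (k : ℕ) : ℝ :=
  ∏ j ∈ Finset.Icc 1 k, gammaLM (m.natAbs + 2 * j - 1) m

/-- The value `α_{|m|+2k}^m P_{|m|+2k}^{|m|}(0)`. -/
def PzeroM (m : ℤ) (k : ℕ) : ℝ :=
  alphaY (m.natAbs + 2 * k) m * assocLegendre (m.natAbs + 2 * k) m.natAbs 0

/-- The coefficient `a_l^m = f̂_l^m / (6(l+2)β_{l+1}^m)`. -/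
def aCoef (f : ℝ → ℝ → ℂ) (l : ℕ) (m : ℤ) : ℂ :=
  flCoeff f l m / ((6 * ((l : ℝ) + 2) * betaLM (l + 1) m : ℝ) : ℂ)

/-- The solution of the recurrence `b_{|m|-1}^m = b_{|m|}^m = 0`,
`b_{l+1}^m = γ_l^m b_{l-1}^m + a_l^m`; here `bSeq f m n = b_{|m|-1+n}^m`. -/
def bSeq (f : ℝ → ℝ → ℂ) (m : ℤ) : ℕ → ℂ
  | 0 => 0
  | 1 => 0
  | n + 2 => ((gammaLM (m.natAbs + n) m : ℝ) : ℂ) * bSeq f m n + aCoef f (m.natAbs + n) m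

/-- The coefficient `b_l^m`. -/
def bCoef (f : ℝ → ℝ → ℂ) (l : ℕ) (m : ℤ) : ℂ := bSeq f m (l + 1 - m.natAbs)

/-- The constant `ã^m`. -/
def aTilde (f : ℝ → ℝ → ℂ) (h : ℝ → ℂ) (m : ℤ) : ℂ :=
  (equatorCoeff h m - ∑' k : ℕ, bCoef f (m.natAbs + 2 * k) m * ((PzeroM m k : ℝ) : ℂ)) /
    (((∑' k : ℕ, GammaKM m k * PzeroM m k : ℝ)) : ℂ)

/-- The coefficient `c_l^m`: `c_{|m|+2k}^m = Γ_k^m ã^m` and `c_{|m|+2k-1}^m = 0`. -/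
def cCoef (f : ℝ → ℝ → ℂ) (h : ℝ → ℂ) (l : ℕ) (m : ℤ) : ℂ :=
  if m.natAbs ≤ l ∧ (l - m.natAbs) % 2 = 0 then
    ((GammaKM m ((l - m.natAbs) / 2) : ℝ) : ℂ) * aTilde f h m
  else 0

/-- The boundary trace `v(1, θ, φ)` of the formal series solution. -/
def vTraceS (f : ℝ → ℝ → ℂ) (h : ℝ → ℂ) (θ φ : ℝ) : ℂ :=
  ∑' p : ℕ × ℤ, (bCoef f p.1 p.2 + cCoef f h p.1 p.2) * Ylm p.1 p.2 θ φ

/-- The latitude of a point of `ℝ³`. -/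
def latitude (x : EuclideanSpace ℝ (Fin 3)) : ℝ := Real.arcsin (x 2 / ‖x‖)

/-- The longitude of a point of `ℝ³`. -/
def longitude (x : EuclideanSpace ℝ (Fin 3)) : ℝ :=
  Complex.arg ((x 0 : ℂ) + (x 1 : ℂ) * Complex.I)

/-- The formal series solution `v = Σ (b_l^m + c_l^m) r^{-l-1} Y_l^m(θ, φ)`. -/
def vFun (f : ℝ → ℝ → ℂ) (h : ℝ → ℂ) (x : EuclideanSpace ℝ (Fin 3)) : ℂ :=
  ∑' p : ℕ × ℤ, (bCoef f p.1 p.2 + cCoef f h p.1 p.2) * ((‖x‖ : ℂ) ^ (-(p.1 : ℤ) - 1)) *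
    Ylm p.1 p.2 (latitude x) (longitude x)

/-- `v` is a classical solution of the linearized (oblique derivative) problem
`Δv = 0` in `Ω`, `∇d⋅∇v = -2 sin θ v_r + cos θ v_θ = f/2` on `𝕊`, `v → 0` at infinity,
`v = h` on the equator; complex-valued version. -/
def SolvesObliqueC (v : EuclideanSpace ℝ (Fin 3) → ℂ) (f : ℝ → ℝ → ℂ) (h : ℝ → ℂ) : Prop :=
  ContDiffOn ℝ 2 v extDomain ∧ ContDiffOn ℝ 1 v closedExt ∧
    (∀ x ∈ extDomain, lap v x = 0) ∧
    (∀ θ ∈ Set.Icc (-(Real.pi / 2)) (Real.pi / 2), ∀ φ : ℝ,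
      -2 * (Real.sin θ : ℂ) * radialDeriv v θ φ + (Real.cos θ : ℂ) * thetaDeriv v θ φ
        = f θ φ / 2) ∧
    Filter.Tendsto v (Bornology.cobounded _) (nhds 0) ∧
    (∀ φ : ℝ, v (sphCoord 0 φ) = h φ)

/-- Real-valued version of `SolvesObliqueC`. -/
def SolvesObliqueR (v : EuclideanSpace ℝ (Fin 3) → ℝ) (f : ℝ → ℝ → ℝ) (h : ℝ → ℝ) : Prop :=
  ContDiffOn ℝ 2 v extDomain ∧ ContDiffOn ℝ 1 v closedExt ∧
    (∀ x ∈ extDomain, lap v x = 0) ∧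
    (∀ θ ∈ Set.Icc (-(Real.pi / 2)) (Real.pi / 2), ∀ φ : ℝ,
      -2 * Real.sin θ * radialDeriv v θ φ + Real.cos θ * thetaDeriv v θ φ = f θ φ / 2) ∧
    Filter.Tendsto v (Bornology.cobounded _) (nhds 0) ∧
    (∀ φ : ℝ, v (sphCoord 0 φ) = h φ)

open Topology

/-!
In the basis of exterior harmonics `r ^ (-l - 1) Y_l^m` the partial derivatives of `ℝ³` are ladder
operators, and the oblique derivative couples only neighbouring degrees of the same order. The
boundary equation is therefore a two-term recurrence in `l` for each `m`, with general solution
`b_l^m + Γ_k^m ã^m`; the equatorial data fix `ã^m`, because `Γ_k^m` and the equatorial values of the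
harmonics alternate in sign together. The recurrence is a contraction with factor about `1 / 3`,
so its solution is one order smoother than `f`. By the Cauchy–Schwarz inequality and the addition
theorem, this makes the series and its termwise derivative converge uniformly up to the sphere as
soon as `s > 1`. It remains to know that `f` is the sum of its own expansion, which follows from
Fourier uniqueness in the longitude and the Weierstrass approximation theorem in `sin θ`.
-/

section Legendre

open Polynomial

/-- The `m`-th derivative of the Legendre polynomial of degree `l`, as a polynomial. -/
def legendreDeriv (l m : ℕ) : ℝ[X] := derivative^[m] (legendreP l)

lemma legendreDeriv_succ (l m : ℕ) : legendreDeriv l (m + 1) = derivative (legendreDeriv l m) :=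
  Function.iterate_succ_apply' _ _ _

lemma derivative_X_sq_sub_one_pow_succ (n : ℕ) :
    derivative ((X ^ 2 - 1 : ℝ[X]) ^ (n + 1)) = C (2 * ((n : ℝ) + 1)) * ((X ^ 2 - 1) ^ n * X) := by
  have hC : (C 2 : ℝ[X]) = 2 := rfl
  rw [derivative_pow_succ]
  simp only [derivative_sub, derivative_one, derivative_X_sq, C_mul, C_add, C_1, hC, map_natCast]
  ring

lemma rodrigues_const_succ (n : ℕ) :
    (2 ^ (n + 1) * (n + 1).factorial : ℝ)⁻¹ * (2 * ((n : ℝ) + 1)) =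
      (2 ^ n * n.factorial : ℝ)⁻¹ := by
  rw [Nat.factorial_succ]
  push_cast
  have hn : (n.factorial : ℝ) ≠ 0 := by positivity
  field_simp
  ring

lemma legendreDeriv_succ_one (n : ℕ) :
    legendreDeriv (n + 1) 1 = C ((n : ℝ) + 1) * legendreDeriv n 0 + X * legendreDeriv n 1 := by
  simp only [legendreDeriv, Function.iterate_one, Function.iterate_zero, id, legendreP]
  rw [derivative_C_mul, ← Function.iterate_succ_apply' derivative, Function.iterate_succ_apply,
    derivative_X_sq_sub_one_pow_succ, iterate_derivative_C_mul, iterate_derivative_mul_X,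
    ← mul_assoc, ← C_mul, rodrigues_const_succ, derivative_C_mul,
    ← Function.iterate_succ_apply' derivative, Nat.add_sub_cancel, nsmul_eq_mul, C_add, C_1,
    map_natCast]
  push_cast
  ring

lemma X_mul_legendreDeriv_succ_one (n : ℕ) :
    X * legendreDeriv (n + 1) 1 =
      legendreDeriv n 1 + C ((n : ℝ) + 1) * legendreDeriv (n + 1) 0 := by
  have hpow : derivative ((X ^ 2 - 1 : ℝ[X]) ^ (n + 1)) * X =
      C (2 * ((n : ℝ) + 1)) * ((X ^ 2 - 1) ^ (n + 1)) +
        C (2 * ((n : ℝ) + 1)) * ((X ^ 2 - 1) ^ n) := by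
    rw [derivative_X_sq_sub_one_pow_succ]
    ring
  have hiter := congrArg (fun p => derivative^[n + 1] p) hpow
  have hC : (C 2 : ℝ[X]) = 2 := rfl
  simp only [iterate_map_add, iterate_derivative_C_mul, iterate_derivative_mul_X,
    ← Function.iterate_succ_apply, Nat.add_sub_cancel, nsmul_eq_mul] at hiter
  simp only [legendreDeriv, Function.iterate_one, Function.iterate_zero, id, legendreP]
  rw [derivative_C_mul, derivative_C_mul, ← Function.iterate_succ_apply' derivative,
    ← Function.iterate_succ_apply' derivative, ← rodrigues_const_succ n]
  simp only [C_mul, C_add, C_1, hC, map_natCast, Nat.succ_eq_add_one] at hiter ⊢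
  push_cast at hiter
  linear_combination C ((2 ^ (n + 1) * (n + 1).factorial : ℝ)⁻¹) * hiter

lemma legendreDeriv_succ_succ (l m : ℕ) :
    legendreDeriv (l + 1) (m + 1) =
      C ((l : ℝ) + m + 1) * legendreDeriv l m + X * legendreDeriv l (m + 1) := by
  induction m with
  | zero => simpa using legendreDeriv_succ_one l
  | succ m ih =>
    rw [legendreDeriv_succ, ih]
    simp only [derivative_add, derivative_mul, derivative_C, derivative_X, ← legendreDeriv_succ]
    simp only [Nat.cast_add, Nat.cast_one, C_add, C_1]
    ring

lemma X_mul_legendreDeriv_succ_succ (l m : ℕ) :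
    X * legendreDeriv (l + 1) (m + 1) =
      legendreDeriv l (m + 1) + C ((l : ℝ) + 1 - m) * legendreDeriv (l + 1) m := by
  induction m with
  | zero => simpa using X_mul_legendreDeriv_succ_one l
  | succ m ih =>
    have hder := congrArg derivative ih
    simp only [derivative_add, derivative_mul, derivative_C, derivative_X,
      ← legendreDeriv_succ] at hder
    simp only [Nat.cast_add, Nat.cast_one, C_add, C_sub, C_1] at hder ⊢
    linear_combination hder

lemma natDegree_legendreP_le (l : ℕ) : (legendreP l).natDegree ≤ l := by
  have hbase : ((X ^ 2 - 1 : ℝ[X]) ^ l).natDegree ≤ l * 2 :=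
    natDegree_pow_le_of_le l (by rw [← C_1, natDegree_X_pow_sub_C])
  calc (legendreP l).natDegree
      ≤ (derivative^[l] ((X ^ 2 - 1 : ℝ[X]) ^ l)).natDegree := natDegree_C_mul_le _ _
    _ ≤ ((X ^ 2 - 1 : ℝ[X]) ^ l).natDegree - l := natDegree_iterate_derivative _ _
    _ ≤ l := by omega

/-- The associated Legendre function without the factor `(-1)^m (1 - t²)^{m/2}`, that is, the
value at `t` of the `m`-th derivative of the Legendre polynomial of degree `l`. -/
def reducedLegendre (l m : ℕ) (t : ℝ) : ℝ := (legendreDeriv l m).eval t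

lemma reducedLegendre_succ_succ (l m : ℕ) (t : ℝ) :
    reducedLegendre (l + 1) (m + 1) t =
      ((l : ℝ) + m + 1) * reducedLegendre l m t + t * reducedLegendre l (m + 1) t := by
  simp [reducedLegendre, legendreDeriv_succ_succ l m]

lemma mul_reducedLegendre_succ_succ (l m : ℕ) (t : ℝ) :
    t * reducedLegendre (l + 1) (m + 1) t =
      reducedLegendre l (m + 1) t + ((l : ℝ) + 1 - m) * reducedLegendre (l + 1) m t := by
  simpa [reducedLegendre] using
    congrArg (fun p : ℝ[X] => p.eval t) (X_mul_legendreDeriv_succ_succ l m)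

lemma reducedLegendre_succ_left (l m : ℕ) (t : ℝ) :
    ((l : ℝ) + 1 - m) * reducedLegendre (l + 1) m t =
      ((l : ℝ) + m + 1) * t * reducedLegendre l m t -
        (1 - t ^ 2) * reducedLegendre l (m + 1) t := by
  linear_combination t * reducedLegendre_succ_succ l m t - mul_reducedLegendre_succ_succ l m t

lemma reducedLegendre_ode (l m : ℕ) (t : ℝ) :
    (1 - t ^ 2) * reducedLegendre l (m + 2) t =
      2 * ((m : ℝ) + 1) * t * reducedLegendre l (m + 1) t -
        ((l : ℝ) - m) * ((l : ℝ) + m + 1) * reducedLegendre l m t := by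
  have h := reducedLegendre_succ_left l (m + 1) t
  push_cast at h
  linear_combination h - ((l : ℝ) - m) * reducedLegendre_succ_succ l m t

lemma reducedLegendre_three_term (l m : ℕ) (t : ℝ) :
    (2 * (l : ℝ) + 3) * t * reducedLegendre (l + 1) m t =
      ((l : ℝ) - m + 2) * reducedLegendre (l + 2) m t +
        ((l : ℝ) + m + 1) * reducedLegendre l m t := by
  have h := reducedLegendre_succ_left (l + 1) m t
  push_cast at h
  linear_combination
    -h + reducedLegendre_succ_succ l m t - t * mul_reducedLegendre_succ_succ l m t

lemma hasDerivAt_reducedLegendre (l m : ℕ) (t : ℝ) :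
    HasDerivAt (reducedLegendre l m) (reducedLegendre l (m + 1) t) t := by
  rw [reducedLegendre, legendreDeriv_succ]
  exact (legendreDeriv l m).hasDerivAt t

lemma continuous_reducedLegendre (l m : ℕ) : Continuous (reducedLegendre l m) :=
  (legendreDeriv l m).continuous

lemma reducedLegendre_eq_zero_of_lt {l m : ℕ} (h : l < m) (t : ℝ) :
    reducedLegendre l m t = 0 := by
  rw [reducedLegendre, legendreDeriv,
    iterate_derivative_eq_zero ((natDegree_legendreP_le l).trans_lt h), eval_zero]

lemma reducedLegendre_zero_zero (t : ℝ) : reducedLegendre 0 0 t = 1 := by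
  simp [reducedLegendre, legendreDeriv, legendreP]

lemma reducedLegendre_succ_self_succ (m : ℕ) (t : ℝ) :
    reducedLegendre (m + 1) (m + 1) t = (2 * (m : ℝ) + 1) * reducedLegendre m m t := by
  rw [reducedLegendre_succ_succ, reducedLegendre_eq_zero_of_lt m.lt_succ_self]
  ring

lemma reducedLegendre_self_pos (m : ℕ) (t : ℝ) : 0 < reducedLegendre m m t := by
  induction m with
  | zero => simp [reducedLegendre_zero_zero]
  | succ m ih =>
    rw [reducedLegendre_succ_self_succ]
    positivity

lemma reducedLegendre_succ_self (m : ℕ) (t : ℝ) :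
    reducedLegendre (m + 1) m t = (2 * (m : ℝ) + 1) * t * reducedLegendre m m t := by
  have h := reducedLegendre_succ_left m m t
  rw [reducedLegendre_eq_zero_of_lt m.lt_succ_self] at h
  linear_combination h

lemma reducedLegendre_zero_right_one (l : ℕ) : reducedLegendre l 0 1 = 1 := by
  induction l with
  | zero => exact reducedLegendre_zero_zero 1
  | succ l ih =>
    have h := reducedLegendre_succ_left l 0 1
    rw [ih] at h
    norm_num at h
    exact mul_left_cancel₀ (by positivity : (l : ℝ) + 1 ≠ 0) (by linarith)

end Legendre

section LegendreSums

lemma hasDerivAt_one_sub_sq_pow (m : ℕ) (t : ℝ) :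
    HasDerivAt (fun t : ℝ => (1 - t ^ 2) ^ (m + 1))
      (((m : ℝ) + 1) * (1 - t ^ 2) ^ m * (-(2 * t))) t := by
  refine (((hasDerivAt_const t (1 : ℝ)).fun_sub
    (hasDerivAt_pow 2 t)).fun_pow (m + 1)).congr_deriv ?_
  simp

/-- The ratio `(l - m)! / (l + m)!` in the normalization of the spherical harmonics, meant for
`m ≤ l`. -/
def factorialRatio (l m : ℕ) : ℝ := (l - m).factorial / (l + m).factorial

lemma factorialRatio_zero (l : ℕ) : factorialRatio l 0 = 1 :=
  div_self (by positivity)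

lemma factorialRatio_succ_right_mul {l m : ℕ} (h : m < l) :
    factorialRatio l (m + 1) * (((l : ℝ) - m) * ((l : ℝ) + m + 1)) = factorialRatio l m := by
  obtain ⟨k, rfl⟩ := Nat.exists_eq_add_of_lt h
  have hsub : m + k + 1 - m = k + 1 := by lia
  have hsub' : m + k + 1 - (m + 1) = k := by lia
  rw [factorialRatio, factorialRatio, hsub, hsub', ← add_assoc (m + k + 1) m 1,
    Nat.factorial_succ k, Nat.factorial_succ (m + k + 1 + m)]
  push_cast
  have hfac : ((m + k + 1 + m).factorial : ℝ) ≠ 0 := by positivity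
  field_simp
  ring

lemma hasDerivAt_weighted_reducedLegendre_sq {l m : ℕ} (h : m < l) (t : ℝ) :
    HasDerivAt
      (fun t => factorialRatio l (m + 1) *
        ((1 - t ^ 2) ^ (m + 1) * reducedLegendre l (m + 1) t ^ 2))
      (factorialRatio l (m + 1) *
          ((1 - t ^ 2) ^ (m + 1) * reducedLegendre l (m + 1) t * reducedLegendre l (m + 2) t) -
        factorialRatio l m *
          ((1 - t ^ 2) ^ m * reducedLegendre l m t * reducedLegendre l (m + 1) t)) t := by
  refine (((hasDerivAt_one_sub_sq_pow m t).fun_mul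
    ((hasDerivAt_reducedLegendre l (m + 1) t).fun_pow 2)).const_mul _).congr_deriv ?_
  rw [← factorialRatio_succ_right_mul h]
  simp only [Nat.cast_ofNat, Nat.add_one_sub_one, pow_one]
  linear_combination
    (factorialRatio l (m + 1) * (1 - t ^ 2) ^ m * reducedLegendre l (m + 1) t) *
      reducedLegendre_ode l m t

-- The derivative of the left-hand side telescopes to zero, so the sum equals its value at `1`.
lemma reducedLegendre_addition (l : ℕ) (t : ℝ) :
    reducedLegendre l 0 t ^ 2 + 2 * ∑ m ∈ Finset.range l,
      factorialRatio l (m + 1) * ((1 - t ^ 2) ^ (m + 1) * reducedLegendre l (m + 1) t ^ 2) = 1 := by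
  set T : ℝ → ℝ := fun t => reducedLegendre l 0 t ^ 2 + 2 * ∑ m ∈ Finset.range l,
    factorialRatio l (m + 1) * ((1 - t ^ 2) ^ (m + 1) * reducedLegendre l (m + 1) t ^ 2) with hT
  have hderiv (t : ℝ) : HasDerivAt T 0 t := by
    refine (((hasDerivAt_reducedLegendre l 0 t).fun_pow 2).fun_add ((HasDerivAt.fun_sum fun m hm =>
      hasDerivAt_weighted_reducedLegendre_sq (Finset.mem_range.1 hm) t).const_mul 2)).congr_deriv ?_
    rw [Finset.sum_range_sub fun m => factorialRatio l m *
        ((1 - t ^ 2) ^ m * reducedLegendre l m t * reducedLegendre l (m + 1) t),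
      reducedLegendre_eq_zero_of_lt l.lt_succ_self, factorialRatio_zero]
    simp only [Nat.cast_ofNat, Nat.add_one_sub_one, pow_one, pow_zero]
    ring
  calc T t = T 1 := is_const_of_deriv_eq_zero (fun t => (hderiv t).differentiableAt)
        (fun t => (hderiv t).deriv) t 1
    _ = 1 := by simp [hT, reducedLegendre_zero_right_one]

/-- The Gram integral `∫ (1 - t²)^m Q_l^m Q_{l'}^m dt` over `[-1, 1]` of the reduced associated
Legendre functions of order `m`. -/
def legendreGram (m l l' : ℕ) : ℝ :=
  ∫ t in (-1 : ℝ)..1, (1 - t ^ 2) ^ m * reducedLegendre l m t * reducedLegendre l' m t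

lemma legendreGram_comm (m l l' : ℕ) : legendreGram m l l' = legendreGram m l' l := by
  simp only [legendreGram, mul_right_comm]

lemma legendreGram_succ (m l l' : ℕ) :
    legendreGram (m + 1) l l' = ((l : ℝ) - m) * ((l : ℝ) + m + 1) * legendreGram m l l' := by
  set c := ((l : ℝ) - m) * ((l : ℝ) + m + 1)
  have hcont (m l : ℕ) : Continuous (reducedLegendre l m) := continuous_reducedLegendre l m
  have hu (t : ℝ) : HasDerivAt (fun t => (1 - t ^ 2) ^ (m + 1) * reducedLegendre l (m + 1) t)
      (-c * ((1 - t ^ 2) ^ m * reducedLegendre l m t)) t := by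
    refine ((hasDerivAt_one_sub_sq_pow m t).fun_mul
      (hasDerivAt_reducedLegendre l (m + 1) t)).congr_deriv ?_
    linear_combination (1 - t ^ 2) ^ m * reducedLegendre_ode l m t
  have hparts := intervalIntegral.integral_mul_deriv_eq_deriv_mul (a := -1) (b := 1)
    (fun t _ => hu t) (fun t _ => hasDerivAt_reducedLegendre l' m t)
    (Continuous.intervalIntegrable (by fun_prop (disch := exact hcont _ _)) _ _)
    ((hcont (m + 1) l').intervalIntegrable _ _)
  simp only [one_pow, sub_self, neg_one_sq, zero_pow m.succ_ne_zero, zero_mul, zero_sub] at hparts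
  rw [legendreGram, hparts, legendreGram, ← intervalIntegral.integral_const_mul,
    ← intervalIntegral.integral_neg]
  congr 1
  ext t
  ring

lemma legendreGram_zero_of_ne {l l' : ℕ} (h : l ≠ l') : legendreGram 0 l l' = 0 := by
  have hl := legendreGram_succ 0 l l'
  have hl' := legendreGram_succ 0 l' l
  rw [legendreGram_comm 1 l' l, legendreGram_comm 0 l' l] at hl'
  have hmul : (((l : ℝ) - l') * ((l : ℝ) + l' + 1)) * legendreGram 0 l l' = 0 := by
    push_cast at hl hl'
    linear_combination hl' - hl
  have hsub : (l : ℝ) - l' ≠ 0 := sub_ne_zero.2 (by exact_mod_cast h)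
  exact (mul_eq_zero.1 hmul).resolve_left (mul_ne_zero hsub (by positivity))

lemma legendreGram_of_ne (m : ℕ) {l l' : ℕ} (h : l ≠ l') : legendreGram m l l' = 0 := by
  induction m with
  | zero => exact legendreGram_zero_of_ne h
  | succ m ih => rw [legendreGram_succ, ih, mul_zero]

lemma factorialRatio_mul_legendreGram_self {l m : ℕ} (h : m ≤ l) :
    factorialRatio l m * legendreGram m l l = legendreGram 0 l l := by
  induction m with
  | zero => rw [factorialRatio_zero, one_mul]
  | succ m ih =>
    rw [legendreGram_succ, ← mul_assoc, factorialRatio_succ_right_mul h, ih (by lia)]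

-- Integrating the addition theorem over `[-1, 1]`: all `2l + 1` terms contribute equally.
lemma legendreGram_zero_self (l : ℕ) : legendreGram 0 l l = 2 / (2 * (l : ℝ) + 1) := by
  set F : ℕ → ℝ → ℝ := fun m t =>
    factorialRatio l m * ((1 - t ^ 2) ^ m * reducedLegendre l m t ^ 2) with hF
  have hcont (m : ℕ) : Continuous (reducedLegendre l m) := continuous_reducedLegendre l m
  have hint (m : ℕ) : IntervalIntegrable (F m) volume (-1) 1 :=
    Continuous.intervalIntegrable (by fun_prop (disch := exact hcont _)) _ _
  have hgram {m : ℕ} (hm : m ≤ l) : ∫ t in (-1 : ℝ)..1, F m t = legendreGram 0 l l := by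
    rw [hF, intervalIntegral.integral_const_mul, ← factorialRatio_mul_legendreGram_self hm,
      legendreGram]
    simp only [sq (reducedLegendre l m _), mul_assoc]
  have hsum : (2 : ℝ) = legendreGram 0 l l + 2 * (l * legendreGram 0 l l) :=
    calc (2 : ℝ) = ∫ _ in (-1 : ℝ)..1, (1 : ℝ) := by norm_num
      _ = ∫ t in (-1 : ℝ)..1, (F 0 t + 2 * ∑ m ∈ Finset.range l, F (m + 1) t) := by
        simp only [hF, factorialRatio_zero, pow_zero, one_mul, reducedLegendre_addition]
      _ = (∫ t in (-1 : ℝ)..1, F 0 t) +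
          2 * ∑ m ∈ Finset.range l, ∫ t in (-1 : ℝ)..1, F (m + 1) t := by
        rw [intervalIntegral.integral_add (hint 0)
            (Continuous.intervalIntegrable (by fun_prop (disch := exact hcont _)) _ _),
          intervalIntegral.integral_const_mul (2 : ℝ),
          intervalIntegral.integral_finsetSum fun m _ => hint (m + 1)]
      _ = legendreGram 0 l l + 2 * (l * legendreGram 0 l l) := by
        rw [hgram l.zero_le, Finset.sum_congr rfl fun m hm =>
          hgram (Finset.mem_range.1 hm : m + 1 ≤ l), Finset.sum_const, Finset.card_range,
          nsmul_eq_mul]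
  rw [eq_div_iff (by positivity)]
  linear_combination -hsum

lemma factorialRatio_mul_legendreGram_self_eq {l m : ℕ} (h : m ≤ l) :
    factorialRatio l m * legendreGram m l l = 2 / (2 * (l : ℝ) + 1) :=
  (factorialRatio_mul_legendreGram_self h).trans (legendreGram_zero_self l)

/-- The absolute value `√((2l + 1) (l - m)! / (4π (l + m)!))` of the normalizing constant of the
spherical harmonics. -/
def harmonicNorm (l m : ℕ) : ℝ :=
  √((2 * l + 1) * (l - m).factorial / (4 * π * (l + m).factorial))

lemma harmonicNorm_sq (l m : ℕ) :
    harmonicNorm l m ^ 2 = (2 * l + 1) / (4 * π) * factorialRatio l m := by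
  rw [harmonicNorm, factorialRatio, Real.sq_sqrt (by positivity), mul_div_mul_comm]

lemma harmonicNorm_pos (l m : ℕ) : 0 < harmonicNorm l m := by
  unfold harmonicNorm
  positivity

lemma sum_Icc_neg_natAbs (g : ℕ → ℝ) (l : ℕ) :
    ∑ m ∈ Finset.Icc (-(l : ℤ)) l, g m.natAbs =
      g 0 + 2 * ∑ m ∈ Finset.range l, g (m + 1) := by
  induction l with
  | zero => simp
  | succ l ih =>
    have hIcc : Finset.Icc (-((l + 1 : ℕ) : ℤ)) ((l + 1 : ℕ) : ℤ) =
        insert (-((l + 1 : ℕ) : ℤ)) (insert ((l + 1 : ℕ) : ℤ) (Finset.Icc (-(l : ℤ)) l)) := by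
      ext x
      simp only [Finset.mem_Icc, Finset.mem_insert]
      lia
    rw [hIcc, Finset.sum_insert (by simp only [Finset.mem_insert, Finset.mem_Icc]; lia),
      Finset.sum_insert (by simp), ih, Finset.sum_range_succ]
    simp only [Int.natAbs_neg, Int.natAbs_natCast]
    ring

lemma sum_harmonicNorm_sq_mul (l : ℕ) (t : ℝ) :
    ∑ m ∈ Finset.Icc (-(l : ℤ)) l,
      harmonicNorm l m.natAbs ^ 2 * ((1 - t ^ 2) ^ m.natAbs * reducedLegendre l m.natAbs t ^ 2) =
      (2 * l + 1) / (4 * π) := by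
  rw [sum_Icc_neg_natAbs fun M =>
    harmonicNorm l M ^ 2 * ((1 - t ^ 2) ^ M * reducedLegendre l M t ^ 2)]
  simp only [harmonicNorm_sq, factorialRatio_zero, mul_assoc, ← Finset.mul_sum]
  linear_combination ((2 * l + 1) / (4 * π)) * reducedLegendre_addition l t

end LegendreSums

section SolidHarmonics

open scoped ComplexConjugate

/-- Euclidean three-space. -/
abbrev E3 := EuclideanSpace ℝ (Fin 3)

lemma inner_E3 (x v : E3) : inner ℝ x v = x 0 * v 0 + x 1 * v 1 + x 2 * v 2 := by
  simp only [PiLp.inner_apply, RCLike.inner_apply, conj_trivial, Fin.sum_univ_three]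
  ring

lemma norm_sq_E3 (x : E3) : ‖x‖ ^ 2 = x 0 ^ 2 + x 1 ^ 2 + x 2 ^ 2 := by
  rw [← real_inner_self_eq_norm_sq, inner_E3]
  ring

lemma inv_norm_sq_mul {x : E3} (hx : x ≠ 0) :
    ‖x‖⁻¹ ^ 2 * (x 0 ^ 2 + x 1 ^ 2 + x 2 ^ 2) = 1 := by
  rw [← norm_sq_E3, ← mul_pow, inv_mul_cancel₀ (norm_ne_zero_iff.2 hx), one_pow]

lemma hasFDerivAt_inv_norm {F : Type*} [NormedAddCommGroup F] [InnerProductSpace ℝ F] {x : F}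
    (hx : x ≠ 0) : HasFDerivAt (fun y : F => ‖y‖⁻¹) (-‖x‖⁻¹ ^ 3 • innerSL ℝ x) x := by
  have hn : ‖x‖ ≠ 0 := norm_ne_zero_iff.2 hx
  have hsqrt := (hasStrictFDerivAt_norm_sq x).hasFDerivAt.sqrt (by positivity)
  have hinv := (hasDerivAt_inv (x := √(‖x‖ ^ 2)) (by positivity)).comp_hasFDerivAt x hsqrt
  refine (hinv.congr_of_eventuallyEq (.of_forall fun y => ?_)).congr_fderiv ?_
  · simp only [Function.comp_apply, Real.sqrt_sq (norm_nonneg y)]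
  · ext v
    simp only [Real.sqrt_sq (norm_nonneg x), smul_apply, smul_eq_mul, nsmul_eq_mul, Nat.cast_ofNat]
    field_simp

lemma hasFDerivAt_coord (i : Fin 3) (x : E3) :
    HasFDerivAt (fun y : E3 => y i) (EuclideanSpace.proj i : E3 →L[ℝ] ℝ) x :=
  (EuclideanSpace.proj i : E3 →L[ℝ] ℝ).hasFDerivAt

/-- The real factor of the exterior solid harmonics: `r ^ (-l - m - 1)` times the `m`-th derivative
of the Legendre polynomial at `z / r`. -/
def solidFactor (l m : ℕ) (x : E3) : ℝ :=
  ‖x‖⁻¹ ^ (l + m + 1) * reducedLegendre l m (x 2 * ‖x‖⁻¹)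

lemma hasFDerivAt_solidFactor (l m : ℕ) {x : E3} (hx : x ≠ 0) :
    HasFDerivAt (solidFactor l m)
      (-solidFactor (l + 1) (m + 1) x •
          (x 0 • EuclideanSpace.proj 0 + x 1 • EuclideanSpace.proj 1 : E3 →L[ℝ] ℝ) -
        (((l : ℝ) + 1 - m) * solidFactor (l + 1) m x) • EuclideanSpace.proj 2) x := by
  have hρ := hasFDerivAt_inv_norm hx
  have hprod := (hρ.pow (l + m + 1)).fun_mul
    ((hasDerivAt_reducedLegendre l m (x 2 * ‖x‖⁻¹)).comp_hasFDerivAt x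
      ((hasFDerivAt_coord 2 x).fun_mul hρ))
  refine hprod.congr_fderiv ?_
  ext v
  simp only [Function.comp_apply, add_tsub_cancel_right, nsmul_eq_mul, add_apply, sub_apply,
    smul_apply, coe_innerSL_apply, smul_eq_mul, PiLp.proj_apply, inner_E3, solidFactor]
  push_cast
  linear_combination
    ‖x‖⁻¹ ^ (l + m + 3) * (x 0 * v 0 + x 1 * v 1 + x 2 * v 2) *
        reducedLegendre_succ_succ l m (x 2 * ‖x‖⁻¹) -
      ‖x‖⁻¹ ^ (l + m + 2) * v 2 * mul_reducedLegendre_succ_succ l m (x 2 * ‖x‖⁻¹)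

lemma solidFactor_succ_succ_add_two (l m : ℕ) {x : E3} (hx : x ≠ 0) :
    (x 0 ^ 2 + x 1 ^ 2) * solidFactor (l + 1) (m + 2) x =
      2 * ((m : ℝ) + 1) * solidFactor l (m + 1) x -
        ((l : ℝ) - m) * ((l : ℝ) - m + 1) * solidFactor (l + 1) m x := by
  have hode := reducedLegendre_ode (l + 1) m (x 2 * ‖x‖⁻¹)
  have hmul := mul_reducedLegendre_succ_succ l m (x 2 * ‖x‖⁻¹)
  push_cast at hode
  simp only [solidFactor]
  linear_combination ‖x‖⁻¹ ^ (l + m + 2) * hode +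
    2 * ((m : ℝ) + 1) * ‖x‖⁻¹ ^ (l + m + 2) * hmul +
    ‖x‖⁻¹ ^ (l + m + 2) * reducedLegendre (l + 1) (m + 2) (x 2 * ‖x‖⁻¹) * inv_norm_sq_mul hx

/-- The unnormalized exterior solid harmonic of degree `l` and order `m ≥ 0`; the power of
`x + i y` carries the longitude. -/
def solidHarmonic (l m : ℕ) (x : E3) : ℂ :=
  ((x 0 : ℂ) + Complex.I * x 1) ^ m * solidFactor l m x

/-- The real-linear forms `(dx - i dy) / 2`, `(dx + i dy) / 2` and `dz`, dual to the
ladder operators `∂x + i ∂y`, `∂x - i ∂y` and `∂z` raising, lowering and keeping the order of a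
harmonic. -/
def ladderForm : SignType → E3 →L[ℝ] ℂ
  | .pos => (EuclideanSpace.proj 0 : E3 →L[ℝ] ℝ).smulRight (1 / 2 : ℂ) -
      (EuclideanSpace.proj 1 : E3 →L[ℝ] ℝ).smulRight (Complex.I / 2)
  | .neg => (EuclideanSpace.proj 0 : E3 →L[ℝ] ℝ).smulRight (1 / 2 : ℂ) +
      (EuclideanSpace.proj 1 : E3 →L[ℝ] ℝ).smulRight (Complex.I / 2)
  | .zero => (EuclideanSpace.proj 2 : E3 →L[ℝ] ℝ).smulRight (1 : ℂ)

lemma ladderForm_one_apply (v : E3) : ladderForm 1 v = (v 0 - Complex.I * v 1) / 2 := by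
  change ladderForm .pos v = _
  simp only [ladderForm, one_div, sub_apply, ContinuousLinearMap.smulRight_apply,
    PiLp.proj_apply, Complex.real_smul]
  ring

lemma ladderForm_neg_one_apply (v : E3) : ladderForm (-1) v = (v 0 + Complex.I * v 1) / 2 := by
  change ladderForm .neg v = _
  simp only [ladderForm, one_div, add_apply, ContinuousLinearMap.smulRight_apply,
    PiLp.proj_apply, Complex.real_smul]
  ring

lemma ladderForm_zero_apply (v : E3) : ladderForm 0 v = v 2 := by
  change ladderForm .zero v = _
  simp [ladderForm]

lemma sum_signType {M : Type*} [AddCommMonoid M] (f : SignType → M) :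
    ∑ d, f d = f 1 + f (-1) + f 0 := by
  rw [SignType.univ_eq, Finset.sum_insert (by decide), Finset.sum_insert (by decide),
    Finset.sum_singleton, add_comm, add_comm (f (-1))]

lemma hasFDerivAt_solidHarmonic_zero (l : ℕ) {x : E3} (hx : x ≠ 0) :
    HasFDerivAt (solidHarmonic l 0)
      (-solidHarmonic (l + 1) 1 x • ladderForm 1 - conj (solidHarmonic (l + 1) 1 x) •
        ladderForm (-1) - (((l : ℂ) + 1) * solidHarmonic (l + 1) 0 x) • ladderForm 0) x := by
  have h := Complex.ofRealCLM.hasFDerivAt.comp x (hasFDerivAt_solidFactor l 0 hx)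
  refine (h.congr_of_eventuallyEq (.of_forall fun y => ?_)).congr_fderiv ?_
  · simp [solidHarmonic]
  · ext v
    simp only [zero_add, Nat.cast_zero, sub_zero, ContinuousLinearMap.comp_apply, sub_apply,
      add_apply, smul_apply, PiLp.proj_apply, Complex.ofRealCLM_apply, smul_eq_mul, solidHarmonic,
      pow_zero, pow_one, map_mul, map_add, Complex.conj_ofReal, Complex.conj_I,
      ladderForm_one_apply, ladderForm_neg_one_apply, ladderForm_zero_apply]
    push_cast
    linear_combination (-(x 1 * v 1 * solidFactor (l + 1) 1 x) : ℂ) * Complex.I_sq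

lemma hasFDerivAt_solidHarmonic_succ (l m : ℕ) {x : E3} (hx : x ≠ 0) :
    HasFDerivAt (solidHarmonic l (m + 1))
      (-solidHarmonic (l + 1) (m + 2) x • ladderForm 1 +
        (((l : ℂ) - m) * ((l : ℂ) - m + 1) * solidHarmonic (l + 1) m x) • ladderForm (-1) -
        (((l : ℂ) - m) * solidHarmonic (l + 1) (m + 1) x) • ladderForm 0) x := by
  have hcoord (i : Fin 3) := Complex.ofRealCLM.hasFDerivAt.comp x (hasFDerivAt_coord i x)
  have hpow := ((hcoord 0).fun_add ((hcoord 1).const_mul Complex.I)).pow (m + 1)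
  have h := hpow.fun_mul
    (Complex.ofRealCLM.hasFDerivAt.comp x (hasFDerivAt_solidFactor l (m + 1) hx))
  refine h.congr_fderiv ?_
  ext v
  simp only [Function.comp_apply, Complex.ofRealCLM_apply, add_tsub_cancel_right, nsmul_eq_mul,
    ContinuousLinearMap.comp_apply, sub_apply, add_apply, smul_apply, PiLp.proj_apply, smul_eq_mul,
    solidHarmonic, ladderForm_one_apply, ladderForm_neg_one_apply, ladderForm_zero_apply]
  push_cast
  have hfac : ((x 0 : ℂ) ^ 2 + (x 1 : ℂ) ^ 2) * solidFactor (l + 1) (m + 2) x =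
      2 * ((m : ℂ) + 1) * solidFactor l (m + 1) x -
        ((l : ℂ) - m) * ((l : ℂ) - m + 1) * solidFactor (l + 1) m x := by
    simpa only [push_cast] using congrArg Complex.ofReal (solidFactor_succ_succ_add_two l m hx)
  linear_combination
    (-((x 0 : ℂ) + Complex.I * x 1) ^ m * (v 0 + Complex.I * v 1) / 2) * hfac +
      ((x 0 : ℂ) + Complex.I * x 1) ^ m * solidFactor (l + 1) (m + 2) x *
        (-(x 0 * x 1 * v 1) - Complex.I * x 1 ^ 2 * v 1 / 2 + x 1 ^ 2 * v 0 / 2) * Complex.I_sq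

/-- The coefficients with which the ladder operators act on the normalized harmonics of
degree `l` and order `m`. -/
def ladderCoeff : SignType → ℕ → ℤ → ℝ
  | .pos, l, m => -√((2 * l + 1) / (2 * l + 3) * (((l : ℝ) + m + 1) * ((l : ℝ) + m + 2)))
  | .neg, l, m => √((2 * l + 1) / (2 * l + 3) * (((l : ℝ) - m + 1) * ((l : ℝ) - m + 2)))
  | .zero, l, m => -√((2 * l + 1) / (2 * l + 3) * (((l : ℝ) + 1 - m) * ((l : ℝ) + 1 + m)))

lemma ladderCoeff_one (l : ℕ) (m : ℤ) : ladderCoeff 1 l m =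
    -√((2 * l + 1) / (2 * l + 3) * (((l : ℝ) + m + 1) * ((l : ℝ) + m + 2))) := rfl

lemma ladderCoeff_neg_one (l : ℕ) (m : ℤ) : ladderCoeff (-1) l m =
    √((2 * l + 1) / (2 * l + 3) * (((l : ℝ) - m + 1) * ((l : ℝ) - m + 2))) := rfl

lemma ladderCoeff_zero (l : ℕ) (m : ℤ) : ladderCoeff 0 l m =
    -√((2 * l + 1) / (2 * l + 3) * (((l : ℝ) + 1 - m) * ((l : ℝ) + 1 + m))) := rfl

lemma factorialRatio_eq_mul_succ_succ (l m : ℕ) :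
    factorialRatio l m =
      ((l : ℝ) + m + 1) * ((l : ℝ) + m + 2) * factorialRatio (l + 1) (m + 1) := by
  unfold factorialRatio
  rw [Nat.add_sub_add_right, show l + 1 + (m + 1) = l + m + 1 + 1 by lia, Nat.factorial_succ,
    Nat.factorial_succ]
  push_cast
  field_simp
  ring

lemma factorialRatio_mul_eq_succ_left {l m : ℕ} (h : m ≤ l) :
    factorialRatio l m * ((l : ℝ) - m + 1) = ((l : ℝ) + 1 + m) * factorialRatio (l + 1) m := by
  have hsucc := factorialRatio_succ_right_mul (Nat.lt_add_one_of_le h)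
  push_cast at hsucc
  linear_combination ((l : ℝ) - m + 1) * factorialRatio_eq_mul_succ_succ l m +
    ((l : ℝ) + 1 + m) * hsucc

lemma factorialRatio_succ_right_mul_eq_succ_left {l m : ℕ} (h : m < l) :
    factorialRatio l (m + 1) * (((l : ℝ) - m) * ((l : ℝ) - m + 1)) =
      factorialRatio (l + 1) m := by
  have hpos : (l : ℝ) + 1 + m ≠ 0 := by positivity
  refine mul_left_cancel₀ hpos ?_
  linear_combination ((l : ℝ) - m + 1) * factorialRatio_succ_right_mul h +
    factorialRatio_mul_eq_succ_left h.le

lemma harmonicNorm_mul_eq_sqrt_mul {l m l' m' : ℕ} {a c : ℝ} (ha : 0 ≤ a) (hc : 0 ≤ c)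
    (h : harmonicNorm l m ^ 2 * a ^ 2 = c * harmonicNorm l' m' ^ 2) :
    harmonicNorm l m * a = √c * harmonicNorm l' m' := by
  rw [← Real.sqrt_sq (mul_nonneg (harmonicNorm_pos l m).le ha), mul_pow, h, Real.sqrt_mul hc,
    Real.sqrt_sq (harmonicNorm_pos l' m').le]

lemma harmonicNorm_eq_ladderCoeff_one_mul (l m : ℕ) :
    harmonicNorm l m = -ladderCoeff 1 l m * harmonicNorm (l + 1) (m + 1) := by
  rw [ladderCoeff_one, neg_neg, ← mul_one (harmonicNorm l m)]
  refine harmonicNorm_mul_eq_sqrt_mul zero_le_one (by positivity) ?_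
  rw [harmonicNorm_sq, harmonicNorm_sq, factorialRatio_eq_mul_succ_succ l m]
  push_cast
  field_simp
  ring

lemma harmonicNorm_succ_mul_eq_ladderCoeff_neg_one_mul {l m : ℕ} (h : m < l) :
    harmonicNorm l (m + 1) * (((l : ℝ) - m) * ((l : ℝ) - m + 1)) =
      ladderCoeff (-1) l (m + 1) * harmonicNorm (l + 1) m := by
  have hlm : (0 : ℝ) ≤ (l : ℝ) - m := sub_nonneg.2 (Nat.cast_le.2 h.le)
  have hcoeff : ladderCoeff (-1) l (m + 1) =
      √((2 * l + 1) / (2 * l + 3) * (((l : ℝ) - m) * ((l : ℝ) - m + 1))) := by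
    rw [ladderCoeff_neg_one]
    push_cast
    ring_nf
  rw [hcoeff]
  refine harmonicNorm_mul_eq_sqrt_mul (by positivity) (by positivity) ?_
  rw [harmonicNorm_sq, harmonicNorm_sq, ← factorialRatio_succ_right_mul_eq_succ_left h]
  push_cast
  field_simp
  ring

lemma harmonicNorm_mul_eq_ladderCoeff_zero_mul {l m : ℕ} (h : m ≤ l) :
    harmonicNorm l m * ((l : ℝ) + 1 - m) = -ladderCoeff 0 l m * harmonicNorm (l + 1) m := by
  have hlm : (0 : ℝ) ≤ (l : ℝ) + 1 - m := by
    linarith [(Nat.cast_le (α := ℝ)).2 h]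
  rw [ladderCoeff_zero, neg_neg, Int.cast_natCast]
  refine harmonicNorm_mul_eq_sqrt_mul hlm (by positivity) ?_
  have hratio := factorialRatio_mul_eq_succ_left h
  rw [harmonicNorm_sq, harmonicNorm_sq]
  push_cast
  field_simp
  linear_combination (2 * (l : ℝ) + 3) * ((l : ℝ) + 1 - m) * hratio

lemma ladderCoeff_neg_neg (d : SignType) (l : ℕ) (m : ℤ) :
    ladderCoeff (-d) l (-m) = (-1) ^ (d : ℤ).natAbs * ladderCoeff d l m := by
  rcases d with _ | _ | _
  · change ladderCoeff 0 l (-m) = (-1) ^ 0 * ladderCoeff 0 l m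
    simp only [ladderCoeff_zero, Int.cast_neg, pow_zero, one_mul]
    ring_nf
  · change ladderCoeff 1 l (-m) = (-1) ^ 1 * ladderCoeff (-1) l m
    simp only [ladderCoeff_one, ladderCoeff_neg_one, Int.cast_neg, pow_one, neg_one_mul,
      ← sub_eq_add_neg]
  · change ladderCoeff (-1) l (-m) = (-1) ^ 1 * ladderCoeff 1 l m
    simp only [ladderCoeff_one, ladderCoeff_neg_one, Int.cast_neg, pow_one, neg_one_mul, neg_neg,
      sub_neg_eq_add]

/-- The function `r ^ (-l - 1) Y_l^m`, harmonic outside the origin; see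
`exteriorHarmonic_eq_Ylm`. -/
def exteriorHarmonic (l : ℕ) (m : ℤ) (x : E3) : ℂ :=
  if 0 ≤ m then harmonicNorm l m.natAbs * solidHarmonic l m.natAbs x
  else (-1) ^ m.natAbs * (harmonicNorm l m.natAbs * conj (solidHarmonic l m.natAbs x))

lemma exteriorHarmonic_natCast (l m : ℕ) (x : E3) :
    exteriorHarmonic l m x = harmonicNorm l m * solidHarmonic l m x := by
  simp [exteriorHarmonic]

lemma exteriorHarmonic_neg_natCast (l m : ℕ) (x : E3) :
    exteriorHarmonic l (-m) x = (-1) ^ m * conj (exteriorHarmonic l m x) := by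
  rw [exteriorHarmonic_natCast, map_mul, Complex.conj_ofReal]
  rcases m with _ | m
  · simp [exteriorHarmonic, solidHarmonic]
  · rw [exteriorHarmonic, if_neg (by lia), Int.natAbs_neg, Int.natAbs_natCast]

lemma exteriorHarmonic_neg (l : ℕ) (m : ℤ) (x : E3) :
    exteriorHarmonic l (-m) x = (-1) ^ m.natAbs * conj (exteriorHarmonic l m x) := by
  obtain ⟨n, rfl | rfl⟩ := m.eq_nat_or_neg
  · exact exteriorHarmonic_neg_natCast l n x
  · rw [exteriorHarmonic_neg_natCast, neg_neg, Int.natAbs_neg, Int.natAbs_natCast, map_mul,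
      Complex.conj_conj, map_pow, map_neg, map_one, ← mul_assoc, ← mul_pow]
    norm_num

/-- The differential of `exteriorHarmonic l m` for `|m| ≤ l`. -/
def exteriorHarmonicDeriv (l : ℕ) (m : ℤ) (x : E3) : E3 →L[ℝ] ℂ :=
  ∑ d : SignType, (ladderCoeff d l m * exteriorHarmonic (l + 1) (m + d) x) • ladderForm d

lemma hasFDerivAt_exteriorHarmonic_zero (l : ℕ) {x : E3} (hx : x ≠ 0) :
    HasFDerivAt (exteriorHarmonic l 0) (exteriorHarmonicDeriv l 0 x) x := by
  have hfun : exteriorHarmonic l 0 = fun y => (harmonicNorm l 0 : ℂ) * solidHarmonic l 0 y :=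
    funext (exteriorHarmonic_natCast l 0)
  have hraise : (harmonicNorm l 0 : ℂ) = -ladderCoeff 1 l 0 * harmonicNorm (l + 1) 1 := by
    exact_mod_cast harmonicNorm_eq_ladderCoeff_one_mul l 0
  have hkeep : (harmonicNorm l 0 : ℂ) * ((l : ℂ) + 1) =
      -ladderCoeff 0 l 0 * harmonicNorm (l + 1) 0 := by
    simpa using congrArg ((↑) : ℝ → ℂ) (harmonicNorm_mul_eq_ladderCoeff_zero_mul l.zero_le)
  have hlower : (harmonicNorm l 0 : ℂ) = ladderCoeff (-1) l 0 * harmonicNorm (l + 1) 1 := by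
    have hneg : ladderCoeff (-1) l 0 = -ladderCoeff 1 l 0 := by
      simpa using ladderCoeff_neg_neg 1 l 0
    rw [hneg]
    exact_mod_cast hraise
  have hup : exteriorHarmonic (l + 1) (1 : SignType) x =
      harmonicNorm (l + 1) 1 * solidHarmonic (l + 1) 1 x := exteriorHarmonic_natCast (l + 1) 1 x
  have hdown : exteriorHarmonic (l + 1) ((-1 : SignType) : ℤ) x =
      -(harmonicNorm (l + 1) 1 * conj (solidHarmonic (l + 1) 1 x)) := by
    rw [← Complex.conj_ofReal, ← map_mul, ← hup]
    simpa using exteriorHarmonic_neg_natCast (l + 1) 1 x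
  have hzero : exteriorHarmonic (l + 1) (0 : SignType) x =
      harmonicNorm (l + 1) 0 * solidHarmonic (l + 1) 0 x := exteriorHarmonic_natCast (l + 1) 0 x
  rw [hfun, exteriorHarmonicDeriv, sum_signType, zero_add, zero_add, zero_add, hup, hdown, hzero]
  refine ((hasFDerivAt_solidHarmonic_zero l hx).const_mul _).congr_fderiv ?_
  ext v
  simp only [smul_apply, sub_apply, add_apply, smul_eq_mul]
  linear_combination (-solidHarmonic (l + 1) 1 x * ladderForm 1 v) * hraise -
    conj (solidHarmonic (l + 1) 1 x) * ladderForm (-1) v * hlower -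
    solidHarmonic (l + 1) 0 x * ladderForm 0 v * hkeep

lemma hasFDerivAt_exteriorHarmonic_succ {l m : ℕ} (h : m < l) {x : E3} (hx : x ≠ 0) :
    HasFDerivAt (exteriorHarmonic l (m + 1 : ℕ)) (exteriorHarmonicDeriv l (m + 1 : ℕ) x) x := by
  have hfun : exteriorHarmonic l (m + 1 : ℕ) =
      fun y => (harmonicNorm l (m + 1) : ℂ) * solidHarmonic l (m + 1) y :=
    funext (exteriorHarmonic_natCast l (m + 1))
  have hraise : (harmonicNorm l (m + 1) : ℂ) =
      -ladderCoeff 1 l (m + 1 : ℕ) * harmonicNorm (l + 1) (m + 2) := by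
    exact_mod_cast harmonicNorm_eq_ladderCoeff_one_mul l (m + 1)
  have hkeep : (harmonicNorm l (m + 1) : ℂ) * ((l : ℂ) + 1 - (m + 1 : ℕ)) =
      -ladderCoeff 0 l (m + 1 : ℕ) * harmonicNorm (l + 1) (m + 1) := by
    exact_mod_cast harmonicNorm_mul_eq_ladderCoeff_zero_mul h
  have hlower : (harmonicNorm l (m + 1) : ℂ) * (((l : ℂ) - m) * ((l : ℂ) - m + 1)) =
      ladderCoeff (-1) l (m + 1 : ℕ) * harmonicNorm (l + 1) m := by
    exact_mod_cast harmonicNorm_succ_mul_eq_ladderCoeff_neg_one_mul h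
  have hup : ((m + 1 : ℕ) : ℤ) + (1 : SignType) = (m + 2 : ℕ) := rfl
  have hdown : ((m + 1 : ℕ) : ℤ) + (-1 : SignType) = m := by simp
  have hzero : ((m + 1 : ℕ) : ℤ) + (0 : SignType) = (m + 1 : ℕ) := rfl
  rw [hfun, exteriorHarmonicDeriv, sum_signType, hup, hdown, hzero, exteriorHarmonic_natCast,
    exteriorHarmonic_natCast, exteriorHarmonic_natCast]
  refine ((hasFDerivAt_solidHarmonic_succ l m hx).const_mul _).congr_fderiv ?_
  ext v
  simp only [smul_apply, sub_apply, add_apply, smul_eq_mul]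
  push_cast at hraise hkeep hlower ⊢
  linear_combination (-solidHarmonic (l + 1) (m + 2) x * ladderForm 1 v) * hraise +
    solidHarmonic (l + 1) m x * ladderForm (-1) v * hlower -
    solidHarmonic (l + 1) (m + 1) x * ladderForm 0 v * hkeep

lemma hasFDerivAt_exteriorHarmonic_natCast {l m : ℕ} (h : m ≤ l) {x : E3} (hx : x ≠ 0) :
    HasFDerivAt (exteriorHarmonic l m) (exteriorHarmonicDeriv l m x) x := by
  rcases m with _ | m
  · exact hasFDerivAt_exteriorHarmonic_zero l hx
  · exact hasFDerivAt_exteriorHarmonic_succ h hx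

lemma conj_ladderForm (d : SignType) (v : E3) : conj (ladderForm d v) = ladderForm (-d) v := by
  rcases d with _ | _ | _
  · change conj (ladderForm 0 v) = ladderForm 0 v
    rw [ladderForm_zero_apply, Complex.conj_ofReal]
  · change conj (ladderForm (-1) v) = ladderForm 1 v
    rw [ladderForm_one_apply, ladderForm_neg_one_apply]
    simp [sub_eq_add_neg, map_ofNat]
  · change conj (ladderForm 1 v) = ladderForm (-1) v
    rw [ladderForm_one_apply, ladderForm_neg_one_apply]
    simp [map_ofNat]

lemma exteriorHarmonicDeriv_neg_apply (l : ℕ) (m : ℤ) (x v : E3) :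
    exteriorHarmonicDeriv l (-m) x v =
      (-1) ^ m.natAbs * conj (exteriorHarmonicDeriv l m x v) := by
  simp only [exteriorHarmonicDeriv, sum_apply, smul_apply, smul_eq_mul, map_sum, map_mul,
    Complex.conj_ofReal, conj_ladderForm, Finset.mul_sum]
  refine Fintype.sum_equiv (Equiv.neg SignType) _ _ fun d => ?_
  have hcoeff : ladderCoeff d l (-m) = (-1) ^ (d : ℤ).natAbs * ladderCoeff (-d) l m := by
    simpa using ladderCoeff_neg_neg (-d) l m
  have hE : exteriorHarmonic (l + 1) (-m + d) x =
      (-1) ^ (m + -d : ℤ).natAbs * conj (exteriorHarmonic (l + 1) (m + -d) x) := by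
    rw [← exteriorHarmonic_neg, neg_add, neg_neg]
  have hsign : (-1 : ℂ) ^ (d : ℤ).natAbs * (-1) ^ (m + -d : ℤ).natAbs = (-1) ^ m.natAbs := by
    rw [← pow_add]
    exact neg_one_pow_congr (by rw [Nat.even_add, Int.natAbs_even, Int.natAbs_even,
      Int.natAbs_even, Int.even_add, even_neg]; tauto)
  rw [Equiv.neg_apply, neg_neg, hcoeff, hE, SignType.coe_neg]
  push_cast
  linear_combination ladderCoeff (-d) l m * conj (exteriorHarmonic (l + 1) (m + -d) x) *
    ladderForm d v * hsign

theorem hasFDerivAt_exteriorHarmonic {l : ℕ} {m : ℤ} (hm : m.natAbs ≤ l) {x : E3} (hx : x ≠ 0) :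
    HasFDerivAt (exteriorHarmonic l m) (exteriorHarmonicDeriv l m x) x := by
  obtain ⟨n, rfl | rfl⟩ := m.eq_nat_or_neg
  · exact hasFDerivAt_exteriorHarmonic_natCast hm hx
  · rw [Int.natAbs_neg, Int.natAbs_natCast] at hm
    have h := (Complex.conjCLE.toContinuousLinearMap.hasFDerivAt.comp x
      (hasFDerivAt_exteriorHarmonic_natCast hm hx)).const_mul ((-1) ^ n)
    refine (h.congr_of_eventuallyEq (.of_forall fun y => ?_)).congr_fderiv ?_
    · exact exteriorHarmonic_neg_natCast l n y
    · ext v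
      exact (exteriorHarmonicDeriv_neg_apply l n x v).symm

end SolidHarmonics

section PolarCoordinates

open scoped ComplexConjugate

lemma alphaY_natCast (l m : ℕ) : alphaY l m = (-1) ^ m * harmonicNorm l m := by
  have hexp : ((m : ℤ) + |(m : ℤ)|) / 2 = m := by rw [Nat.abs_cast]; lia
  rw [alphaY, hexp, zpow_natCast, Int.natAbs_natCast, harmonicNorm]

lemma alphaY_neg_natCast (l m : ℕ) : alphaY l (-m) = harmonicNorm l m := by
  have hexp : (-(m : ℤ) + |-(m : ℤ)|) / 2 = 0 := by rw [abs_neg, Nat.abs_cast]; lia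
  rw [alphaY, hexp, zpow_zero, one_mul, Int.natAbs_neg, Int.natAbs_natCast, harmonicNorm]

lemma alphaY_neg (l : ℕ) (m : ℤ) : alphaY l (-m) = (-1) ^ m.natAbs * alphaY l m := by
  obtain ⟨n, rfl | rfl⟩ := m.eq_nat_or_neg
  · rw [alphaY_neg_natCast, alphaY_natCast, Int.natAbs_natCast, ← mul_assoc, ← mul_pow]
    norm_num
  · rw [neg_neg, alphaY_neg_natCast, alphaY_natCast, Int.natAbs_neg, Int.natAbs_natCast]

lemma abs_alphaY (l : ℕ) (m : ℤ) : |alphaY l m| = harmonicNorm l m.natAbs := by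
  obtain ⟨n, rfl | rfl⟩ := m.eq_nat_or_neg
  · rw [alphaY_natCast, abs_mul, abs_pow, abs_neg, abs_one, one_pow, one_mul, Int.natAbs_natCast,
      abs_of_pos (harmonicNorm_pos l n)]
  · rw [alphaY_neg_natCast, Int.natAbs_neg, Int.natAbs_natCast, abs_of_pos (harmonicNorm_pos l n)]

lemma assocLegendre_eq (l m : ℕ) (t : ℝ) :
    assocLegendre l m t = (-1) ^ m * (1 - t ^ 2) ^ ((m : ℝ) / 2) * reducedLegendre l m t := rfl

lemma assocLegendre_sin (l m : ℕ) {θ : ℝ} (hθ : 0 ≤ cos θ) :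
    assocLegendre l m (sin θ) = (-1) ^ m * cos θ ^ m * reducedLegendre l m (sin θ) := by
  rw [assocLegendre_eq, ← Real.cos_sq', ← Real.rpow_natCast (cos θ) 2, ← Real.rpow_mul hθ,
    Nat.cast_ofNat, mul_div_cancel₀ _ (two_ne_zero' ℝ), Real.rpow_natCast]

/-- The factor of `Ylm l m` depending on the latitude. -/
def latitudeFactor (l : ℕ) (m : ℤ) (θ : ℝ) : ℝ := alphaY l m * assocLegendre l m.natAbs (sin θ)

lemma Ylm_eq (l : ℕ) (m : ℤ) (θ φ : ℝ) :
    Ylm l m θ φ = (latitudeFactor l m θ : ℂ) * Complex.exp (Complex.I * m * φ) := rfl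

lemma exists_forall_latitudeFactor_eq (m : ℤ) (θ : ℝ) :
    ∃ c : ℝ, c ^ 2 = (1 - sin θ ^ 2) ^ m.natAbs ∧ ∀ l, latitudeFactor l m θ =
      c * (harmonicNorm l m.natAbs * reducedLegendre l m.natAbs (sin θ)) := by
  have hsq (n : ℕ) : ((1 - sin θ ^ 2) ^ ((n : ℝ) / 2)) ^ 2 = (1 - sin θ ^ 2) ^ n := by
    rw [← Real.rpow_natCast, ← Real.rpow_mul (sub_nonneg.2 (sin_sq_le_one θ)), Nat.cast_ofNat,
      div_mul_cancel₀ _ (two_ne_zero' ℝ), Real.rpow_natCast]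
  have hsign (n : ℕ) : (-1 : ℝ) ^ n * (-1) ^ n = 1 := by rw [← mul_pow]; norm_num
  obtain ⟨n, rfl | rfl⟩ := m.eq_nat_or_neg
  · refine ⟨(1 - sin θ ^ 2) ^ ((n : ℝ) / 2), hsq n, fun l => ?_⟩
    rw [latitudeFactor, alphaY_natCast, assocLegendre_eq, Int.natAbs_natCast]
    linear_combination ((1 - sin θ ^ 2) ^ ((n : ℝ) / 2) * harmonicNorm l n *
      reducedLegendre l n (sin θ)) * hsign n
  · refine ⟨(-1) ^ n * (1 - sin θ ^ 2) ^ ((n : ℝ) / 2), ?_, fun l => ?_⟩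
    · rw [mul_pow, hsq, sq, hsign, one_mul, Int.natAbs_neg, Int.natAbs_natCast]
    · rw [latitudeFactor, alphaY_neg_natCast, assocLegendre_eq, Int.natAbs_neg,
        Int.natAbs_natCast]
      ring

lemma Ylm_neg (l : ℕ) (m : ℤ) (θ φ : ℝ) :
    Ylm l (-m) θ φ = (-1) ^ m.natAbs * conj (Ylm l m θ φ) := by
  have hexp : conj (Complex.exp (Complex.I * m * φ)) =
      Complex.exp (Complex.I * (-m : ℤ) * φ) := by
    rw [← Complex.exp_conj]
    simp
  rw [Ylm, Ylm, alphaY_neg, Int.natAbs_neg, map_mul, Complex.conj_ofReal, hexp]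
  push_cast
  ring

lemma sphCoord_zero (θ φ : ℝ) : sphCoord θ φ 0 = cos θ * cos φ := rfl

lemma sphCoord_one (θ φ : ℝ) : sphCoord θ φ 1 = cos θ * sin φ := rfl

lemma sphCoord_two (θ φ : ℝ) : sphCoord θ φ 2 = sin θ := rfl

lemma norm_sphCoord (θ φ : ℝ) : ‖sphCoord θ φ‖ = 1 := by
  refine (pow_eq_one_iff_of_nonneg (norm_nonneg _) two_ne_zero).1 ?_
  rw [norm_sq_E3, sphCoord_zero, sphCoord_one, sphCoord_two]
  linear_combination sin_sq_add_cos_sq θ + cos θ ^ 2 * sin_sq_add_cos_sq φ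

lemma solidHarmonic_smul_sphCoord (l m : ℕ) {r : ℝ} (hr : 0 < r) (θ φ : ℝ) :
    solidHarmonic l m (r • sphCoord θ φ) = (r⁻¹ : ℂ) ^ (l + 1) *
      ((cos θ ^ m * reducedLegendre l m (sin θ) : ℝ) * Complex.exp (Complex.I * m * φ)) := by
  have hcancel : (r : ℂ) ^ m * (r⁻¹ : ℂ) ^ m = 1 := by
    rw [← mul_pow, mul_inv_cancel₀ (Complex.ofReal_ne_zero.2 hr.ne'), one_pow]
  have hexp :
      Complex.exp (Complex.I * m * φ) = (Complex.cos φ + Complex.I * Complex.sin φ) ^ m := by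
    rw [mul_assoc, mul_left_comm, Complex.exp_nat_mul, mul_comm Complex.I, Complex.exp_mul_I,
      mul_comm Complex.I]
  have hz : r * sin θ * r⁻¹ = sin θ := by field_simp
  have hxy : (r : ℂ) * (Complex.cos θ * Complex.cos φ) +
      Complex.I * (r * (Complex.cos θ * Complex.sin φ)) =
        r * Complex.cos θ * (Complex.cos φ + Complex.I * Complex.sin φ) := by ring
  rw [solidHarmonic, solidFactor, hexp, norm_smul, norm_sphCoord, mul_one,
    Real.norm_of_nonneg hr.le]
  simp only [PiLp.smul_apply, smul_eq_mul, sphCoord_zero, sphCoord_one, sphCoord_two, hz]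
  push_cast
  rw [hxy, mul_pow, mul_pow]
  linear_combination (r⁻¹ : ℂ) ^ (l + 1) * Complex.cos θ ^ m *
    (Complex.cos φ + Complex.I * Complex.sin φ) ^ m * reducedLegendre l m (sin θ) * hcancel

theorem exteriorHarmonic_smul_sphCoord (l : ℕ) (m : ℤ) {r θ : ℝ} (hr : 0 < r) (hθ : 0 ≤ cos θ)
    (φ : ℝ) : exteriorHarmonic l m (r • sphCoord θ φ) = (r⁻¹ : ℂ) ^ (l + 1) * Ylm l m θ φ := by
  have hnat (n : ℕ) :
      exteriorHarmonic l n (r • sphCoord θ φ) = (r⁻¹ : ℂ) ^ (l + 1) * Ylm l n θ φ := by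
    have hsign : (-1 : ℂ) ^ n * (-1) ^ n = 1 := by rw [← mul_pow]; norm_num
    rw [exteriorHarmonic_natCast, solidHarmonic_smul_sphCoord l n hr, Ylm, alphaY_natCast,
      Int.natAbs_natCast, assocLegendre_sin l n hθ]
    push_cast
    linear_combination (-(r⁻¹ : ℂ) ^ (l + 1) * harmonicNorm l n * Complex.cos θ ^ n *
      reducedLegendre l n (sin θ) * Complex.exp (Complex.I * n * φ)) * hsign
  obtain ⟨n, rfl | rfl⟩ := m.eq_nat_or_neg
  · exact hnat n
  · rw [exteriorHarmonic_neg_natCast, hnat n, Ylm_neg, Int.natAbs_natCast, map_mul, map_pow,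
      map_inv₀, Complex.conj_ofReal]
    ring

lemma exteriorHarmonic_sphCoord (l : ℕ) (m : ℤ) {θ : ℝ} (hθ : 0 ≤ cos θ) (φ : ℝ) :
    exteriorHarmonic l m (sphCoord θ φ) = Ylm l m θ φ := by
  simpa using exteriorHarmonic_smul_sphCoord l m one_pos hθ φ

lemma cos_latitude_nonneg (x : E3) : 0 ≤ cos (latitude x) := Real.cos_arcsin_nonneg _

lemma norm_smul_sphCoord_latitude_longitude (x : E3) :
    ‖x‖ • sphCoord (latitude x) (longitude x) = x := by
  rcases eq_or_ne x 0 with rfl | hx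
  · simp
  have hn : 0 < ‖x‖ := norm_pos_iff.2 hx
  set w : ℂ := (x 0 : ℂ) + (x 1 : ℂ) * Complex.I
  have hw : ‖w‖ ^ 2 = x 0 ^ 2 + x 1 ^ 2 := by
    rw [Complex.sq_norm, Complex.normSq_add_mul_I]
  have hle : |x 2 / ‖x‖| ≤ 1 := by
    rw [abs_div, abs_norm, div_le_one hn]
    exact PiLp.norm_apply_le x 2
  have hsin : ‖x‖ * sin (latitude x) = x 2 := by
    rw [latitude, sin_arcsin (abs_le.1 hle).1 (abs_le.1 hle).2, mul_div_cancel₀ _ hn.ne']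
  have hcos : ‖x‖ * cos (latitude x) = ‖w‖ := by
    refine (pow_left_inj₀ (mul_nonneg hn.le (cos_latitude_nonneg x)) (norm_nonneg w)
      two_ne_zero).1 ?_
    rw [hw, mul_pow, cos_sq', mul_sub, ← mul_pow, hsin, norm_sq_E3]
    ring
  have hre : ‖w‖ * cos (longitude x) = x 0 :=
    (Complex.norm_mul_cos_arg w).trans (by simp [w])
  have him : ‖w‖ * sin (longitude x) = x 1 :=
    (Complex.norm_mul_sin_arg w).trans (by simp [w])
  ext i
  fin_cases i
  · change ‖x‖ * (cos (latitude x) * cos (longitude x)) = x 0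
    rw [← mul_assoc, hcos, hre]
  · change ‖x‖ * (cos (latitude x) * sin (longitude x)) = x 1
    rw [← mul_assoc, hcos, him]
  · exact hsin

theorem exteriorHarmonic_eq_Ylm (l : ℕ) (m : ℤ) {x : E3} (hx : x ≠ 0) :
    exteriorHarmonic l m x =
      (‖x‖ : ℂ) ^ (-(l : ℤ) - 1) * Ylm l m (latitude x) (longitude x) := by
  have hpow : (‖x‖ : ℂ) ^ (-(l : ℤ) - 1) = (‖x‖⁻¹ : ℂ) ^ (l + 1) := by
    rw [← neg_add', zpow_neg, inv_pow]
    norm_cast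
  rw [hpow, ← exteriorHarmonic_smul_sphCoord l m (norm_pos_iff.2 hx) (cos_latitude_nonneg x),
    norm_smul_sphCoord_latitude_longitude]

lemma exteriorHarmonic_smul (l : ℕ) (m : ℤ) {r : ℝ} (hr : 0 < r) {x : E3} (hx : x ≠ 0) :
    exteriorHarmonic l m (r • x) = (r⁻¹ : ℂ) ^ (l + 1) * exteriorHarmonic l m x := by
  have hθ := cos_latitude_nonneg x
  have hn := norm_pos_iff.2 hx
  rw [← norm_smul_sphCoord_latitude_longitude x, smul_smul,
    exteriorHarmonic_smul_sphCoord l m (mul_pos hr hn) hθ, exteriorHarmonic_smul_sphCoord l m hn hθ]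
  push_cast
  rw [mul_inv, mul_pow, mul_assoc]

lemma exteriorHarmonic_eq_zero_of_lt {l : ℕ} {m : ℤ} (h : l < m.natAbs) (x : E3) :
    exteriorHarmonic l m x = 0 := by
  simp [exteriorHarmonic, solidHarmonic, solidFactor, reducedLegendre_eq_zero_of_lt h]

lemma norm_exteriorHarmonic_sq (l : ℕ) (m : ℤ) {x : E3} (hx : x ≠ 0) :
    ‖exteriorHarmonic l m x‖ ^ 2 = ‖x‖⁻¹ ^ (2 * l + 2) * (harmonicNorm l m.natAbs ^ 2 *
      ((1 - sin (latitude x) ^ 2) ^ m.natAbs *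
        reducedLegendre l m.natAbs (sin (latitude x)) ^ 2)) := by
  have hsign : (((-1 : ℝ) ^ m.natAbs) ^ 2) = 1 := by rw [← pow_mul, mul_comm, pow_mul]; norm_num
  have hexp : ‖Complex.exp (Complex.I * m * longitude x)‖ = 1 := by
    rw [mul_assoc, ← Complex.ofReal_intCast, ← Complex.ofReal_mul, mul_comm]
    exact Complex.norm_exp_ofReal_mul_I _
  conv_lhs => rw [← norm_smul_sphCoord_latitude_longitude x, exteriorHarmonic_smul_sphCoord l m
    (norm_pos_iff.2 hx) (cos_latitude_nonneg x), Ylm, assocLegendre_sin l _ (cos_latitude_nonneg x)]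
  rw [norm_mul, norm_mul, norm_pow, norm_inv, Complex.norm_real, Complex.norm_real, norm_norm,
    hexp, Real.norm_eq_abs, abs_mul, abs_alphaY, mul_one, mul_pow, mul_pow, sq_abs, ← cos_sq',
    mul_pow, mul_pow, hsign]
  ring

lemma sum_norm_exteriorHarmonic_sq (l : ℕ) {x : E3} (hx : x ≠ 0) :
    ∑ m ∈ Finset.Icc (-(l : ℤ)) l, ‖exteriorHarmonic l m x‖ ^ 2 =
      ‖x‖⁻¹ ^ (2 * l + 2) * ((2 * l + 1) / (4 * π)) := by
  rw [← sum_harmonicNorm_sq_mul l (sin (latitude x)), Finset.mul_sum]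
  exact Finset.sum_congr rfl fun m _ => norm_exteriorHarmonic_sq l m hx

end PolarCoordinates

section TermwiseDifferentiation

variable {E F ι : Type*} [NormedAddCommGroup E] [NormedSpace ℝ E] [NormedAddCommGroup F]
  [NormedSpace ℝ F]

lemma hasFDerivWithinAt_tsum_of_norm_image_sub_le [CompleteSpace F] {f : ι → E → F}
    {f' : ι → E →L[ℝ] F} {u : ι → ℝ} {s : Set E} {x : E} (hu : Summable u)
    (hf : ∀ i, HasFDerivWithinAt (f i) (f' i) s x) (hf' : ∀ i, ‖f' i‖ ≤ u i)
    (hlip : ∀ᶠ y in 𝓝[s] x, ∀ i, ‖f i y - f i x‖ ≤ u i * ‖y - x‖)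
    (hsum : Summable fun i => f i x) :
    HasFDerivWithinAt (fun y => ∑' i, f i y) (∑' i, f' i) s x := by
  have hterm (i : ι) : Tendsto (fun y => ‖y - x‖⁻¹ • (f i y - f i x - f' i (y - x))) (𝓝[s] x)
      (𝓝 0) := by
    rw [tendsto_zero_iff_norm_tendsto_zero]
    simpa only [norm_smul, norm_inv, norm_norm] using hasFDerivWithinAt_iff_tendsto.1 (hf i)
  have hdom : ∀ᶠ y in 𝓝[s] x, ∀ i,
      ‖‖y - x‖⁻¹ • (f i y - f i x - f' i (y - x))‖ ≤ 2 * u i := by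
    filter_upwards [hlip] with y hy i
    have hui : 0 ≤ u i := (norm_nonneg _).trans (hf' i)
    rw [norm_smul, norm_inv, norm_norm]
    refine inv_mul_le_of_le_mul₀ (norm_nonneg _) (by positivity) ?_
    calc ‖f i y - f i x - f' i (y - x)‖ ≤ u i * ‖y - x‖ + u i * ‖y - x‖ :=
          (norm_sub_le _ _).trans (add_le_add (hy i) ((f' i).le_of_opNorm_le (hf' i) _))
      _ = ‖y - x‖ * (2 * u i) := by ring
  have htsum := tendsto_tsum_of_dominated_convergence (hu.mul_left 2) hterm hdom
  rw [tsum_zero, tendsto_zero_iff_norm_tendsto_zero] at htsum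
  refine hasFDerivWithinAt_iff_tendsto.2 (htsum.congr' ?_)
  filter_upwards [hlip] with y hy
  have hderiv : Summable f' := Summable.of_norm_bounded hu hf'
  have hdiff : Summable fun i => f i y - f i x := Summable.of_norm_bounded (hu.mul_right _) hy
  have hvalue : Summable fun i => f i y := by simpa using hdiff.add hsum
  have happly := (ContinuousLinearMap.apply ℝ F (y - x)).hasSum hderiv.hasSum
  have hquotient := (((hvalue.hasSum.sub hsum.hasSum).sub happly).const_smul ‖y - x‖⁻¹).tsum_eq
  simp only [ContinuousLinearMap.apply_apply] at hquotient
  rw [hquotient, norm_smul, norm_inv, norm_norm]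

lemma one_le_norm_of_mem_segment_smul {x y : E} (hx : 1 ≤ ‖x‖) {c : ℝ} (hc : 1 ≤ c)
    (hy : y ∈ segment ℝ x (c • x)) : 1 ≤ ‖y‖ := by
  obtain ⟨a, b, _, hb, hab, rfl⟩ := hy
  have hcoeff : 1 ≤ a + b * c := by nlinarith
  rw [smul_smul, ← add_smul, norm_smul, Real.norm_of_nonneg (by positivity)]
  nlinarith

lemma one_le_norm_of_mem_segment_dilated {x y z : E} (hx : 1 ≤ ‖x‖) (hxy : ‖y - x‖ ≤ 1 / 2)
    (hz : z ∈ segment ℝ ((1 + 2 * ‖y - x‖) • x) ((1 + 2 * ‖y - x‖) • y)) : 1 ≤ ‖z‖ := by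
  obtain ⟨a, b, _, hb, hab, rfl⟩ := hz
  have hsum : a • (1 + 2 * ‖y - x‖) • x + b • (1 + 2 * ‖y - x‖) • y =
      (1 + 2 * ‖y - x‖) • (x + b • (y - x)) := by
    obtain rfl : a = 1 - b := by linarith
    module
  have hnear : 1 - ‖y - x‖ ≤ ‖x + b • (y - x)‖ := by
    have htriangle := norm_sub_le (x + b • (y - x)) (b • (y - x))
    rw [add_sub_cancel_right, norm_smul, Real.norm_of_nonneg hb] at htriangle
    nlinarith [norm_nonneg (y - x)]
  rw [hsum, norm_smul, Real.norm_of_nonneg (by positivity)]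
  nlinarith [norm_nonneg (y - x)]

/- The exterior of the ball is not convex, so `x` and `y` are joined by the path
`x → c x → c y → y` with `c = 1 + 2 ‖y - x‖`, which stays outside the ball. -/
lemma norm_image_sub_le_of_norm_hasFDerivAt_le_exterior {f : E → F} {f' : E → E →L[ℝ] F} {C : ℝ}
    (hf : ∀ x, 1 ≤ ‖x‖ → HasFDerivAt f (f' x) x) (hC : ∀ x, 1 ≤ ‖x‖ → ‖f' x‖ ≤ C) {x y : E}
    (hx : 1 ≤ ‖x‖) (hy : 1 ≤ ‖y‖) (hxy : ‖y - x‖ ≤ 1 / 2) :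
    ‖f y - f x‖ ≤ C * (4 * ‖x‖ + 3) * ‖y - x‖ := by
  have hsegment {a b : E} (h : ∀ z ∈ segment ℝ a b, 1 ≤ ‖z‖) : ‖f b - f a‖ ≤ C * ‖b - a‖ :=
    (convex_segment a b).norm_image_sub_le_of_norm_hasFDerivWithin_le
      (fun z hz => (hf z (h z hz)).hasFDerivWithinAt) (fun z hz => hC z (h z hz))
      (left_mem_segment ℝ a b) (right_mem_segment ℝ a b)
  have hC0 : 0 ≤ C := (norm_nonneg _).trans (hC x hx)
  have hd : 0 ≤ ‖y - x‖ := norm_nonneg _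
  set c := 1 + 2 * ‖y - x‖ with hc
  have hc1 : 1 ≤ c := by linarith
  have hradial (z : E) : ‖c • z - z‖ = 2 * ‖y - x‖ * ‖z‖ := by
    rw [show c • z - z = (2 * ‖y - x‖) • z by rw [hc]; module, norm_smul,
      Real.norm_of_nonneg (by positivity)]
  have hx' := hsegment fun z hz => one_le_norm_of_mem_segment_smul hx hc1 hz
  have hy' := hsegment fun z hz => one_le_norm_of_mem_segment_smul hy hc1 hz
  have hcross := hsegment fun z hz => one_le_norm_of_mem_segment_dilated hx hxy hz
  rw [hradial] at hx' hy'
  rw [← hc, ← smul_sub, norm_smul, Real.norm_of_nonneg (by positivity)] at hcross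
  rw [norm_sub_rev] at hy'
  have hynorm : ‖y‖ ≤ ‖x‖ + ‖y - x‖ := by linarith [norm_sub_norm_le y x]
  calc ‖f y - f x‖
      = ‖(f (c • x) - f x) + (f (c • y) - f (c • x)) + (f y - f (c • y))‖ := by
        congr 1
        abel
    _ ≤ C * (2 * ‖y - x‖ * ‖x‖) + C * (c * ‖y - x‖) + C * (2 * ‖y - x‖ * ‖y‖) :=
        norm_add₃_le.trans (add_le_add_three hx' hcross hy')
    _ = C * ((2 * ‖x‖ + (1 + 2 * ‖y - x‖) + 2 * ‖y‖) * ‖y - x‖) := by ring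
    _ ≤ C * ((4 * ‖x‖ + 3) * ‖y - x‖) := by
        gcongr C * (?_ * _)
        linarith
    _ = C * (4 * ‖x‖ + 3) * ‖y - x‖ := by ring

end TermwiseDifferentiation

section HarmonicSeries

/-- The degree `l` part of the series with coefficients `w l m`. -/
def harmonicBlock (w : ℕ → ℤ → ℂ) (l : ℕ) (x : E3) : ℂ :=
  ∑ m ∈ Finset.Icc (-(l : ℤ)) l, w l m * exteriorHarmonic l m x

/-- The series of exterior harmonics with coefficients `w l m`, summed by degree. -/
def harmonicSeries (w : ℕ → ℤ → ℂ) (x : E3) : ℂ := ∑' l, harmonicBlock w l x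

/-- The supremum bound on the unit sphere of the degree `l` part of a series, obtained from the
Cauchy–Schwarz inequality and the addition theorem. -/
def blockBound (w : ℕ → ℤ → ℂ) (l : ℕ) : ℝ :=
  √(((l : ℝ) + 1) * ∑ m ∈ Finset.Icc (-(l : ℤ)) l, ‖w l m‖ ^ 2)

/-- Absolute summability, uniformly on the sphere, of the `k` times differentiated series. -/
def BlockSummable (k : ℕ) (w : ℕ → ℤ → ℂ) : Prop :=
  Summable fun l : ℕ => ((l : ℝ) + 1) ^ k * blockBound w l

/-- The coefficients of the component along `ladderForm d` of the differential of a series. -/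
def ladderShift (d : SignType) (w : ℕ → ℤ → ℂ) : ℕ → ℤ → ℂ
  | 0, _ => 0
  | l + 1, m => if (m - d).natAbs ≤ l then ladderCoeff d l (m - d) * w l (m - d) else 0

/-- The differential of the degree `l` part of a series. -/
def harmonicBlockDeriv (w : ℕ → ℤ → ℂ) (l : ℕ) (x : E3) : E3 →L[ℝ] ℂ :=
  ∑ d : SignType, harmonicBlock (ladderShift d w) (l + 1) x • ladderForm d

/-- The termwise differential of a series. -/
def harmonicSeriesDeriv (w : ℕ → ℤ → ℂ) (x : E3) : E3 →L[ℝ] ℂ :=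
  ∑ d : SignType, harmonicSeries (ladderShift d w) x • ladderForm d

variable {w : ℕ → ℤ → ℂ} {k l : ℕ} {m : ℤ} {x : E3}

lemma ne_zero_of_mem_closedExt (hx : x ∈ closedExt) : x ≠ 0 :=
  norm_pos_iff.1 (one_pos.trans_le hx)

lemma inv_norm_le_one_of_mem_closedExt (hx : x ∈ closedExt) : ‖x‖⁻¹ ≤ 1 :=
  inv_le_one_of_one_le₀ hx

lemma extDomain_subset_closedExt : extDomain ⊆ closedExt :=
  fun x (hx : 1 < ‖x‖) => hx.le

lemma isOpen_extDomain : IsOpen extDomain := isOpen_lt continuous_const continuous_norm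

lemma blockBound_nonneg (w : ℕ → ℤ → ℂ) (l : ℕ) : 0 ≤ blockBound w l := Real.sqrt_nonneg _

lemma mem_Icc_neg_iff_natAbs_le : m ∈ Finset.Icc (-(l : ℤ)) l ↔ m.natAbs ≤ l := by
  rw [Finset.mem_Icc]
  omega

lemma abs_intCast_le_of_natAbs_le (hm : m.natAbs ≤ l) : |(m : ℝ)| ≤ l := by
  rw [← Int.cast_abs, Int.abs_eq_natAbs, Int.cast_natCast]
  exact_mod_cast hm

lemma sum_norm_mul_exteriorHarmonic_le (w : ℕ → ℤ → ℂ) (l : ℕ) (hx : x ≠ 0) :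
    ∑ m ∈ Finset.Icc (-(l : ℤ)) l, ‖w l m * exteriorHarmonic l m x‖ ≤
      blockBound w l * ‖x‖⁻¹ ^ (l + 1) := by
  have hcoeff : (2 * (l : ℝ) + 1) / (4 * π) ≤ (l : ℝ) + 1 := by
    rw [div_le_iff₀ (by positivity)]
    nlinarith [Real.pi_gt_three]
  simp only [norm_mul]
  refine (Real.sum_mul_le_sqrt_mul_sqrt _ _ _).trans ?_
  rw [sum_norm_exteriorHarmonic_sq l hx, blockBound, mul_comm ((l : ℝ) + 1),
    Real.sqrt_mul (Finset.sum_nonneg fun _ _ => sq_nonneg _), mul_assoc]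
  gcongr
  rw [show 2 * l + 2 = (l + 1) * 2 by ring, pow_mul, mul_comm, Real.sqrt_mul (by positivity),
    Real.sqrt_sq (by positivity)]
  gcongr

lemma norm_harmonicBlock_le (w : ℕ → ℤ → ℂ) (l : ℕ) (hx : x ≠ 0) :
    ‖harmonicBlock w l x‖ ≤ blockBound w l * ‖x‖⁻¹ ^ (l + 1) :=
  (norm_sum_le _ _).trans (sum_norm_mul_exteriorHarmonic_le w l hx)

lemma norm_harmonicBlock_le_blockBound (w : ℕ → ℤ → ℂ) (l : ℕ) (hx : x ∈ closedExt) :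
    ‖harmonicBlock w l x‖ ≤ blockBound w l :=
  (norm_harmonicBlock_le w l (ne_zero_of_mem_closedExt hx)).trans
    (mul_le_of_le_one_right (blockBound_nonneg w l)
      (pow_le_one₀ (by positivity) (inv_norm_le_one_of_mem_closedExt hx)))

lemma natAbs_signType_le_one (d : SignType) : (d : ℤ).natAbs ≤ 1 := by
  cases d <;> decide

lemma sum_Icc_succ_eq_sum_Icc_add {M : Type*} [AddCommMonoid M] {g : ℤ → M} (d : SignType) (l : ℕ)
    (hg : ∀ m : ℤ, l < (m - d).natAbs → g m = 0) :
    ∑ m ∈ Finset.Icc (-((l + 1 : ℕ) : ℤ)) (l + 1 : ℕ), g m =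
      ∑ m ∈ Finset.Icc (-(l : ℤ)) l, g (m + d) := by
  have hd := natAbs_signType_le_one d
  have hmap := Finset.sum_map (Finset.Icc (-(l : ℤ)) l) (addRightEmbedding (d : ℤ)) g
  rw [Finset.map_add_right_Icc] at hmap
  simp only [addRightEmbedding_apply] at hmap
  rw [← hmap]
  refine (Finset.sum_subset (fun m hm => ?_) fun m _ hm => hg m ?_).symm <;>
    rw [Finset.mem_Icc] at * <;> omega

lemma ladderShift_succ_of_lt {d : SignType} (h : l < (m - d).natAbs) :
    ladderShift d w (l + 1) m = 0 := if_neg h.not_ge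

lemma ladderShift_succ_add (d : SignType) (w : ℕ → ℤ → ℂ) (h : m.natAbs ≤ l) :
    ladderShift d w (l + 1) (m + d) = ladderCoeff d l m * w l m := by
  simp only [ladderShift, add_sub_cancel_right, if_pos h]

lemma harmonicBlock_ladderShift_zero (d : SignType) (w : ℕ → ℤ → ℂ) (x : E3) :
    harmonicBlock (ladderShift d w) 0 x = 0 := by
  simp [harmonicBlock, ladderShift]

lemma harmonicBlock_ladderShift_succ (d : SignType) (w : ℕ → ℤ → ℂ) (l : ℕ) (x : E3) :
    harmonicBlock (ladderShift d w) (l + 1) x = ∑ m ∈ Finset.Icc (-(l : ℤ)) l,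
      w l m * (ladderCoeff d l m * exteriorHarmonic (l + 1) (m + d) x) := by
  rw [harmonicBlock, sum_Icc_succ_eq_sum_Icc_add d l fun m hm => by
    rw [ladderShift_succ_of_lt hm, zero_mul]]
  refine Finset.sum_congr rfl fun m hm => ?_
  rw [ladderShift_succ_add d w (mem_Icc_neg_iff_natAbs_le.1 hm)]
  ring

lemma hasFDerivAt_harmonicBlock (w : ℕ → ℤ → ℂ) (l : ℕ) (hx : x ≠ 0) :
    HasFDerivAt (harmonicBlock w l) (harmonicBlockDeriv w l x) x := by
  refine (HasFDerivAt.fun_sum fun m hm => (hasFDerivAt_exteriorHarmonic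
    (mem_Icc_neg_iff_natAbs_le.1 hm) hx).const_mul (w l m)).congr_fderiv ?_
  simp only [harmonicBlockDeriv, exteriorHarmonicDeriv, harmonicBlock_ladderShift_succ,
    Finset.smul_sum, smul_smul]
  rw [Finset.sum_comm]
  exact Finset.sum_congr rfl fun d _ => (Finset.sum_smul ..).symm

lemma continuousOn_harmonicBlock (w : ℕ → ℤ → ℂ) (l : ℕ) :
    ContinuousOn (harmonicBlock w l) closedExt := fun _ hx =>
  (hasFDerivAt_harmonicBlock w l (ne_zero_of_mem_closedExt hx)).continuousAt.continuousWithinAt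

lemma abs_ladderCoeff_le (d : SignType) (h : m.natAbs ≤ l) :
    |ladderCoeff d l m| ≤ 2 * ((l : ℝ) + 1) := by
  obtain ⟨hlo, hhi⟩ := abs_le.1 (abs_intCast_le_of_natAbs_le h)
  have hsqrt {a : ℝ} (ha : a ≤ (2 * ((l : ℝ) + 1)) ^ 2) :
      √((2 * l + 1) / (2 * l + 3) * a) ≤ 2 * ((l : ℝ) + 1) := by
    have hratio : (2 * (l : ℝ) + 1) / (2 * l + 3) ≤ 1 := by
      rw [div_le_one (by positivity)]
      linarith
    rw [Real.sqrt_le_left (by positivity)]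
    calc (2 * (l : ℝ) + 1) / (2 * l + 3) * a
        ≤ (2 * (l : ℝ) + 1) / (2 * l + 3) * (2 * ((l : ℝ) + 1)) ^ 2 := by gcongr
      _ ≤ (2 * ((l : ℝ) + 1)) ^ 2 := mul_le_of_le_one_left (by positivity) hratio
  obtain hd | hd | hd : d = 1 ∨ d = -1 ∨ d = 0 := by cases d <;> decide
  · rw [hd, ladderCoeff_one, abs_neg, abs_of_nonneg (Real.sqrt_nonneg _)]
    exact hsqrt (by nlinarith)
  · rw [hd, ladderCoeff_neg_one, abs_of_nonneg (Real.sqrt_nonneg _)]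
    exact hsqrt (by nlinarith)
  · rw [hd, ladderCoeff_zero, abs_neg, abs_of_nonneg (Real.sqrt_nonneg _)]
    exact hsqrt (by nlinarith)

lemma norm_ladderForm_le (d : SignType) : ‖ladderForm d‖ ≤ 1 := by
  refine ContinuousLinearMap.opNorm_le_bound _ zero_le_one fun v => ?_
  have hcoord (i : Fin 3) : ‖(v i : ℂ)‖ ≤ ‖v‖ := by
    rw [Complex.norm_real]
    exact PiLp.norm_apply_le v i
  have hI : ‖Complex.I * v 1‖ ≤ ‖v‖ := by
    rw [norm_mul, Complex.norm_I, one_mul]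
    exact hcoord 1
  rw [one_mul]
  obtain hd | hd | hd : d = 1 ∨ d = -1 ∨ d = 0 := by cases d <;> decide
  · rw [hd, ladderForm_one_apply, norm_div, RCLike.norm_ofNat, div_le_iff₀ two_pos]
    linarith [norm_sub_le (v 0 : ℂ) (Complex.I * v 1), hcoord 0]
  · rw [hd, ladderForm_neg_one_apply, norm_div, RCLike.norm_ofNat, div_le_iff₀ two_pos]
    linarith [norm_add_le (v 0 : ℂ) (Complex.I * v 1), hcoord 0]
  · rw [hd, ladderForm_zero_apply]
    exact hcoord 2

lemma blockBound_ladderShift_succ_le (d : SignType) (w : ℕ → ℤ → ℂ) (l : ℕ) :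
    blockBound (ladderShift d w) (l + 1) ≤ 4 * ((l : ℝ) + 1) * blockBound w l := by
  rw [blockBound, blockBound, sum_Icc_succ_eq_sum_Icc_add d l fun m hm => by
    rw [ladderShift_succ_of_lt hm, norm_zero, zero_pow two_ne_zero]]
  rw [Real.sqrt_le_left (by positivity), mul_pow, Real.sq_sqrt (by positivity)]
  have hsum : ∑ m ∈ Finset.Icc (-(l : ℤ)) l, ‖ladderShift d w (l + 1) (m + d)‖ ^ 2 ≤
      (2 * ((l : ℝ) + 1)) ^ 2 * ∑ m ∈ Finset.Icc (-(l : ℤ)) l, ‖w l m‖ ^ 2 := by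
    rw [Finset.mul_sum]
    refine Finset.sum_le_sum fun m hm => ?_
    rw [mem_Icc_neg_iff_natAbs_le] at hm
    rw [ladderShift_succ_add d w hm, norm_mul, Complex.norm_real, Real.norm_eq_abs, mul_pow]
    gcongr
    exact abs_ladderCoeff_le d hm
  calc (((l + 1 : ℕ) : ℝ) + 1) *
        ∑ m ∈ Finset.Icc (-(l : ℤ)) l, ‖ladderShift d w (l + 1) (m + d)‖ ^ 2
      ≤ (4 * ((l : ℝ) + 1)) *
        ((2 * ((l : ℝ) + 1)) ^ 2 * ∑ m ∈ Finset.Icc (-(l : ℤ)) l, ‖w l m‖ ^ 2) := by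
        gcongr
        push_cast
        linarith [(Nat.cast_nonneg l : (0 : ℝ) ≤ l)]
    _ = (4 * ((l : ℝ) + 1)) ^ 2 *
        (((l : ℝ) + 1) * ∑ m ∈ Finset.Icc (-(l : ℤ)) l, ‖w l m‖ ^ 2) := by ring

lemma norm_harmonicBlockDeriv_le (w : ℕ → ℤ → ℂ) (l : ℕ) (hx : x ∈ closedExt) :
    ‖harmonicBlockDeriv w l x‖ ≤ 12 * (((l : ℝ) + 1) * blockBound w l) := by
  have hterm (d : SignType) : ‖harmonicBlock (ladderShift d w) (l + 1) x • ladderForm d‖ ≤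
      4 * ((l : ℝ) + 1) * blockBound w l := by
    rw [norm_smul]
    exact (mul_le_of_le_one_right (norm_nonneg _) (norm_ladderForm_le d)).trans
      ((norm_harmonicBlock_le_blockBound _ _ hx).trans (blockBound_ladderShift_succ_le d w l))
  calc ‖harmonicBlockDeriv w l x‖ ≤ ∑ _d : SignType, 4 * ((l : ℝ) + 1) * blockBound w l :=
        norm_sum_le_of_le _ fun d _ => hterm d
    _ = 12 * (((l : ℝ) + 1) * blockBound w l) := by
        rw [sum_signType]
        ring

lemma BlockSummable.mono {j : ℕ} (h : BlockSummable k w) (hjk : j ≤ k) : BlockSummable j w := by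
  refine Summable.of_nonneg_of_le (fun l => mul_nonneg (by positivity) (blockBound_nonneg w l))
    (fun l => ?_) h
  gcongr
  · exact blockBound_nonneg w l
  · linarith [(Nat.cast_nonneg l : (0 : ℝ) ≤ l)]

lemma BlockSummable.shift (h : BlockSummable (k + 1) w) (d : SignType) :
    BlockSummable k (ladderShift d w) := by
  refine (summable_nat_add_iff 1).1 (Summable.of_nonneg_of_le
    (fun l => mul_nonneg (by positivity) (blockBound_nonneg _ _)) (fun l => ?_)
    (Summable.mul_left (4 * 2 ^ k) h))
  calc (((l + 1 : ℕ) : ℝ) + 1) ^ k * blockBound (ladderShift d w) (l + 1)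
      ≤ (2 * ((l : ℝ) + 1)) ^ k * (4 * ((l : ℝ) + 1) * blockBound w l) := by
        gcongr
        · exact blockBound_nonneg _ _
        · push_cast
          linarith [(Nat.cast_nonneg l : (0 : ℝ) ≤ l)]
        · exact blockBound_ladderShift_succ_le d w l
    _ = 4 * 2 ^ k * (((l : ℝ) + 1) ^ (k + 1) * blockBound w l) := by
        rw [mul_pow]
        ring

lemma BlockSummable.summable_blockBound (h : BlockSummable 0 w) : Summable (blockBound w) := by
  simpa only [BlockSummable, pow_zero, one_mul] using h

lemma BlockSummable.summable_harmonicBlock (h : BlockSummable 0 w) (hx : x ∈ closedExt) :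
    Summable fun l => harmonicBlock w l x :=
  Summable.of_norm_bounded h.summable_blockBound
    fun l => norm_harmonicBlock_le_blockBound w l hx

lemma BlockSummable.hasSum_harmonicBlockDeriv (h : BlockSummable 1 w) (hx : x ∈ closedExt) :
    HasSum (fun l => harmonicBlockDeriv w l x) (harmonicSeriesDeriv w x) := by
  refine hasSum_sum fun d _ => HasSum.smul_const ?_ _
  have hsum := ((h.shift d).summable_harmonicBlock hx).hasSum
  rw [← hasSum_nat_add_iff' 1, Finset.sum_range_one, harmonicBlock_ladderShift_zero,
    sub_zero] at hsum
  exact hsum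

theorem BlockSummable.hasFDerivWithinAt (h : BlockSummable 1 w) (hx : x ∈ closedExt) :
    HasFDerivWithinAt (harmonicSeries w) (harmonicSeriesDeriv w x) closedExt x := by
  rw [← (h.hasSum_harmonicBlockDeriv hx).tsum_eq]
  have hbound : Summable fun l : ℕ => 12 * (((l : ℝ) + 1) * blockBound w l) := by
    simpa only [BlockSummable, pow_one] using Summable.mul_left 12 h
  refine hasFDerivWithinAt_tsum_of_norm_image_sub_le (hbound.mul_right (4 * ‖x‖ + 3))
    (fun l => (hasFDerivAt_harmonicBlock w l (ne_zero_of_mem_closedExt hx)).hasFDerivWithinAt)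
    (fun l => ?_) ?_ ((h.mono zero_le_one).summable_harmonicBlock hx)
  · have hbl := norm_harmonicBlockDeriv_le w l hx
    exact hbl.trans (le_mul_of_one_le_right ((norm_nonneg _).trans hbl)
      (by linarith [norm_nonneg x]))
  · filter_upwards [self_mem_nhdsWithin,
      mem_nhdsWithin_of_mem_nhds (Metric.closedBall_mem_nhds x one_half_pos)] with y hy hyx l
    exact norm_image_sub_le_of_norm_hasFDerivAt_le_exterior
      (fun z hz => hasFDerivAt_harmonicBlock w l (ne_zero_of_mem_closedExt hz))
      (fun z hz => norm_harmonicBlockDeriv_le w l hz) hx hy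
      (by rwa [Metric.mem_closedBall, dist_eq_norm] at hyx)

theorem BlockSummable.hasFDerivAt (h : BlockSummable 1 w) (hx : x ∈ extDomain) :
    HasFDerivAt (harmonicSeries w) (harmonicSeriesDeriv w x) x :=
  (h.hasFDerivWithinAt (extDomain_subset_closedExt hx)).hasFDerivAt
    (mem_of_superset (isOpen_extDomain.mem_nhds hx) extDomain_subset_closedExt)

theorem BlockSummable.contDiffOn_closedExt (h : BlockSummable k w) :
    ContDiffOn ℝ k (harmonicSeries w) closedExt := by
  induction k generalizing w with
  | zero =>
    exact contDiffOn_zero.2 (continuousOn_tsum (continuousOn_harmonicBlock w)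
      h.summable_blockBound fun l x hx => norm_harmonicBlock_le_blockBound w l hx)
  | succ k ih =>
    rw [Nat.cast_add, Nat.cast_one, contDiffOn_succ_iff_hasFDerivWithinAt (by simp)]
    intro x hx
    refine ⟨closedExt, by rw [Set.insert_eq_of_mem hx]; exact self_mem_nhdsWithin, by simp,
      harmonicSeriesDeriv w, fun y hy => (h.mono (by omega)).hasFDerivWithinAt hy, ?_⟩
    exact ContDiffOn.sum fun d _ => (ih (h.shift d)).smul contDiffOn_const

lemma BlockSummable.norm_harmonicSeries_le (h : BlockSummable 0 w) (hx : x ∈ closedExt) :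
    ‖harmonicSeries w x‖ ≤ (∑' l, blockBound w l) * ‖x‖⁻¹ := by
  rw [← tsum_mul_right]
  refine tsum_of_norm_bounded (h.summable_blockBound.mul_right _).hasSum fun l => ?_
  refine (norm_harmonicBlock_le w l (ne_zero_of_mem_closedExt hx)).trans ?_
  gcongr
  · exact blockBound_nonneg w l
  · exact pow_le_of_le_one (by positivity) (inv_norm_le_one_of_mem_closedExt hx) l.succ_ne_zero

theorem BlockSummable.tendsto_cobounded (h : BlockSummable 0 w) :
    Tendsto (harmonicSeries w) (Bornology.cobounded E3) (𝓝 0) := by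
  have hnorm := tendsto_norm_cobounded_atTop (E := E3)
  have hlim := (tendsto_inv_atTop_zero.comp hnorm).const_mul (∑' l, blockBound w l)
  rw [mul_zero] at hlim
  refine squeeze_zero_norm' ?_ hlim
  filter_upwards [hnorm.eventually_ge_atTop 1] with x hx using h.norm_harmonicSeries_le hx

end HarmonicSeries

section Harmonicity

/-- The coefficients, in the variable `R⁻¹ • x`, of a series in the variable `x`. -/
def dilate (R : ℝ) (w : ℕ → ℤ → ℂ) (l : ℕ) (m : ℤ) : ℂ := (R⁻¹ : ℂ) ^ (l + 1) * w l m

variable {w : ℕ → ℤ → ℂ} {R : ℝ} {x : E3}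

lemma harmonicSeries_eq_dilate (w : ℕ → ℤ → ℂ) (hR : 0 < R) (hx : x ≠ 0) :
    harmonicSeries w x = harmonicSeries (dilate R w) (R⁻¹ • x) := by
  refine tsum_congr fun l => Finset.sum_congr rfl fun m _ => ?_
  have hcancel : (R⁻¹ : ℂ) ^ (l + 1) * ((R⁻¹ : ℝ) : ℂ)⁻¹ ^ (l + 1) = 1 := by
    rw [Complex.ofReal_inv, inv_inv, ← mul_pow, inv_mul_cancel₀ (Complex.ofReal_ne_zero.2 hR.ne'),
      one_pow]
  rw [exteriorHarmonic_smul l m (inv_pos.2 hR) hx, dilate]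
  linear_combination -w l m * exteriorHarmonic l m x * hcancel

lemma blockBound_dilate (w : ℕ → ℤ → ℂ) (hR : 0 < R) (l : ℕ) :
    blockBound (dilate R w) l = R⁻¹ ^ (l + 1) * blockBound w l := by
  have hnorm : ‖(R⁻¹ : ℂ)‖ = R⁻¹ := by rw [norm_inv, Complex.norm_of_nonneg hR.le]
  simp only [blockBound, dilate, norm_mul, norm_pow, hnorm, mul_pow, ← Finset.mul_sum]
  rw [mul_left_comm, Real.sqrt_mul (by positivity), Real.sqrt_sq (by positivity)]

lemma blockSummable_dilate (h : BlockSummable 0 w) (hR : 1 < R) (k : ℕ) :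
    BlockSummable k (dilate R w) := by
  have hR0 : 0 < R := one_pos.trans hR
  have hlim := (tendsto_pow_const_mul_const_pow_of_abs_lt_one k
    (show |R⁻¹| < 1 by rw [abs_of_pos (inv_pos.2 hR0)]; exact inv_lt_one_of_one_lt₀ hR)).comp
      (tendsto_add_atTop_nat 1)
  obtain ⟨C, hC⟩ := hlim.bddAbove_range
  refine Summable.of_nonneg_of_le (fun l => mul_nonneg (by positivity) (blockBound_nonneg _ l))
    (fun l => ?_) (h.summable_blockBound.mul_left C)
  rw [blockBound_dilate w hR0, ← mul_assoc]
  refine mul_le_mul_of_nonneg_right ?_ (blockBound_nonneg w l)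
  simpa using hC (Set.mem_range_self l)

lemma exists_dilation_mem_extDomain (hx : x ∈ extDomain) :
    ∃ R : ℝ, 1 < R ∧ R⁻¹ • x ∈ extDomain := by
  have hx1 : 1 < ‖x‖ := hx
  refine ⟨(1 + ‖x‖) / 2, by linarith, ?_⟩
  change 1 < ‖_‖
  rw [norm_smul, norm_inv, Real.norm_of_nonneg (by positivity), ← div_eq_inv_mul,
    lt_div_iff₀ (by positivity)]
  linarith

lemma harmonicSeries_eventuallyEq_dilate (w : ℕ → ℤ → ℂ) (hR : 0 < R) (hx : x ≠ 0) :
    harmonicSeries w =ᶠ[𝓝 x] fun y => harmonicSeries (dilate R w) (R⁻¹ • y) := by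
  filter_upwards [isOpen_ne.mem_nhds hx] with y hy using harmonicSeries_eq_dilate w hR hy

theorem BlockSummable.contDiffOn_extDomain (h : BlockSummable 0 w) (k : ℕ) :
    ContDiffOn ℝ k (harmonicSeries w) extDomain := by
  intro x hx
  obtain ⟨R, hR, hRx⟩ := exists_dilation_mem_extDomain hx
  have hseries : ContDiffAt ℝ k (harmonicSeries (dilate R w)) (R⁻¹ • x) :=
    (blockSummable_dilate h hR k).contDiffOn_closedExt.contDiffAt
      (mem_of_superset (isOpen_extDomain.mem_nhds hRx) extDomain_subset_closedExt)
  exact ((hseries.comp x (contDiff_const_smul R⁻¹).contDiffAt).congr_of_eventuallyEq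
    (harmonicSeries_eventuallyEq_dilate w (one_pos.trans hR)
      (ne_zero_of_mem_closedExt (extDomain_subset_closedExt hx)))).contDiffWithinAt

lemma sum_ladderCoeff_mul_ladderCoeff {l : ℕ} {m : ℤ} (h : m.natAbs ≤ l) :
    ladderCoeff 1 (l + 1) (m - 1) * ladderCoeff (-1) l m +
      ladderCoeff (-1) (l + 1) (m + 1) * ladderCoeff 1 l m +
        2 * (ladderCoeff 0 (l + 1) m * ladderCoeff 0 l m) = 0 := by
  obtain ⟨hlo, hhi⟩ := abs_le.1 (abs_intCast_le_of_natAbs_le h)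
  have hpos : ladderCoeff 1 (l + 1) (m - 1) * ladderCoeff (-1) l m =
      -(ladderCoeff 0 (l + 1) m * ladderCoeff 0 l m) := by
    simp only [ladderCoeff_one, ladderCoeff_neg_one, ladderCoeff_zero, mul_neg, neg_mul, neg_neg]
    push_cast
    rw [← Real.sqrt_mul, ← Real.sqrt_mul]
    · congr 2
      field_simp
      ring
    all_goals refine mul_nonneg (by positivity) (mul_nonneg ?_ ?_) <;> linarith
  have hneg : ladderCoeff (-1) (l + 1) (m + 1) * ladderCoeff 1 l m =
      -(ladderCoeff 0 (l + 1) m * ladderCoeff 0 l m) := by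
    simp only [ladderCoeff_one, ladderCoeff_neg_one, ladderCoeff_zero, mul_neg, neg_mul, neg_neg]
    push_cast
    rw [← Real.sqrt_mul, ← Real.sqrt_mul]
    · congr 2
      field_simp
      ring
    all_goals refine mul_nonneg (by positivity) (mul_nonneg ?_ ?_) <;> linarith
  linarith

lemma sum_ladderShift_ladderShift (w : ℕ → ℤ → ℂ) (l : ℕ) (m : ℤ) :
    ladderShift 1 (ladderShift (-1) w) l m + ladderShift (-1) (ladderShift 1 w) l m +
      2 * ladderShift 0 (ladderShift 0 w) l m = 0 := by
  rcases l with _ | _ | l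
  · simp [ladderShift]
  · simp [ladderShift]
  simp only [ladderShift, SignType.coe_one, SignType.coe_neg_one, SignType.coe_zero,
    sub_neg_eq_add, sub_add_cancel, add_sub_cancel_right, sub_zero]
  by_cases h : m.natAbs ≤ l
  · have hcoeff := congrArg Complex.ofReal (sum_ladderCoeff_mul_ladderCoeff h)
    push_cast at hcoeff
    rw [if_pos h, if_pos h, if_pos h, if_pos (by omega), if_pos (by omega), if_pos (by omega)]
    linear_combination w l m * hcoeff
  · simp [if_neg h]

lemma BlockSummable.sum_harmonicSeries_ladderShift (h : BlockSummable 2 w) (hx : x ∈ closedExt) :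
    harmonicSeries (ladderShift 1 (ladderShift (-1) w)) x +
      harmonicSeries (ladderShift (-1) (ladderShift 1 w)) x +
      2 * harmonicSeries (ladderShift 0 (ladderShift 0 w)) x = 0 := by
  have hsum (d e : SignType) :=
    (((h.shift d).shift e).summable_harmonicBlock hx).hasSum
  refine (((hsum (-1) 1).add (hsum 1 (-1))).add ((hsum 0 0).mul_left 2)).unique ?_
  convert hasSum_zero using 2 with l
  simp only [harmonicBlock, Finset.mul_sum, ← Finset.sum_add_distrib]
  refine Finset.sum_eq_zero fun m _ => ?_
  linear_combination exteriorHarmonic l m x * sum_ladderShift_ladderShift w l m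

lemma lap_comp_smul {F : Type*} [NormedAddCommGroup F] [NormedSpace ℝ F] (u : E3 → F) (c : ℝ)
    (x : E3) : lap (fun y => u (c • y)) x = c ^ 2 • lap u (c • x) := by
  have hinner (v : E3) : fderiv ℝ (fun y => fderiv ℝ (fun z => u (c • z)) y v) x =
      c • c • fderiv ℝ (fun y => fderiv ℝ u y v) (c • x) := by
    simp only [fderiv_comp_smul, smul_apply]
    change fderiv ℝ (c • fun y => fderiv ℝ u (c • y) v) x = _
    rw [fderiv_const_smul_field, Pi.smul_apply, fderiv_comp_smul (f := fun y => fderiv ℝ u y v)]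
  simp only [lap, hinner, smul_apply, Finset.smul_sum, smul_smul, pow_two]

lemma lap_congr {F : Type*} [NormedAddCommGroup F] [NormedSpace ℝ F] {u v : E3 → F}
    (h : u =ᶠ[𝓝 x] v) : lap u x = lap v x := by
  have hfderiv (e : E3) : (fun y => fderiv ℝ u y e) =ᶠ[𝓝 x] fun y => fderiv ℝ v y e :=
    h.fderiv.fun_comp fun L => L e
  exact Finset.sum_congr rfl fun i _ => by rw [(hfderiv _).fderiv_eq]

lemma BlockSummable.lap_eq_zero_of_two (h : BlockSummable 2 w) (hx : x ∈ extDomain) :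
    lap (harmonicSeries w) x = 0 := by
  have hfderiv (v : E3) : (fun y => fderiv ℝ (harmonicSeries w) y v) =ᶠ[𝓝 x]
      fun y => ∑ d : SignType, harmonicSeries (ladderShift d w) y * ladderForm d v := by
    filter_upwards [isOpen_extDomain.mem_nhds hx] with y hy
    rw [((h.mono one_le_two).hasFDerivAt hy).fderiv]
    simp only [harmonicSeriesDeriv, sum_apply, smul_apply, smul_eq_mul]
  have hfderiv₂ (v : E3) : fderiv ℝ (fun y => fderiv ℝ (harmonicSeries w) y v) x v =
      ∑ d : SignType, ∑ e : SignType, harmonicSeries (ladderShift e (ladderShift d w)) x *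
        ladderForm d v * ladderForm e v := by
    rw [(hfderiv v).fderiv_eq, (HasFDerivAt.fun_sum fun d _ =>
      ((h.shift d).hasFDerivAt hx).mul_const (ladderForm d v)).fderiv]
    simp only [harmonicSeriesDeriv, sum_apply, smul_apply, smul_eq_mul, Finset.mul_sum]
    exact Finset.sum_congr rfl fun d _ => Finset.sum_congr rfl fun e _ => by ring
  have hzero := h.sum_harmonicSeries_ladderShift (extDomain_subset_closedExt hx)
  simp only [lap, Fin.sum_univ_three, hfderiv₂, sum_signType, ladderForm_one_apply,
    ladderForm_neg_one_apply, ladderForm_zero_apply]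
  simp only [Fin.isValue, PiLp.single_eq_same, Complex.ofReal_one, ne_eq, one_ne_zero,
    not_false_eq_true, PiLp.single_eq_of_ne, Complex.ofReal_zero, mul_zero, sub_zero, one_div,
    add_zero, Fin.reduceEq, zero_mul, zero_ne_one, mul_one, zero_sub, zero_add, sub_self, zero_div]
  linear_combination (1 / 2) * hzero + (1 / 4) *
    (harmonicSeries (ladderShift 1 (ladderShift 1 w)) x -
      harmonicSeries (ladderShift 1 (ladderShift (-1) w)) x -
      harmonicSeries (ladderShift (-1) (ladderShift 1 w)) x +
      harmonicSeries (ladderShift (-1) (ladderShift (-1) w)) x) * Complex.I_sq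

theorem BlockSummable.lap_eq_zero (h : BlockSummable 0 w) (hx : x ∈ extDomain) :
    lap (harmonicSeries w) x = 0 := by
  obtain ⟨R, hR, hRx⟩ := exists_dilation_mem_extDomain hx
  have hx0 := ne_zero_of_mem_closedExt (extDomain_subset_closedExt hx)
  rw [lap_congr (harmonicSeries_eventuallyEq_dilate w (one_pos.trans hR) hx0), lap_comp_smul,
    (blockSummable_dilate h hR 2).lap_eq_zero_of_two hRx, smul_zero]

end Harmonicity

section ThreeTermRecurrence

open scoped ComplexConjugate

variable {l : ℕ} {m : ℤ} {x : E3}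

lemma betaLM_nonneg (l : ℕ) (m : ℤ) : 0 ≤ betaLM l m := Real.sqrt_nonneg _

lemma betaLM_natAbs (m : ℤ) : betaLM m.natAbs m = 0 := by
  rw [betaLM, sub_self, zero_mul, zero_div, Real.sqrt_zero]

lemma betaLM_succ_sq (h : m.natAbs ≤ l + 1) :
    betaLM (l + 1) m ^ 2 = ((l : ℝ) + 1 - m.natAbs) * ((l : ℝ) + 1 + m.natAbs) /
      ((2 * (l : ℝ) + 1) * (2 * (l : ℝ) + 3)) := by
  have hm : (0 : ℝ) ≤ (l : ℝ) + 1 - m.natAbs := sub_nonneg.2 (by exact_mod_cast h)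
  have hden : (2 * ((l + 1 : ℕ) : ℝ) - 1) * (2 * ((l + 1 : ℕ) : ℝ) + 1) =
      (2 * (l : ℝ) + 1) * (2 * (l : ℝ) + 3) := by
    push_cast
    ring
  rw [betaLM, hden, Nat.cast_add_one, Real.sq_sqrt (by positivity)]

lemma betaLM_succ_pos (h : m.natAbs ≤ l) : 0 < betaLM (l + 1) m := by
  have hm : (0 : ℝ) < (l : ℝ) + 1 - m.natAbs := sub_pos.2 (by exact_mod_cast Nat.lt_succ_of_le h)
  refine (betaLM_nonneg _ _).lt_of_ne' fun h0 => ?_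
  have hsq := betaLM_succ_sq (h.trans l.le_succ)
  rw [h0, zero_pow two_ne_zero] at hsq
  exact hsq.not_lt (by positivity)

lemma ladderCoeff_zero_eq_neg_betaLM (h : m.natAbs ≤ l) :
    ladderCoeff 0 l m = -((2 * (l : ℝ) + 1) * betaLM (l + 1) m) := by
  have hsq := betaLM_succ_sq (h.trans l.le_succ)
  have hm : (m.natAbs : ℝ) ^ 2 = (m : ℝ) ^ 2 := by
    rw [Nat.cast_natAbs, Int.cast_abs, sq_abs]
  have hrad : (2 * (l : ℝ) + 1) / (2 * l + 3) * (((l : ℝ) + 1 - m) * ((l : ℝ) + 1 + m)) =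
      ((2 * (l : ℝ) + 1) * betaLM (l + 1) m) ^ 2 := by
    rw [mul_pow, hsq]
    field_simp
    linear_combination hm
  rw [ladderCoeff_zero, hrad,
    Real.sqrt_sq (mul_nonneg (by positivity) (betaLM_nonneg _ _))]

lemma harmonicNorm_mul_eq_betaLM_mul_succ (h : m.natAbs ≤ l) :
    harmonicNorm l m.natAbs * ((l : ℝ) + 1 - m.natAbs) =
      (2 * (l : ℝ) + 1) * betaLM (l + 1) m * harmonicNorm (l + 1) m.natAbs := by
  have hbeta : betaLM (l + 1) m.natAbs = betaLM (l + 1) m := by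
    simp only [betaLM, Int.natAbs_natCast]
  rw [harmonicNorm_mul_eq_ladderCoeff_zero_mul h,
    ladderCoeff_zero_eq_neg_betaLM (by rwa [Int.natAbs_natCast]), neg_neg, hbeta]

lemma harmonicNorm_succ_mul_eq_betaLM_mul (h : m.natAbs ≤ l) :
    harmonicNorm (l + 1) m.natAbs * ((l : ℝ) + 1 + m.natAbs) =
      (2 * (l : ℝ) + 3) * betaLM (l + 1) m * harmonicNorm l m.natAbs := by
  have hm : (0 : ℝ) < (l : ℝ) + 1 - m.natAbs := sub_pos.2 (by exact_mod_cast Nat.lt_succ_of_le h)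
  have hsq := betaLM_succ_sq (h.trans l.le_succ)
  rw [eq_div_iff (by positivity)] at hsq
  refine mul_left_cancel₀ hm.ne' ?_
  linear_combination -(2 * (l : ℝ) + 3) * betaLM (l + 1) m *
    harmonicNorm_mul_eq_betaLM_mul_succ h - harmonicNorm (l + 1) m.natAbs * hsq

/-- For `l = 0` the index `l - 1` is harmless, because its factor `betaLM 0 0` vanishes. -/
lemma mul_harmonicNorm_mul_reducedLegendre (h : m.natAbs ≤ l) (t : ℝ) :
    t * (harmonicNorm l m.natAbs * reducedLegendre l m.natAbs t) =
      betaLM (l + 1) m * (harmonicNorm (l + 1) m.natAbs * reducedLegendre (l + 1) m.natAbs t) +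
        betaLM l m * (harmonicNorm (l - 1) m.natAbs * reducedLegendre (l - 1) m.natAbs t) := by
  have hup := harmonicNorm_mul_eq_betaLM_mul_succ h
  rcases h.eq_or_lt with rfl | hlt
  · rw [betaLM_natAbs, reducedLegendre_succ_self]
    linear_combination t * reducedLegendre m.natAbs m.natAbs t * hup
  · obtain ⟨l, rfl⟩ := Nat.exists_eq_succ_of_ne_zero (Nat.ne_zero_of_lt hlt)
    have hdown := harmonicNorm_succ_mul_eq_betaLM_mul (Nat.le_of_lt_succ hlt)
    have hthree := reducedLegendre_three_term l m.natAbs t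
    push_cast at hup
    refine mul_left_cancel₀ (show 2 * (l : ℝ) + 3 ≠ 0 by positivity) ?_
    rw [Nat.succ_eq_add_one, Nat.add_sub_cancel]
    linear_combination harmonicNorm (l + 1) m.natAbs * hthree +
      reducedLegendre (l + 2) m.natAbs t * hup + reducedLegendre l m.natAbs t * hdown

lemma exists_forall_exteriorHarmonic_eq (m : ℤ) (hx : ‖x‖ = 1) :
    ∃ c : ℂ, ∀ l : ℕ, exteriorHarmonic l m x =
      c * ((harmonicNorm l m.natAbs * reducedLegendre l m.natAbs (x 2) : ℝ) : ℂ) := by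
  refine ⟨if 0 ≤ m then ((x 0 : ℂ) + Complex.I * x 1) ^ m.natAbs else
    (-1) ^ m.natAbs * conj (((x 0 : ℂ) + Complex.I * x 1) ^ m.natAbs), fun l => ?_⟩
  simp only [exteriorHarmonic, solidHarmonic, solidFactor, hx, inv_one, one_pow, one_mul, mul_one,
    map_mul, Complex.conj_ofReal, Complex.ofReal_mul]
  split_ifs <;> ring

lemma coord_mul_exteriorHarmonic (h : m.natAbs ≤ l) (hx : ‖x‖ = 1) :
    (x 2 : ℂ) * exteriorHarmonic l m x =
      betaLM (l + 1) m * exteriorHarmonic (l + 1) m x +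
        betaLM l m * exteriorHarmonic (l - 1) m x := by
  obtain ⟨c, hc⟩ := exists_forall_exteriorHarmonic_eq m hx
  have hreal := congrArg Complex.ofReal (mul_harmonicNorm_mul_reducedLegendre h (x 2))
  simp only [hc, Complex.ofReal_add, Complex.ofReal_mul] at hreal ⊢
  linear_combination c * hreal

end ThreeTermRecurrence

section ObliqueDerivative

variable {w : ℕ → ℤ → ℂ} {l : ℕ} {m : ℤ} {x : E3}

/-- The direction `cos θ e_θ - 2 sin θ e_r` of the oblique derivative at a point of the unit
sphere, written in Cartesian coordinates as `e_z - 3 z x`. -/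
def obliqueField (x : E3) : E3 := EuclideanSpace.single 2 1 - (3 * x 2) • x

/-- The coefficients of the degree-raising part of the oblique derivative of a series. For `l = 0`
the index `l - 1` is harmless, because `betaLM 0 0 = 0`. -/
def obliqueRaise (w : ℕ → ℤ → ℂ) (l : ℕ) (m : ℤ) : ℂ :=
  ((l : ℂ) + 1) * betaLM l m * w (l - 1) m

/-- The coefficients of the degree-lowering part of the oblique derivative of a series. -/
def obliqueLower (w : ℕ → ℤ → ℂ) (l : ℕ) (m : ℤ) : ℂ :=
  3 * ((l : ℂ) + 2) * betaLM (l + 1) m * w (l + 1) m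

lemma hasDerivAt_smul_id (x : E3) : HasDerivAt (fun r : ℝ => r • x) x 1 := by
  simpa only [id_eq, one_smul] using (hasDerivAt_id (1 : ℝ)).smul_const x

/-- Euler's relation, as the block is homogeneous of degree `-l - 1`. -/
lemma harmonicBlockDeriv_self (w : ℕ → ℤ → ℂ) (l : ℕ) (hx : x ≠ 0) :
    harmonicBlockDeriv w l x x = -((l : ℂ) + 1) * harmonicBlock w l x := by
  have hchain : HasDerivAt (fun r : ℝ => harmonicBlock w l (r • x))
      (harmonicBlockDeriv w l x x) 1 := by
    have hblock := hasFDerivAt_harmonicBlock w l hx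
    rw [← one_smul ℝ x] at hblock
    have hcomp := hblock.comp_hasDerivAt 1 (hasDerivAt_smul_id x)
    rwa [one_smul] at hcomp
  have hpow : HasDerivAt (fun r : ℝ => ((r⁻¹ ^ (l + 1) : ℝ) : ℂ) * harmonicBlock w l x)
      (-((l : ℂ) + 1) * harmonicBlock w l x) 1 :=
    ((((hasDerivAt_inv (one_ne_zero (α := ℝ))).fun_pow (l + 1)).ofReal_comp).mul_const
      (harmonicBlock w l x)).congr_deriv (by simp)
  refine hchain.unique (hpow.congr_of_eventuallyEq ?_)
  filter_upwards [lt_mem_nhds (one_pos (α := ℝ))] with r hr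
  simp only [harmonicBlock, Finset.mul_sum]
  refine Finset.sum_congr rfl fun m _ => ?_
  rw [exteriorHarmonic_smul l m hr hx]
  push_cast
  ring

lemma harmonicBlockDeriv_single_two (w : ℕ → ℤ → ℂ) (l : ℕ) (x : E3) :
    harmonicBlockDeriv w l x (EuclideanSpace.single 2 1) =
      harmonicBlock (ladderShift 0 w) (l + 1) x := by
  simp [harmonicBlockDeriv, sum_signType, ladderForm_one_apply, ladderForm_neg_one_apply,
    ladderForm_zero_apply]

lemma sum_Icc_neg_succ_eq_of_lt {M : Type*} [AddCommMonoid M] {g : ℤ → M}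
    (hg : ∀ m : ℤ, l < m.natAbs → g m = 0) :
    ∑ m ∈ Finset.Icc (-((l + 1 : ℕ) : ℤ)) (l + 1 : ℕ), g m =
      ∑ m ∈ Finset.Icc (-(l : ℤ)) l, g m := by
  simpa only [SignType.coe_zero, add_zero] using
    sum_Icc_succ_eq_sum_Icc_add 0 l fun m hm => hg m (by simpa using hm)

lemma harmonicBlock_obliqueRaise_zero (w : ℕ → ℤ → ℂ) (x : E3) :
    harmonicBlock (obliqueRaise w) 0 x = 0 := by
  have hbeta : betaLM 0 0 = 0 := betaLM_natAbs 0
  simp [harmonicBlock, obliqueRaise, hbeta]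

lemma harmonicBlock_obliqueRaise_succ (w : ℕ → ℤ → ℂ) (l : ℕ) (x : E3) :
    harmonicBlock (obliqueRaise w) (l + 1) x = ∑ m ∈ Finset.Icc (-(l : ℤ)) l,
      w l m * (((l : ℂ) + 2) * betaLM (l + 1) m * exteriorHarmonic (l + 1) m x) := by
  rw [harmonicBlock, sum_Icc_neg_succ_eq_of_lt fun m hm => ?_]
  · refine Finset.sum_congr rfl fun m _ => ?_
    rw [obliqueRaise, Nat.add_sub_cancel]
    push_cast
    ring
  · rcases (Nat.succ_le_of_lt hm).eq_or_lt with heq | hlt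
    · rw [obliqueRaise, ← Nat.succ_eq_add_one, heq, betaLM_natAbs]
      simp
    · rw [exteriorHarmonic_eq_zero_of_lt hlt, mul_zero]

lemma harmonicBlock_obliqueLower (w : ℕ → ℤ → ℂ) (l : ℕ) (x : E3) :
    harmonicBlock (obliqueLower w) l x =
      ∑ m ∈ Finset.Icc (-((l + 1 : ℕ) : ℤ)) (l + 1 : ℕ),
        w (l + 1) m * (3 * ((l : ℂ) + 2) * betaLM (l + 1) m * exteriorHarmonic l m x) := by
  rw [sum_Icc_neg_succ_eq_of_lt fun m hm => by
    rw [exteriorHarmonic_eq_zero_of_lt hm, mul_zero, mul_zero]]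
  refine Finset.sum_congr rfl fun m _ => ?_
  rw [obliqueLower]
  ring

lemma harmonicBlockDeriv_obliqueField (w : ℕ → ℤ → ℂ) (l : ℕ) (hx : ‖x‖ = 1) :
    harmonicBlockDeriv w l x (obliqueField x) = harmonicBlock (obliqueRaise w) (l + 1) x +
      ∑ m ∈ Finset.Icc (-(l : ℤ)) l,
        w l m * (3 * ((l : ℂ) + 1) * betaLM l m * exteriorHarmonic (l - 1) m x) := by
  have hx0 : x ≠ 0 := norm_pos_iff.1 (hx ▸ one_pos)
  rw [obliqueField, map_sub, map_smul, harmonicBlockDeriv_single_two,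
    harmonicBlockDeriv_self w l hx0, harmonicBlock_ladderShift_succ,
    harmonicBlock_obliqueRaise_succ, harmonicBlock, Complex.real_smul, Finset.mul_sum,
    Finset.mul_sum, ← Finset.sum_sub_distrib, ← Finset.sum_add_distrib]
  refine Finset.sum_congr rfl fun m hm => ?_
  have hml := mem_Icc_neg_iff_natAbs_le.1 hm
  rw [ladderCoeff_zero_eq_neg_betaLM hml, SignType.coe_zero, add_zero]
  push_cast
  linear_combination 3 * ((l : ℂ) + 1) * w l m * coord_mul_exteriorHarmonic hml hx

lemma harmonicBlockDeriv_zero_obliqueField (w : ℕ → ℤ → ℂ) (hx : ‖x‖ = 1) :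
    harmonicBlockDeriv w 0 x (obliqueField x) = harmonicBlock (obliqueRaise w) 1 x := by
  have hbeta : betaLM 0 0 = 0 := betaLM_natAbs 0
  rw [harmonicBlockDeriv_obliqueField w 0 hx]
  simp [hbeta]

lemma harmonicBlockDeriv_succ_obliqueField (w : ℕ → ℤ → ℂ) (l : ℕ) (hx : ‖x‖ = 1) :
    harmonicBlockDeriv w (l + 1) x (obliqueField x) =
      harmonicBlock (obliqueRaise w) (l + 2) x + harmonicBlock (obliqueLower w) l x := by
  rw [harmonicBlockDeriv_obliqueField w (l + 1) hx, harmonicBlock_obliqueLower,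
    Nat.add_sub_cancel]
  refine congrArg _ (Finset.sum_congr rfl fun m _ => ?_)
  push_cast
  ring

lemma blockBound_le_of_norm_le {w' : ℕ → ℤ → ℂ} {C : ℝ} (hC : 0 ≤ C)
    (h : ∀ m : ℤ, m.natAbs ≤ l → ‖w l m‖ ≤ C * ‖w' l m‖) :
    blockBound w l ≤ C * blockBound w' l := by
  have hsum : ∑ m ∈ Finset.Icc (-(l : ℤ)) l, ‖w l m‖ ^ 2 ≤
      C ^ 2 * ∑ m ∈ Finset.Icc (-(l : ℤ)) l, ‖w' l m‖ ^ 2 := by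
    rw [Finset.mul_sum]
    refine Finset.sum_le_sum fun m hm => ?_
    rw [← mul_pow]
    exact pow_le_pow_left₀ (norm_nonneg _) (h m (mem_Icc_neg_iff_natAbs_le.1 hm)) 2
  rw [blockBound, blockBound, ← Real.sqrt_sq hC, ← Real.sqrt_mul (sq_nonneg C), mul_left_comm]
  gcongr

lemma norm_obliqueRaise_le (w : ℕ → ℤ → ℂ) {l : ℕ} {m : ℤ} (h : m.natAbs ≤ l) :
    ‖obliqueRaise w l m‖ ≤ 2 * ‖ladderShift 0 w l m‖ := by
  rcases h.eq_or_lt with rfl | hlt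
  · simp [obliqueRaise, betaLM_natAbs]
  · obtain ⟨l, rfl⟩ := Nat.exists_eq_succ_of_ne_zero (Nat.ne_zero_of_lt hlt)
    have hml := Nat.le_of_lt_succ hlt
    have hshift := ladderShift_succ_add 0 w hml
    rw [SignType.coe_zero, add_zero] at hshift
    have hl : ‖((l + 1 : ℕ) : ℂ) + 1‖ = (l : ℝ) + 2 := by
      rw [← Nat.cast_add_one, Complex.norm_natCast]
      push_cast
      ring
    rw [hshift, obliqueRaise, Nat.succ_eq_add_one, Nat.add_sub_cancel,
      ladderCoeff_zero_eq_neg_betaLM hml, norm_mul, norm_mul, norm_mul, hl, Complex.norm_real,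
      Complex.norm_real, norm_neg, norm_mul,
      Real.norm_of_nonneg (by positivity : 0 ≤ 2 * (l : ℝ) + 1), ← mul_assoc, ← mul_assoc]
    gcongr
    linarith [(Nat.cast_nonneg l : (0 : ℝ) ≤ l)]

lemma blockSummable_obliqueRaise (h : BlockSummable 1 w) : BlockSummable 0 (obliqueRaise w) := by
  refine Summable.of_nonneg_of_le (fun l => mul_nonneg (by positivity) (blockBound_nonneg _ l))
    (fun l => ?_) (Summable.mul_left 2 (h.shift 0))
  simpa only [pow_zero, one_mul] using
    blockBound_le_of_norm_le zero_le_two fun m hm => norm_obliqueRaise_le w hm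

theorem BlockSummable.hasSum_harmonicBlock_oblique (h : BlockSummable 1 w) (hx : ‖x‖ = 1) :
    HasSum (fun l => harmonicBlock (fun l m => obliqueRaise w l m + obliqueLower w l m) l x)
      (harmonicSeriesDeriv w x (obliqueField x)) := by
  have hderiv : HasSum (fun l => harmonicBlockDeriv w l x (obliqueField x))
      (harmonicSeriesDeriv w x (obliqueField x)) :=
    (h.hasSum_harmonicBlockDeriv hx.ge).mapL (ContinuousLinearMap.apply ℝ ℂ (obliqueField x))
  have hraise := ((blockSummable_obliqueRaise h).summable_harmonicBlock hx.ge).hasSum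
  have hraise_succ := (hasSum_nat_add_iff' 1).2 hraise
  have hlower := (hasSum_nat_add_iff' 1).2 (hderiv.sub hraise_succ)
  simp only [Finset.sum_range_one, harmonicBlock_obliqueRaise_zero,
    harmonicBlockDeriv_zero_obliqueField w hx, harmonicBlockDeriv_succ_obliqueField w _ hx,
    add_sub_cancel_left, sub_zero, zero_add, sub_self] at hlower
  convert hraise.add hlower using 1
  · funext l
    simp only [harmonicBlock, add_mul, Finset.sum_add_distrib]
  · ring

end ObliqueDerivative

section BoundaryDerivatives

variable {F : Type*} [NormedAddCommGroup F] [NormedSpace ℝ F] {u : E3 → F} {L : E3 →L[ℝ] F}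
  {θ φ : ℝ}

lemma sphCoord_mem_closedExt (θ φ : ℝ) : sphCoord θ φ ∈ closedExt := (norm_sphCoord θ φ).ge

lemma smul_sphCoord_mem_closedExt {r : ℝ} (hr : 1 ≤ r) (θ φ : ℝ) :
    r • sphCoord θ φ ∈ closedExt := by
  change 1 ≤ ‖_‖
  rwa [norm_smul, norm_sphCoord, mul_one, Real.norm_of_nonneg (zero_le_one.trans hr)]

/-- The unit vector `e_θ` pointing in the direction of increasing latitude. -/
def latitudeVector (θ φ : ℝ) : E3 := !₂[-sin θ * cos φ, -sin θ * sin φ, cos θ]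

lemma hasDerivAt_sphCoord (θ φ : ℝ) :
    HasDerivAt (fun t => sphCoord t φ) (latitudeVector θ φ) θ := by
  have hsplit : (fun t => sphCoord t φ) =
      fun t => cos t • (!₂[cos φ, sin φ, 0] : E3) + sin t • (!₂[0, 0, 1] : E3) := by
    ext t i
    fin_cases i <;> simp [sphCoord]
  rw [hsplit]
  refine (((hasDerivAt_cos θ).smul_const _).add ((hasDerivAt_sin θ).smul_const _)).congr_deriv ?_
  ext i
  fin_cases i <;> simp [latitudeVector]

lemma radialDeriv_eq_of_hasFDerivWithinAt
    (hu : HasFDerivWithinAt u L closedExt (sphCoord θ φ)) :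
    radialDeriv u θ φ = L (sphCoord θ φ) := by
  rw [← one_smul ℝ (sphCoord θ φ)] at hu
  have hcomp := hu.comp_hasDerivWithinAt 1 (hasDerivAt_smul_id (sphCoord θ φ)).hasDerivWithinAt
    fun r hr => smul_sphCoord_mem_closedExt hr θ φ
  exact hcomp.derivWithin (uniqueDiffOn_Ici 1 1 Set.self_mem_Ici)

lemma thetaDeriv_eq_of_hasFDerivWithinAt
    (hu : HasFDerivWithinAt u L closedExt (sphCoord θ φ)) :
    thetaDeriv u θ φ = L (latitudeVector θ φ) := by
  have hcomp := hu.comp_hasDerivWithinAt θ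
    ((hasDerivAt_sphCoord θ φ).hasDerivWithinAt (s := Set.univ))
    fun t _ => sphCoord_mem_closedExt t φ
  exact (hasDerivWithinAt_univ.1 hcomp).deriv

lemma obliqueField_sphCoord (θ φ : ℝ) :
    obliqueField (sphCoord θ φ) =
      (-2 * sin θ) • sphCoord θ φ + cos θ • latitudeVector θ φ := by
  have hone := sin_sq_add_cos_sq θ
  ext i
  fin_cases i <;> simp [obliqueField, sphCoord, latitudeVector]
  · ring
  · ring
  · linear_combination -hone

lemma oblique_eq_of_hasFDerivWithinAt {v : E3 → ℂ} {L : E3 →L[ℝ] ℂ}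
    (hv : HasFDerivWithinAt v L closedExt (sphCoord θ φ)) :
    -2 * (sin θ : ℂ) * radialDeriv v θ φ + (cos θ : ℂ) * thetaDeriv v θ φ =
      L (obliqueField (sphCoord θ φ)) := by
  rw [radialDeriv_eq_of_hasFDerivWithinAt hv, thetaDeriv_eq_of_hasFDerivWithinAt hv,
    obliqueField_sphCoord, map_add, map_smul, map_smul, Complex.real_smul, Complex.real_smul]
  push_cast
  ring

end BoundaryDerivatives

section SolutionCoefficients

variable {w : ℕ → ℤ → ℂ} {f : ℝ → ℝ → ℂ} {h : ℝ → ℂ} {l : ℕ} {m : ℤ} {x : E3}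

lemma BlockSummable.hasSum_exteriorHarmonic (hw : BlockSummable 0 w) (hx : x ∈ closedExt) :
    HasSum (fun p : ℕ × ℤ => w p.1 p.2 * exteriorHarmonic p.1 p.2 x) (harmonicSeries w x) := by
  have hzero (l : ℕ) : ∀ m ∉ Finset.Icc (-(l : ℤ)) l, w l m * exteriorHarmonic l m x = 0 :=
    fun m hm => by
      rw [exteriorHarmonic_eq_zero_of_lt
        (not_le.1 fun hle => hm (mem_Icc_neg_iff_natAbs_le.2 hle)), mul_zero]
  have hzero_norm (l : ℕ) : ∀ m ∉ Finset.Icc (-(l : ℤ)) l, ‖w l m * exteriorHarmonic l m x‖ = 0 :=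
    fun m hm => norm_eq_zero.2 (hzero l m hm)
  have hsummable : Summable fun p : ℕ × ℤ => w p.1 p.2 * exteriorHarmonic p.1 p.2 x := by
    refine Summable.of_norm ((summable_prod_of_nonneg fun p => norm_nonneg _).2
      ⟨fun l => summable_of_ne_finset_zero (hzero_norm l),
        Summable.of_nonneg_of_le (fun l => tsum_nonneg fun _ => norm_nonneg _) (fun l => ?_)
          hw.summable_blockBound⟩)
    rw [tsum_eq_sum (hzero_norm l)]
    exact (sum_norm_mul_exteriorHarmonic_le w l (ne_zero_of_mem_closedExt hx)).trans
      (mul_le_of_le_one_right (blockBound_nonneg w l)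
        (pow_le_one₀ (by positivity) (inv_norm_le_one_of_mem_closedExt hx)))
  have hfiber : HasSum (fun l => harmonicBlock w l x) _ :=
    hsummable.hasSum.prod_fiberwise fun l => hasSum_sum_of_ne_finset_zero (hzero l)
  rw [harmonicSeries, hfiber.tsum_eq]
  exact hsummable.hasSum

/-- The coefficients `b_l^m + c_l^m` of the series solution. -/
def solutionCoeff (f : ℝ → ℝ → ℂ) (h : ℝ → ℂ) (l : ℕ) (m : ℤ) : ℂ := bCoef f l m + cCoef f h l m

lemma vFun_eq_harmonicSeries (hw : BlockSummable 0 (solutionCoeff f h)) (hx : x ∈ closedExt) :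
    vFun f h x = harmonicSeries (solutionCoeff f h) x := by
  rw [← (hw.hasSum_exteriorHarmonic hx).tsum_eq, vFun]
  refine tsum_congr fun p => ?_
  rw [mul_assoc, exteriorHarmonic_eq_Ylm _ _ (ne_zero_of_mem_closedExt hx), solutionCoeff]

lemma gammaLM_natAbs (m : ℤ) : gammaLM m.natAbs m = 0 := by
  rw [gammaLM, betaLM_natAbs, mul_zero, neg_zero, zero_div]

lemma mul_gammaLM (h : m.natAbs ≤ l) :
    3 * ((l : ℝ) + 2) * betaLM (l + 1) m * gammaLM l m = -(((l : ℝ) + 1) * betaLM l m) := by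
  have hbeta := betaLM_succ_pos h
  rw [gammaLM, mul_div_cancel₀ _ (by positivity)]

lemma mul_aCoef (f : ℝ → ℝ → ℂ) (h : m.natAbs ≤ l) :
    3 * ((l : ℂ) + 2) * betaLM (l + 1) m * aCoef f l m = flCoeff f l m / 2 := by
  have hbeta : (betaLM (l + 1) m : ℂ) ≠ 0 := by exact_mod_cast (betaLM_succ_pos h).ne'
  have hl : (l : ℂ) + 2 ≠ 0 := by exact_mod_cast (l + 1).succ_ne_zero
  rw [aCoef]
  push_cast
  field_simp
  ring

lemma bCoef_succ (f : ℝ → ℝ → ℂ) (h : m.natAbs ≤ l) :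
    bCoef f (l + 1) m = gammaLM l m * bCoef f (l - 1) m + aCoef f l m := by
  obtain ⟨n, rfl⟩ := Nat.exists_eq_add_of_le h
  rw [bCoef, show m.natAbs + n + 1 + 1 - m.natAbs = n + 2 by omega, bSeq]
  rcases n with _ | n
  · rw [add_zero, gammaLM_natAbs, Complex.ofReal_zero, zero_mul, zero_mul]
  · rw [bCoef, show m.natAbs + (n + 1) - 1 + 1 - m.natAbs = n + 1 by omega]

lemma cCoef_succ (f : ℝ → ℝ → ℂ) (h : ℝ → ℂ) (hm : m.natAbs ≤ l) :
    cCoef f h (l + 1) m = gammaLM l m * cCoef f h (l - 1) m := by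
  rcases hm.eq_or_lt with rfl | hlt
  · rw [gammaLM_natAbs, Complex.ofReal_zero, zero_mul, cCoef, if_neg (by omega)]
  by_cases heven : (l - 1 - m.natAbs) % 2 = 0
  · obtain ⟨k, hk⟩ := Nat.dvd_of_mod_eq_zero heven
    obtain rfl : l = m.natAbs + 2 * k + 1 := by omega
    rw [cCoef, cCoef, if_pos (by omega), if_pos (by omega),
      show (m.natAbs + 2 * k + 1 + 1 - m.natAbs) / 2 = k + 1 by omega,
      show (m.natAbs + 2 * k + 1 - 1 - m.natAbs) / 2 = k by omega, GammaKM,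
      Finset.prod_Icc_succ_top (by omega), ← GammaKM, mul_add_one, ← add_assoc,
      show m.natAbs + 2 * k + 2 - 1 = m.natAbs + 2 * k + 1 by omega]
    push_cast
    ring
  · rw [cCoef, cCoef, if_neg (by omega), if_neg (by omega), mul_zero]

lemma obliqueRaise_add_obliqueLower_solutionCoeff (f : ℝ → ℝ → ℂ) (h : ℝ → ℂ)
    (hm : m.natAbs ≤ l) :
    obliqueRaise (solutionCoeff f h) l m + obliqueLower (solutionCoeff f h) l m =
      flCoeff f l m / 2 := by
  have hgamma := congrArg Complex.ofReal (mul_gammaLM hm)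
  push_cast at hgamma
  simp only [obliqueRaise, obliqueLower, solutionCoeff, bCoef_succ f hm, cCoef_succ f h hm]
  linear_combination (bCoef f (l - 1) m + cCoef f h (l - 1) m) * hgamma + mul_aCoef f hm

theorem hasSum_harmonicBlock_flCoeff_oblique (hw : BlockSummable 1 (solutionCoeff f h))
    (hx : ‖x‖ = 1) :
    HasSum (fun l => harmonicBlock (flCoeff f) l x)
      (2 * harmonicSeriesDeriv (solutionCoeff f h) x (obliqueField x)) := by
  refine ((hw.hasSum_harmonicBlock_oblique hx).mul_left 2).congr_fun fun l => ?_
  rw [harmonicBlock, harmonicBlock, Finset.mul_sum]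
  refine Finset.sum_congr rfl fun m hm => ?_
  rw [obliqueRaise_add_obliqueLower_solutionCoeff f h (mem_Icc_neg_iff_natAbs_le.1 hm)]
  ring

theorem solvesObliqueC_vFun (hw : BlockSummable 1 (solutionCoeff f h))
    (hf : ∀ θ ∈ Set.Icc (-(π / 2)) (π / 2), ∀ φ : ℝ,
      HasSum (fun l => harmonicBlock (flCoeff f) l (sphCoord θ φ)) (f θ φ))
    (hh : ∀ φ : ℝ, harmonicSeries (solutionCoeff f h) (sphCoord 0 φ) = h φ) :
    SolvesObliqueC (vFun f h) f h := by
  have hw₀ := hw.mono zero_le_one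
  have heq : Set.EqOn (vFun f h) (harmonicSeries (solutionCoeff f h)) closedExt :=
    fun x hx => vFun_eq_harmonicSeries hw₀ hx
  have heq_ext := heq.mono extDomain_subset_closedExt
  refine ⟨(hw₀.contDiffOn_extDomain 2).congr heq_ext, hw.contDiffOn_closedExt.congr heq,
    fun x hx => ?_, fun θ hθ φ => ?_, ?_, fun φ => ?_⟩
  · rw [lap_congr (heq_ext.eventuallyEq_of_mem (isOpen_extDomain.mem_nhds hx)),
      hw₀.lap_eq_zero hx]
  · have hmem := sphCoord_mem_closedExt θ φ
    rw [oblique_eq_of_hasFDerivWithinAt ((hw.hasFDerivWithinAt hmem).congr heq (heq hmem)),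
      ← (hasSum_harmonicBlock_flCoeff_oblique hw (norm_sphCoord θ φ)).unique (hf θ hθ φ),
      mul_div_cancel_left₀ _ two_ne_zero]
  · refine hw₀.tendsto_cobounded.congr' ?_
    filter_upwards [(tendsto_norm_cobounded_atTop (E := E3)).eventually_ge_atTop 1] with x hx
    exact (heq hx).symm
  · rw [heq (sphCoord_mem_closedExt 0 φ), hh]

end SolutionCoefficients

section RecurrenceEstimates

variable {l : ℕ} {m : ℤ}

lemma add_one_mul_betaLM_le (h : m.natAbs ≤ l) :
    ((l : ℝ) + 1) * betaLM l m ≤ ((l : ℝ) + 2) * betaLM (l + 1) m := by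
  rcases l with _ | l
  · obtain rfl : m = 0 := by omega
    rw [show betaLM 0 0 = 0 from betaLM_natAbs 0, mul_zero]
    exact mul_nonneg (by positivity) (betaLM_nonneg _ _)
  · refine (le_abs_self _).trans
      (abs_le_of_sq_le_sq ?_ (mul_nonneg (by positivity) (betaLM_nonneg _ _)))
    rw [mul_pow, mul_pow, betaLM_succ_sq h, betaLM_succ_sq (h.trans (l + 1).le_succ),
      ← mul_div_assoc, ← mul_div_assoc]
    push_cast
    rw [div_le_div_iff₀ (by positivity) (by positivity), ← sub_nonneg]
    have hdiff : 0 ≤ (2 * (l : ℝ) + 3) * (((l : ℝ) + 2) ^ 2 * (4 * (l : ℝ) ^ 2 + 12 * l + 4) +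
        (m.natAbs : ℝ) ^ 2 * (4 * (l : ℝ) + 11)) := by positivity
    linear_combination hdiff

lemma abs_gammaLM_le (h : m.natAbs ≤ l) : |gammaLM l m| ≤ 1 / 3 := by
  have hbeta := betaLM_succ_pos h
  rw [gammaLM, abs_div, abs_neg, abs_of_nonneg (mul_nonneg (by positivity) (betaLM_nonneg _ _)),
    abs_of_pos (by positivity), div_le_iff₀ (by positivity)]
  linear_combination add_one_mul_betaLM_le h

lemma gammaLM_nonpos (l : ℕ) (m : ℤ) : gammaLM l m ≤ 0 :=
  div_nonpos_of_nonpos_of_nonneg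
    (neg_nonpos.2 (mul_nonneg (by positivity) (betaLM_nonneg _ _)))
    (mul_nonneg (by positivity) (betaLM_nonneg _ _))

lemma GammaKM_zero (m : ℤ) : GammaKM m 0 = 1 := rfl

lemma GammaKM_succ (m : ℤ) (k : ℕ) :
    GammaKM m (k + 1) = GammaKM m k * gammaLM (m.natAbs + 2 * k + 1) m := by
  rw [GammaKM, Finset.prod_Icc_succ_top (by omega), ← GammaKM]
  rfl

lemma abs_GammaKM_le (m : ℤ) (k : ℕ) : |GammaKM m k| ≤ (1 / 3) ^ k := by
  induction k with
  | zero => rw [GammaKM_zero, abs_one, pow_zero]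
  | succ k ih =>
    rw [GammaKM_succ, abs_mul, pow_succ]
    exact mul_le_mul ih (abs_gammaLM_le (by omega)) (abs_nonneg _) (by positivity)

lemma norm_aCoef_sq_mul_le (f : ℝ → ℝ → ℂ) (m : ℤ) (n : ℕ) :
    ‖aCoef f (m.natAbs + n) m‖ ^ 2 * (9 * ((n : ℝ) + 1) * ((m.natAbs : ℝ) + n + 1)) ≤
      ‖flCoeff f (m.natAbs + n) m‖ ^ 2 := by
  have hbeta := betaLM_succ_pos (Nat.le_add_right m.natAbs n)
  have hsq := betaLM_succ_sq (show m.natAbs ≤ m.natAbs + n + 1 by omega)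
  have hden : 9 * ((n : ℝ) + 1) * ((m.natAbs : ℝ) + n + 1) ≤
      (6 * (((m.natAbs + n : ℕ) : ℝ) + 2) * betaLM (m.natAbs + n + 1) m) ^ 2 := by
    rw [mul_pow, hsq, ← mul_div_assoc, le_div_iff₀ (by positivity)]
    push_cast
    have hquad : (2 * ((m.natAbs : ℝ) + n) + 1) * (2 * ((m.natAbs : ℝ) + n) + 3) ≤
        4 * ((m.natAbs : ℝ) + n + 2) ^ 2 := by nlinarith
    calc 9 * ((n : ℝ) + 1) * ((m.natAbs : ℝ) + n + 1) *
          ((2 * ((m.natAbs : ℝ) + n) + 1) * (2 * ((m.natAbs : ℝ) + n) + 3))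
        ≤ 9 * ((n : ℝ) + 1) * ((m.natAbs : ℝ) + n + 1 + m.natAbs) *
          (4 * ((m.natAbs : ℝ) + n + 2) ^ 2) := by
          have hM : (m.natAbs : ℝ) + n + 1 ≤ (m.natAbs : ℝ) + n + 1 + m.natAbs :=
            le_add_of_nonneg_right (Nat.cast_nonneg _)
          gcongr
      _ = _ := by ring
  rw [aCoef, norm_div, Complex.norm_real, Real.norm_of_nonneg (by positivity), div_pow,
    div_mul_eq_mul_div, div_le_iff₀ (by positivity)]
  exact mul_le_mul_of_nonneg_left hden (by positivity)

lemma bCoef_natAbs_add (f : ℝ → ℝ → ℂ) (m : ℤ) (n : ℕ) :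
    bCoef f (m.natAbs + n) m = bSeq f m (n + 1) := by
  rw [bCoef, add_assoc, Nat.add_sub_cancel_left]

lemma norm_bSeq_add_two_le (f : ℝ → ℝ → ℂ) (m : ℤ) (n : ℕ) :
    ‖bSeq f m (n + 2)‖ ≤ ‖bSeq f m n‖ / 3 + ‖aCoef f (m.natAbs + n) m‖ := by
  refine (norm_add_le _ _).trans (add_le_add_left ?_ _)
  rw [norm_mul, Complex.norm_real, Real.norm_eq_abs, div_eq_inv_mul, ← one_div]
  exact mul_le_mul_of_nonneg_right (abs_gammaLM_le (Nat.le_add_right _ _)) (norm_nonneg _)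

lemma sum_range_add_two_le_two_mul {z x : ℕ → ℝ} (hz : ∀ n, 0 ≤ z n) (h0 : z 0 = 0)
    (h1 : z 1 = 0) (hrec : ∀ n, z (n + 2) ≤ z n / 2 + x n) (N : ℕ) :
    ∑ n ∈ Finset.range (N + 2), z n ≤ 2 * ∑ n ∈ Finset.range N, x n := by
  have hshift : ∑ n ∈ Finset.range (N + 2), z n = ∑ n ∈ Finset.range N, z (n + 2) := by
    rw [Finset.sum_range_succ', Finset.sum_range_succ', h0, zero_add, h1, add_zero, add_zero]
  have hstep : ∑ n ∈ Finset.range N, z (n + 2) ≤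
      (∑ n ∈ Finset.range N, z n) / 2 + ∑ n ∈ Finset.range N, x n := by
    rw [Finset.sum_div, ← Finset.sum_add_distrib]
    exact Finset.sum_le_sum fun n _ => hrec n
  have hmono : ∑ n ∈ Finset.range N, z n ≤ ∑ n ∈ Finset.range (N + 2), z n :=
    Finset.sum_le_sum_of_subset_of_nonneg (Finset.range_mono (Nat.le_add_right N 2))
      fun n _ _ => hz n
  linarith

end RecurrenceEstimates

section WeightedSummability

/-- Square summability of a family of coefficients against the weights `(l + 1)^(2t)` of
`H^t(𝕊)`. The nontrivial degrees of the order `m` are enumerated as `l = |m| + n`. -/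
def SobolevSummable (t : ℝ) (w : ℕ → ℤ → ℂ) : Prop :=
  Summable fun p : ℤ × ℕ =>
    ((p.1.natAbs : ℝ) + p.2 + 1) ^ (2 * t) * ‖w (p.1.natAbs + p.2) p.1‖ ^ 2

variable {t : ℝ} {w w' : ℕ → ℤ → ℂ}

lemma SobolevSummable.add (hw : SobolevSummable t w) (hw' : SobolevSummable t w') :
    SobolevSummable t fun l m => w l m + w' l m := by
  refine Summable.of_nonneg_of_le (fun p => by positivity) (fun p => ?_)
    ((Summable.add hw hw').mul_left 2)
  have hsq : ‖w (p.1.natAbs + p.2) p.1 + w' (p.1.natAbs + p.2) p.1‖ ^ 2 ≤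
      2 * (‖w (p.1.natAbs + p.2) p.1‖ ^ 2 + ‖w' (p.1.natAbs + p.2) p.1‖ ^ 2) :=
    (pow_le_pow_left₀ (norm_nonneg _) (norm_add_le _ _) 2).trans add_sq_le
  rw [← mul_add, mul_left_comm]
  exact mul_le_mul_of_nonneg_left hsq (by positivity)

lemma injective_natAbs_add : Function.Injective fun p : ℤ × ℕ => (p.1.natAbs + p.2, p.1) := by
  rintro ⟨m, n⟩ ⟨m', n'⟩ h
  obtain ⟨hadd, hm : m = m'⟩ := Prod.mk.inj h
  subst hm
  exact Prod.ext rfl (Nat.add_left_cancel hadd)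

lemma hasSum_natAbs_add_iff {M : Type*} [AddCommMonoid M] [TopologicalSpace M] {g : ℕ × ℤ → M}
    {a : M} (hg : ∀ p, p.1 < p.2.natAbs → g p = 0) :
    HasSum (fun p : ℤ × ℕ => g (p.1.natAbs + p.2, p.1)) a ↔ HasSum g a :=
  injective_natAbs_add.hasSum_iff fun p hp => hg p (not_le.1 fun hle => hp
    ⟨(p.2, p.1 - p.2.natAbs), Prod.ext (Nat.add_sub_cancel' hle) rfl⟩)

lemma SobolevSummable.summable_sum_Icc (hw : SobolevSummable t w) :
    Summable fun l : ℕ =>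
      ((l : ℝ) + 1) ^ (2 * t) * ∑ m ∈ Finset.Icc (-(l : ℤ)) l, ‖w l m‖ ^ 2 := by
  let g : ℕ × ℤ → ℝ := fun p =>
    if p.2.natAbs ≤ p.1 then ((p.1 : ℝ) + 1) ^ (2 * t) * ‖w p.1 p.2‖ ^ 2 else 0
  have hg : Summable g := by
    refine ((hasSum_natAbs_add_iff fun p hp => if_neg hp.not_ge).1
      (Summable.congr hw fun p => ?_).hasSum).summable
    rw [if_pos (Nat.le_add_right _ _), Nat.cast_add]
  have hg_nonneg : 0 ≤ g := fun p => by
    dsimp only [g]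
    split_ifs <;> positivity
  refine ((summable_prod_of_nonneg hg_nonneg).1 hg).2.congr fun l => ?_
  rw [tsum_eq_sum fun m hm => if_neg (mem_Icc_neg_iff_natAbs_le.not.1 hm), Finset.mul_sum]
  exact Finset.sum_congr rfl fun m hm => if_pos (mem_Icc_neg_iff_natAbs_le.1 hm)

lemma summable_add_one_rpow {p : ℝ} (hp : p < -1) : Summable fun n : ℕ => ((n : ℝ) + 1) ^ p := by
  simpa only [Nat.cast_add_one] using
    (summable_nat_add_iff 1).2 (Real.summable_nat_rpow.2 hp)

theorem SobolevSummable.blockSummable (hw : SobolevSummable t w) {k : ℕ} (hk : (k : ℝ) + 1 < t) :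
    BlockSummable k w := by
  refine Summable.of_nonneg_of_le
    (fun l => mul_nonneg (by positivity) (blockBound_nonneg w l)) (fun l => ?_)
    ((summable_add_one_rpow (p := 2 * k + 1 - 2 * t) (by linarith)).add hw.summable_sum_Icc)
  have hl : (0 : ℝ) < l + 1 := by positivity
  set S := ∑ m ∈ Finset.Icc (-(l : ℤ)) l, ‖w l m‖ ^ 2
  have hS0 : 0 ≤ S := Finset.sum_nonneg fun _ _ => sq_nonneg _
  have hsplit : ((l : ℝ) + 1) ^ (2 * k + 1) =
      ((l : ℝ) + 1) ^ (2 * k + 1 - 2 * t) * ((l : ℝ) + 1) ^ (2 * t) := by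
    rw [← Real.rpow_add hl, sub_add_cancel]
    exact_mod_cast (Real.rpow_natCast ((l : ℝ) + 1) (2 * k + 1)).symm
  have ha : 0 ≤ ((l : ℝ) + 1) ^ (2 * k + 1 - 2 * t) := by positivity
  have hb : 0 ≤ ((l : ℝ) + 1) ^ (2 * t) * S := mul_nonneg (by positivity) hS0
  refine (le_abs_self _).trans (abs_le_of_sq_le_sq ?_ (add_nonneg ha hb))
  calc (((l : ℝ) + 1) ^ k * blockBound w l) ^ 2
      = ((l : ℝ) + 1) ^ (2 * k + 1) * S := by
        rw [blockBound, mul_pow, Real.sq_sqrt (mul_nonneg hl.le hS0)]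
        ring
    _ = ((l : ℝ) + 1) ^ (2 * k + 1 - 2 * t) * (((l : ℝ) + 1) ^ (2 * t) * S) := by
        rw [hsplit, mul_assoc]
    _ ≤ _ := by nlinarith only [ha, hb, mul_nonneg ha hb]

lemma summable_prod_of_sum_range_le {ι : Type*} {g g' : ι × ℕ → ℝ} (hg : 0 ≤ g) (hg' : 0 ≤ g')
    (hsum : Summable g') {C : ℝ}
    (h : ∀ i N, ∑ n ∈ Finset.range N, g (i, n) ≤ C * ∑' n, g' (i, n)) : Summable g := by
  refine (summable_prod_of_nonneg hg).2
    ⟨fun i => summable_of_sum_range_le (fun n => hg (i, n)) (h i), ?_⟩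
  exact Summable.of_nonneg_of_le (fun i => tsum_nonneg fun n => hg (i, n))
    (fun i => Real.tsum_le_of_sum_range_le (fun n => hg (i, n)) (h i))
    (((summable_prod_of_nonneg hg').1 hsum).2.mul_left C)

end WeightedSummability

section ParticularCoefficients

variable {s t σ : ℝ}

/-- The summand of `‖f‖²_{H^s(𝕊)} + ‖f_φ‖²_{H^{s-1/2}(𝕊)}` belonging to the order `m` and the degree
`|m| + n`, in terms of the coefficients of `f`. -/
def sobolevDensity (s : ℝ) (f : ℝ → ℝ → ℂ) (p : ℤ × ℕ) : ℝ :=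
  ((p.1.natAbs : ℝ) + p.2 + 1) ^ (2 * s) * ‖flCoeff f (p.1.natAbs + p.2) p.1‖ ^ 2 *
    (1 + (p.1.natAbs : ℝ) ^ 2 / ((p.1.natAbs : ℝ) + p.2 + 1))

lemma sobolevDensity_nonneg (s : ℝ) (f : ℝ → ℝ → ℂ) : 0 ≤ sobolevDensity s f := fun p => by
  rw [Pi.zero_apply, sobolevDensity]
  positivity

lemma norm_aCoef_sq_mul_le_sobolevDensity (s : ℝ) (f : ℝ → ℝ → ℂ) (m : ℤ) (n : ℕ) :
    ‖aCoef f (m.natAbs + n) m‖ ^ 2 * (((m.natAbs : ℝ) + n + 1) ^ (2 * s) *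
      (9 * ((n : ℝ) + 1) * (((m.natAbs : ℝ) + n + 1) + (m.natAbs : ℝ) ^ 2))) ≤
      sobolevDensity s f (m, n) := by
  have hfactor : 1 + (m.natAbs : ℝ) ^ 2 / ((m.natAbs : ℝ) + n + 1) =
      ((m.natAbs : ℝ) + n + 1 + (m.natAbs : ℝ) ^ 2) / ((m.natAbs : ℝ) + n + 1) := by
    field_simp
  rw [sobolevDensity, hfactor]
  calc _ = ((m.natAbs : ℝ) + n + 1) ^ (2 * s) * (‖aCoef f (m.natAbs + n) m‖ ^ 2 *
          (9 * ((n : ℝ) + 1) * ((m.natAbs : ℝ) + n + 1))) *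
          (((m.natAbs : ℝ) + n + 1 + (m.natAbs : ℝ) ^ 2) / ((m.natAbs : ℝ) + n + 1)) := by
        field_simp
    _ ≤ _ := by
        gcongr
        exact norm_aCoef_sq_mul_le f m n

lemma rpow_mul_norm_aCoef_sq_le (ht : t ≤ s + 1) (f : ℝ → ℝ → ℂ) (m : ℤ) (n : ℕ) :
    ((m.natAbs : ℝ) + n + 1) ^ (2 * t) * ‖aCoef f (m.natAbs + n) m‖ ^ 2 ≤
      sobolevDensity s f (m, n) := by
  refine le_trans ?_ (norm_aCoef_sq_mul_le_sobolevDensity s f m n)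
  rw [mul_comm]
  have hpow : ((m.natAbs : ℝ) + n + 1) ^ (2 * t) ≤
      ((m.natAbs : ℝ) + n + 1) ^ (2 * s) * ((m.natAbs : ℝ) + n + 1) ^ 2 := by
    rw [← Real.rpow_natCast _ 2, ← Real.rpow_add (by positivity)]
    exact Real.rpow_le_rpow_of_exponent_le (le_add_of_nonneg_left (by positivity))
      (by push_cast; linarith)
  have hsq : ((m.natAbs : ℝ) + n + 1) ^ 2 ≤
      9 * ((n : ℝ) + 1) * (((m.natAbs : ℝ) + n + 1) + (m.natAbs : ℝ) ^ 2) := by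
    nlinarith [mul_nonneg (mul_nonneg m.natAbs.cast_nonneg n.cast_nonneg)
      (m.natAbs.cast_nonneg (α := ℝ)), sq_nonneg (m.natAbs : ℝ), sq_nonneg (n : ℝ)]
  gcongr
  exact hpow.trans (by gcongr)

lemma norm_aCoef_sq_mul_rpow_le (h0 : 0 ≤ σ) (h1 : σ ≤ s) (f : ℝ → ℝ → ℂ) (m : ℤ) (n : ℕ) :
    ((m.natAbs : ℝ) + 1) ^ (2 * (σ + 1)) *
      (((n : ℝ) + 1) ^ (1 + 2 * (s - σ)) * ‖aCoef f (m.natAbs + n) m‖ ^ 2) ≤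
      sobolevDensity s f (m, n) := by
  refine le_trans ?_ (norm_aCoef_sq_mul_le_sobolevDensity s f m n)
  rw [← mul_assoc, mul_comm]
  refine mul_le_mul_of_nonneg_left ?_ (by positivity)
  have hsplit : ((m.natAbs : ℝ) + n + 1) ^ (2 * s) =
      ((m.natAbs : ℝ) + n + 1) ^ (2 * σ) * ((m.natAbs : ℝ) + n + 1) ^ (2 * (s - σ)) := by
    rw [← Real.rpow_add (by positivity), mul_sub, add_sub_cancel]
  have hquad : ((m.natAbs : ℝ) + 1) ^ 2 ≤
      9 * (((m.natAbs : ℝ) + n + 1) + (m.natAbs : ℝ) ^ 2) := by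
    nlinarith [m.natAbs.cast_nonneg (α := ℝ), n.cast_nonneg (α := ℝ)]
  rw [mul_add_one, Real.rpow_add (by positivity), Real.rpow_two, Real.rpow_add (by positivity),
    Real.rpow_one, hsplit]
  calc ((m.natAbs : ℝ) + 1) ^ (2 * σ) * ((m.natAbs : ℝ) + 1) ^ 2 *
        (((n : ℝ) + 1) * ((n : ℝ) + 1) ^ (2 * (s - σ)))
      ≤ ((m.natAbs : ℝ) + n + 1) ^ (2 * σ) *
        (9 * (((m.natAbs : ℝ) + n + 1) + (m.natAbs : ℝ) ^ 2)) *
        (((n : ℝ) + 1) * ((m.natAbs : ℝ) + n + 1) ^ (2 * (s - σ))) := by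
        have hm : (m.natAbs : ℝ) + 1 ≤ (m.natAbs : ℝ) + n + 1 := by
          linarith [n.cast_nonneg (α := ℝ)]
        have hn : (n : ℝ) + 1 ≤ (m.natAbs : ℝ) + n + 1 := by
          linarith [m.natAbs.cast_nonneg (α := ℝ)]
        have : 0 ≤ s - σ := sub_nonneg.2 h1
        gcongr
    _ = _ := by ring

/-- For `20 ≤ x` the weight grows so slowly from `x` to `x + 2` that the factor `1 / 3` in the
recurrence for `bSeq` absorbs it. -/
lemma add_two_rpow_le_two_mul {x : ℝ} (hx : 20 ≤ x) (ht0 : 0 ≤ t) (ht : 2 * t ≤ 5) :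
    (x + 2) ^ (2 * t) ≤ 2 * x ^ (2 * t) := by
  calc (x + 2) ^ (2 * t) ≤ (11 / 10 * x) ^ (2 * t) := by
        gcongr
        linarith
    _ = (11 / 10) ^ (2 * t) * x ^ (2 * t) := Real.mul_rpow (by norm_num) (by linarith)
    _ ≤ (11 / 10) ^ (5 : ℝ) * x ^ (2 * t) := by
        gcongr
        norm_num
    _ ≤ 2 * x ^ (2 * t) := by
        gcongr
        norm_num

lemma rpow_mul_norm_bSeq_sq_add_two_le (ht0 : 0 ≤ t) (ht : 2 * t ≤ 5) (f : ℝ → ℝ → ℂ) (m : ℤ)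
    (n : ℕ) :
    ((m.natAbs : ℝ) + (n + 2 : ℕ) + 20) ^ (2 * t) * ‖bSeq f m (n + 2)‖ ^ 2 ≤
      ((m.natAbs : ℝ) + n + 20) ^ (2 * t) * ‖bSeq f m n‖ ^ 2 / 2 +
        4 * ((m.natAbs : ℝ) + n + 20) ^ (2 * t) * ‖aCoef f (m.natAbs + n) m‖ ^ 2 := by
  have hweight : ((m.natAbs : ℝ) + (n + 2 : ℕ) + 20) ^ (2 * t) ≤
      2 * ((m.natAbs : ℝ) + n + 20) ^ (2 * t) := by
    convert add_two_rpow_le_two_mul (x := (m.natAbs : ℝ) + n + 20)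
      (le_add_of_nonneg_left (by positivity)) ht0 ht using 2
    push_cast
    ring
  have hsq : ‖bSeq f m (n + 2)‖ ^ 2 ≤
      ‖bSeq f m n‖ ^ 2 / 4 + 2 * ‖aCoef f (m.natAbs + n) m‖ ^ 2 := by
    refine (pow_le_pow_left₀ (norm_nonneg _) (norm_bSeq_add_two_le f m n) 2).trans ?_
    nlinarith [sq_nonneg (‖bSeq f m n‖ / 3 - ‖aCoef f (m.natAbs + n) m‖), sq_nonneg ‖bSeq f m n‖]
  calc _ ≤ 2 * ((m.natAbs : ℝ) + n + 20) ^ (2 * t) *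
        (‖bSeq f m n‖ ^ 2 / 4 + 2 * ‖aCoef f (m.natAbs + n) m‖ ^ 2) := by gcongr
    _ = _ := by ring

lemma sum_range_rpow_mul_norm_bCoef_sq_le (ht0 : 0 ≤ t) (ht : 2 * t ≤ 5) (f : ℝ → ℝ → ℂ) (m : ℤ)
    (N : ℕ) :
    ∑ n ∈ Finset.range N,
        ((m.natAbs : ℝ) + n + 1) ^ (2 * t) * ‖bCoef f (m.natAbs + n) m‖ ^ 2 ≤
      2 * ∑ n ∈ Finset.range N,
        4 * ((m.natAbs : ℝ) + n + 20) ^ (2 * t) * ‖aCoef f (m.natAbs + n) m‖ ^ 2 := by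
  set z : ℕ → ℝ := fun n => ((m.natAbs : ℝ) + n + 20) ^ (2 * t) * ‖bSeq f m n‖ ^ 2 with hz
  have hz_nonneg (n : ℕ) : 0 ≤ z n := by positivity
  have hz0 : z 0 = 0 := by simp only [hz, bSeq, norm_zero, zero_pow two_ne_zero, mul_zero]
  have hz1 : z 1 = 0 := by simp only [hz, bSeq, norm_zero, zero_pow two_ne_zero, mul_zero]
  calc _ ≤ ∑ n ∈ Finset.range N, z (n + 1) := by
        refine Finset.sum_le_sum fun n _ => ?_
        rw [bCoef_natAbs_add]
        have hle : (m.natAbs : ℝ) + n + 1 ≤ (m.natAbs : ℝ) + (n + 1 : ℕ) + 20 := by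
          push_cast
          linarith
        dsimp only [z]
        gcongr
    _ = ∑ n ∈ Finset.range (N + 1), z n := by rw [Finset.sum_range_succ', hz0, add_zero]
    _ ≤ ∑ n ∈ Finset.range (N + 2), z n :=
        Finset.sum_le_sum_of_subset_of_nonneg (Finset.range_mono (Nat.le_succ _))
          fun n _ _ => hz_nonneg n
    _ ≤ _ := sum_range_add_two_le_two_mul hz_nonneg hz0 hz1
        (rpow_mul_norm_bSeq_sq_add_two_le ht0 ht f m) N

theorem sobolevSummable_bCoef {f : ℝ → ℝ → ℂ} (ht0 : 0 ≤ t) (ht : 2 * t ≤ 5) (hts : t ≤ s + 1)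
    (hf : Summable (sobolevDensity s f)) : SobolevSummable t (bCoef f) := by
  have hdensity (m : ℤ) : Summable fun n => sobolevDensity s f (m, n) :=
    ((summable_prod_of_nonneg (sobolevDensity_nonneg s f)).1 hf).1 m
  refine summable_prod_of_sum_range_le (C := 2 * (4 * 20 ^ (2 * t))) (fun p => by positivity)
    (sobolevDensity_nonneg s f) hf fun m N => ?_
  have hterm (n : ℕ) :
      4 * ((m.natAbs : ℝ) + n + 20) ^ (2 * t) * ‖aCoef f (m.natAbs + n) m‖ ^ 2 ≤
        4 * 20 ^ (2 * t) * sobolevDensity s f (m, n) := by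
    calc _ ≤ 4 * (20 * ((m.natAbs : ℝ) + n + 1)) ^ (2 * t) *
          ‖aCoef f (m.natAbs + n) m‖ ^ 2 := by
          gcongr
          linarith [m.natAbs.cast_nonneg (α := ℝ), n.cast_nonneg (α := ℝ)]
      _ = 4 * 20 ^ (2 * t) *
          (((m.natAbs : ℝ) + n + 1) ^ (2 * t) * ‖aCoef f (m.natAbs + n) m‖ ^ 2) := by
          rw [Real.mul_rpow (by norm_num) (by positivity)]
          ring
      _ ≤ _ := by
          gcongr
          exact rpow_mul_norm_aCoef_sq_le hts f m n
  calc _ ≤ _ := sum_range_rpow_mul_norm_bCoef_sq_le ht0 ht f m N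
    _ ≤ 2 * ∑ n ∈ Finset.range N, 4 * 20 ^ (2 * t) * sobolevDensity s f (m, n) := by
        exact mul_le_mul_of_nonneg_left (Finset.sum_le_sum fun n _ => hterm n) zero_le_two
    _ = 2 * (4 * 20 ^ (2 * t)) * ∑ n ∈ Finset.range N, sobolevDensity s f (m, n) := by
        rw [← Finset.mul_sum]
        ring
    _ ≤ _ := by
        gcongr
        exact (hdensity m).sum_le_tsum _ fun n _ => sobolevDensity_nonneg s f (m, n)

lemma sum_range_norm_bCoef_le (f : ℝ → ℝ → ℂ) (m : ℤ) (N : ℕ) :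
    ∑ k ∈ Finset.range N, ‖bCoef f (m.natAbs + 2 * k) m‖ ≤
      2 * ∑ n ∈ Finset.range (2 * N), ‖aCoef f (m.natAbs + n) m‖ := by
  have hinj : Set.InjOn (fun k => 2 * k + 1) (Finset.range N : Set ℕ) := fun a _ b _ hab => by
    simpa using hab
  calc _ = ∑ n ∈ (Finset.range N).image fun k => 2 * k + 1, ‖bSeq f m n‖ := by
        rw [Finset.sum_image hinj]
        exact Finset.sum_congr rfl fun k _ => by rw [bCoef_natAbs_add]
    _ ≤ ∑ n ∈ Finset.range (2 * N + 2), ‖bSeq f m n‖ := by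
        refine Finset.sum_le_sum_of_subset_of_nonneg (fun n hn => ?_) fun n _ _ => norm_nonneg _
        simp only [Finset.mem_image, Finset.mem_range] at hn ⊢
        omega
    _ ≤ _ := sum_range_add_two_le_two_mul (z := fun n => ‖bSeq f m n‖)
        (x := fun n => ‖aCoef f (m.natAbs + n) m‖) (fun n => norm_nonneg _) norm_zero norm_zero
        (fun n => (norm_bSeq_add_two_le f m n).trans (by linarith [norm_nonneg (bSeq f m n)])) _

lemma sq_sum_range_le_tsum_mul_sum {p : ℝ} (hp : 1 < p) (y : ℕ → ℝ) (N : ℕ) :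
    (∑ n ∈ Finset.range N, y n) ^ 2 ≤
      (∑' n : ℕ, ((n : ℝ) + 1) ^ (-p)) * ∑ n ∈ Finset.range N, ((n : ℝ) + 1) ^ p * y n ^ 2 := by
  have hcs := Finset.sum_sq_le_sum_mul_sum_of_sq_le_mul (Finset.range N) (r := y)
    (f := fun n : ℕ => ((n : ℝ) + 1) ^ (-p)) (g := fun n => ((n : ℝ) + 1) ^ p * y n ^ 2)
    (fun n _ => by positivity) (fun n _ => by positivity) fun n _ => by
      rw [← mul_assoc, ← Real.rpow_add (by positivity), neg_add_cancel, Real.rpow_zero, one_mul]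
  refine hcs.trans (mul_le_mul_of_nonneg_right ?_ (by positivity))
  exact (summable_add_one_rpow (by linarith)).sum_le_tsum _ fun n _ => by positivity

lemma exists_rpow_mul_sq_sum_range_norm_bCoef_le {f : ℝ → ℝ → ℂ} (h0 : 0 ≤ σ) (h1 : σ < s)
    (hf : Summable (sobolevDensity s f)) :
    ∃ C : ℝ, ∀ (m : ℤ) (N : ℕ), ((m.natAbs : ℝ) + 1) ^ (2 * (σ + 1)) *
      (∑ k ∈ Finset.range N, ‖bCoef f (m.natAbs + 2 * k) m‖) ^ 2 ≤
        C * ∑' n, sobolevDensity s f (m, n) := by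
  have hdensity (m : ℤ) : Summable fun n => sobolevDensity s f (m, n) :=
    ((summable_prod_of_nonneg (sobolevDensity_nonneg s f)).1 hf).1 m
  set Z := ∑' n : ℕ, ((n : ℝ) + 1) ^ (-(1 + 2 * (s - σ)))
  have : 0 ≤ Z := tsum_nonneg fun n => by positivity
  refine ⟨4 * Z, fun m N => ?_⟩
  have hcs := sq_sum_range_le_tsum_mul_sum (p := 1 + 2 * (s - σ)) (by linarith)
    (fun n => ‖aCoef f (m.natAbs + n) m‖) (2 * N)
  calc _ ≤ ((m.natAbs : ℝ) + 1) ^ (2 * (σ + 1)) *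
        (2 * ∑ n ∈ Finset.range (2 * N), ‖aCoef f (m.natAbs + n) m‖) ^ 2 := by
        gcongr
        exact sum_range_norm_bCoef_le f m N
    _ = 4 * (((m.natAbs : ℝ) + 1) ^ (2 * (σ + 1)) *
        (∑ n ∈ Finset.range (2 * N), ‖aCoef f (m.natAbs + n) m‖) ^ 2) := by ring
    _ ≤ 4 * (((m.natAbs : ℝ) + 1) ^ (2 * (σ + 1)) * (Z * ∑ n ∈ Finset.range (2 * N),
        ((n : ℝ) + 1) ^ (1 + 2 * (s - σ)) * ‖aCoef f (m.natAbs + n) m‖ ^ 2)) := by gcongr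
    _ = 4 * Z * ∑ n ∈ Finset.range (2 * N), ((m.natAbs : ℝ) + 1) ^ (2 * (σ + 1)) *
        (((n : ℝ) + 1) ^ (1 + 2 * (s - σ)) * ‖aCoef f (m.natAbs + n) m‖ ^ 2) := by
        rw [← Finset.mul_sum]
        ring
    _ ≤ 4 * Z * ∑ n ∈ Finset.range (2 * N), sobolevDensity s f (m, n) := by
        gcongr with n
        exact norm_aCoef_sq_mul_rpow_le h0 h1.le f m n
    _ ≤ _ := by
        gcongr
        exact (hdensity m).sum_le_tsum _ fun n _ => sobolevDensity_nonneg s f (m, n)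

end ParticularCoefficients

section HomogeneousCoefficients

variable {m : ℤ} {s t σ : ℝ}

/-- The value at the equator of the harmonic of order `m` and degree `|m| + 2k`, up to a sign which
does not depend on `k`. -/
def equatorValue (m : ℤ) (k : ℕ) : ℝ :=
  harmonicNorm (m.natAbs + 2 * k) m.natAbs * reducedLegendre (m.natAbs + 2 * k) m.natAbs 0

lemma exists_forall_PzeroM_eq (m : ℤ) :
    ∃ ε : ℝ, |ε| = 1 ∧ ∀ k, PzeroM m k = ε * equatorValue m k := by
  obtain ⟨c, hc, hfactor⟩ := exists_forall_latitudeFactor_eq m 0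
  rw [sin_zero, zero_pow two_ne_zero, sub_zero, one_pow] at hc
  refine ⟨c, by rw [← abs_one, ← sq_eq_sq_iff_abs_eq_abs, hc, one_pow], fun k => ?_⟩
  rw [equatorValue, ← sin_zero, ← hfactor, PzeroM, latitudeFactor, sin_zero]

lemma equatorValue_zero_pos (m : ℤ) : 0 < equatorValue m 0 :=
  mul_pos (harmonicNorm_pos _ _) (reducedLegendre_self_pos _ _)

lemma equatorValue_succ (m : ℤ) (k : ℕ) :
    equatorValue m (k + 1) =
      -(betaLM (m.natAbs + 2 * k + 1) m / betaLM (m.natAbs + 2 * k + 2) m) * equatorValue m k := by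
  have h := mul_harmonicNorm_mul_reducedLegendre (l := m.natAbs + 2 * k + 1) (m := m) (by omega) 0
  have hbeta : betaLM (m.natAbs + 2 * k + 2) m ≠ 0 := (betaLM_succ_pos (by omega)).ne'
  rw [equatorValue, equatorValue, show m.natAbs + 2 * (k + 1) = m.natAbs + 2 * k + 1 + 1 by ring]
  rw [zero_mul, Nat.add_sub_cancel] at h
  field_simp
  linarith

lemma betaLM_succ_le_betaLM_succ_succ {l : ℕ} (hm : m ≠ 0) (h : m.natAbs ≤ l + 1) :
    betaLM (l + 1) m ≤ betaLM (l + 2) m := by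
  have hone : (1 : ℝ) ≤ m.natAbs := by exact_mod_cast Int.natAbs_pos.2 hm
  refine (abs_le_of_sq_le_sq' ?_ (betaLM_nonneg _ _)).2
  rw [betaLM_succ_sq h, betaLM_succ_sq (h.trans (l + 1).le_succ), Nat.cast_succ,
    div_le_div_iff₀ (by positivity) (by positivity)]
  nlinarith [mul_nonneg (show (0 : ℝ) ≤ 2 * l + 3 by positivity)
    (show (0 : ℝ) ≤ 4 * (m.natAbs : ℝ) ^ 2 - 1 by nlinarith)]

lemma abs_equatorValue_le (hm : m ≠ 0) (k : ℕ) : |equatorValue m k| ≤ equatorValue m 0 := by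
  induction k with
  | zero => exact (abs_of_pos (equatorValue_zero_pos m)).le
  | succ k ih =>
    rw [equatorValue_succ, abs_mul, abs_neg,
      abs_of_nonneg (div_nonneg (betaLM_nonneg _ _) (betaLM_nonneg _ _))]
    exact (mul_le_of_le_one_left (abs_nonneg _) (div_le_one_of_le₀
      (betaLM_succ_le_betaLM_succ_succ hm (by omega)) (betaLM_nonneg _ _))).trans ih

/-- Unlike `abs_equatorValue_le` this covers `m = 0`; it bounds one term of the addition theorem by
the whole sum. -/
lemma abs_equatorValue_le_degree (m : ℤ) (k : ℕ) :
    |equatorValue m k| ≤ 2 * ((m.natAbs : ℝ) + 2 * k) + 1 := by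
  set l := m.natAbs + 2 * k with hl
  have hsq : equatorValue m k ^ 2 ≤ (2 * l + 1) / (4 * π) := by
    rw [← sum_harmonicNorm_sq_mul l 0]
    refine le_of_eq_of_le ?_ (Finset.single_le_sum (fun i _ => by positivity)
      (mem_Icc_neg_iff_natAbs_le.2 (by omega : m.natAbs ≤ l)))
    rw [equatorValue]
    norm_num
    ring
  have hone : (1 : ℝ) ≤ 2 * l + 1 := le_add_of_nonneg_left (by positivity)
  have hcast : 2 * ((m.natAbs : ℝ) + 2 * k) + 1 = 2 * (l : ℝ) + 1 := by rw [hl]; push_cast; ring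
  rw [hcast]
  refine abs_le_of_sq_le_sq ?_ (by positivity)
  calc equatorValue m k ^ 2 ≤ (2 * l + 1) / (4 * π) := hsq
    _ ≤ 2 * l + 1 := div_le_self (by positivity) (by linarith [Real.pi_gt_three])
    _ ≤ (2 * l + 1) ^ 2 := le_self_pow₀ hone two_ne_zero

lemma summable_GammaKM_mul_equatorValue (m : ℤ) :
    Summable fun k => GammaKM m k * equatorValue m k := by
  have hgeom : Summable fun k : ℕ => (1 / 3 : ℝ) ^ k :=
    summable_geometric_of_lt_one (by norm_num) (by norm_num)
  have hgeom' : Summable fun k : ℕ => (k : ℝ) ^ 1 * (1 / 3 : ℝ) ^ k :=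
    summable_pow_mul_geometric_of_norm_lt_one 1 (by norm_num)
  refine Summable.of_norm_bounded
    ((hgeom.mul_left (2 * (m.natAbs : ℝ) + 1)).add (hgeom'.mul_left 4)) fun k => ?_
  calc ‖GammaKM m k * equatorValue m k‖
      ≤ (1 / 3) ^ k * (2 * ((m.natAbs : ℝ) + 2 * k) + 1) := by
        rw [norm_mul]
        exact mul_le_mul (abs_GammaKM_le m k) (abs_equatorValue_le_degree m k) (abs_nonneg _)
          (by positivity)
    _ = _ := by ring

/-- `Γ_k` and the equatorial values alternate in sign simultaneously, so that the series in the
denominator of `aTilde` has no cancellation. -/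
lemma GammaKM_mul_equatorValue_nonneg (m : ℤ) (k : ℕ) : 0 ≤ GammaKM m k * equatorValue m k := by
  induction k with
  | zero => rw [GammaKM_zero, one_mul]; exact (equatorValue_zero_pos m).le
  | succ k ih =>
    rw [equatorValue_succ, GammaKM_succ]
    have hgamma := neg_nonneg.2 (gammaLM_nonpos (m.natAbs + 2 * k + 1) m)
    have hbeta := div_nonneg (betaLM_nonneg (m.natAbs + 2 * k + 1) m)
      (betaLM_nonneg (m.natAbs + 2 * k + 2) m)
    linarith [mul_nonneg (mul_nonneg hgamma hbeta) ih]

lemma equatorValue_zero_le_abs_tsum (m : ℤ) :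
    equatorValue m 0 ≤ |∑' k, GammaKM m k * PzeroM m k| := by
  obtain ⟨ε, hε, hP⟩ := exists_forall_PzeroM_eq m
  have hfactor : ∑' k, GammaKM m k * PzeroM m k = ε * ∑' k, GammaKM m k * equatorValue m k := by
    rw [← tsum_mul_left]
    exact tsum_congr fun k => by rw [hP, mul_left_comm]
  rw [hfactor, abs_mul, hε, one_mul,
    abs_of_nonneg (tsum_nonneg (GammaKM_mul_equatorValue_nonneg m))]
  simpa only [GammaKM_zero, one_mul] using (summable_GammaKM_mul_equatorValue m).le_tsum 0
    fun k _ => GammaKM_mul_equatorValue_nonneg m k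

lemma tsum_GammaKM_mul_PzeroM_ne_zero (m : ℤ) : ∑' k, GammaKM m k * PzeroM m k ≠ 0 :=
  abs_pos.1 ((equatorValue_zero_pos m).trans_le (equatorValue_zero_le_abs_tsum m))

lemma four_pi_mul_sq_succ_self (M : ℕ) :
    4 * π * (harmonicNorm (M + 1) (M + 1) * reducedLegendre (M + 1) (M + 1) 0) ^ 2 =
      (2 * M + 3) / (2 * M + 2) * (4 * π * (harmonicNorm M M * reducedLegendre M M 0) ^ 2) := by
  have hratio : factorialRatio (M + 1) (M + 1) * ((2 * M + 1) * (2 * M + 2)) =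
      factorialRatio M M := by
    rw [factorialRatio, factorialRatio, show M + 1 + (M + 1) = M + M + 1 + 1 by ring,
      Nat.factorial_succ, Nat.factorial_succ, Nat.sub_self, Nat.sub_self]
    push_cast
    field_simp
    ring
  rw [mul_pow, mul_pow, harmonicNorm_sq, harmonicNorm_sq, reducedLegendre_succ_self_succ, ← hratio]
  push_cast
  field_simp
  ring

/-- Source of the quarter derivative by which `h` has to be smoother than in the naive count. -/
lemma sqrt_natAbs_add_one_le (m : ℤ) : √((m.natAbs : ℝ) + 1) ≤ 4 * π * equatorValue m 0 ^ 2 := by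
  have key (M : ℕ) :
      (M : ℝ) + 1 ≤ (4 * π * (harmonicNorm M M * reducedLegendre M M 0) ^ 2) ^ 2 := by
    induction M with
    | zero =>
      rw [mul_pow (harmonicNorm 0 0), harmonicNorm_sq, reducedLegendre_zero_zero,
        factorialRatio_zero]
      field_simp
      norm_num
    | succ M ih =>
      have hstep : ((M : ℝ) + 2) / (M + 1) ≤ ((2 * M + 3) / (2 * M + 2)) ^ 2 := by
        rw [div_pow, div_le_div_iff₀ (by positivity) (by positivity)]
        nlinarith [M.cast_nonneg (α := ℝ)]
      rw [four_pi_mul_sq_succ_self, mul_pow ((2 * (M : ℝ) + 3) / (2 * M + 2))]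
      calc ((M + 1 : ℕ) : ℝ) + 1 = ((M : ℝ) + 2) / (M + 1) * (M + 1) := by
            push_cast
            field_simp
            ring
        _ ≤ _ := by gcongr
  rw [Real.sqrt_le_left (by positivity)]
  exact key m.natAbs

lemma norm_aTilde_le {f : ℝ → ℝ → ℂ} (h : ℝ → ℂ) (hm : m ≠ 0)
    (hb : Summable fun k : ℕ => ‖bCoef f (m.natAbs + 2 * k) m‖) :
    ‖aTilde f h m‖ ≤
      ‖equatorCoeff h m‖ / equatorValue m 0 + ∑' k : ℕ, ‖bCoef f (m.natAbs + 2 * k) m‖ := by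
  obtain ⟨ε, hε, hP⟩ := exists_forall_PzeroM_eq m
  have hpos := equatorValue_zero_pos m
  have hsum : ‖∑' k : ℕ, bCoef f (m.natAbs + 2 * k) m * ((PzeroM m k : ℝ) : ℂ)‖ ≤
      (∑' k : ℕ, ‖bCoef f (m.natAbs + 2 * k) m‖) * equatorValue m 0 := by
    refine tsum_of_norm_bounded (hb.hasSum.mul_right _) fun k => ?_
    rw [norm_mul, Complex.norm_real, hP, Real.norm_eq_abs, abs_mul, hε, one_mul]
    exact mul_le_mul_of_nonneg_left (abs_equatorValue_le hm k) (norm_nonneg _)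
  rw [aTilde, norm_div, Complex.norm_real, Real.norm_eq_abs]
  calc _ ≤ _ / equatorValue m 0 :=
        div_le_div_of_nonneg_left (norm_nonneg _) hpos (equatorValue_zero_le_abs_tsum m)
    _ ≤ (‖equatorCoeff h m‖ + (∑' k : ℕ, ‖bCoef f (m.natAbs + 2 * k) m‖) * equatorValue m 0) /
        equatorValue m 0 :=
        div_le_div_of_nonneg_right ((norm_sub_le _ _).trans (by gcongr)) hpos.le
    _ = _ := by rw [add_div, mul_div_cancel_right₀ _ hpos.ne']

lemma exists_rpow_mul_sq_tsum_norm_bCoef_le {f : ℝ → ℝ → ℂ} (h0 : 0 ≤ σ) (h1 : σ < s)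
    (hf : Summable (sobolevDensity s f)) :
    ∃ C : ℝ, ∀ m : ℤ, (Summable fun k : ℕ => ‖bCoef f (m.natAbs + 2 * k) m‖) ∧
      ((m.natAbs : ℝ) + 1) ^ (2 * (σ + 1)) * (∑' k : ℕ, ‖bCoef f (m.natAbs + 2 * k) m‖) ^ 2 ≤
        C * ∑' n, sobolevDensity s f (m, n) := by
  obtain ⟨C, hbound⟩ := exists_rpow_mul_sq_sum_range_norm_bCoef_le h0 h1 hf
  refine ⟨C, fun m => ?_⟩
  have hpow : 0 < ((m.natAbs : ℝ) + 1) ^ (2 * (σ + 1)) := by positivity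
  have hsqrt (N : ℕ) : ∑ k ∈ Finset.range N, ‖bCoef f (m.natAbs + 2 * k) m‖ ≤
      √(C * ∑' n, sobolevDensity s f (m, n) / ((m.natAbs : ℝ) + 1) ^ (2 * (σ + 1))) := by
    refine Real.le_sqrt_of_sq_le ?_
    rw [tsum_div_const, ← mul_div_assoc, le_div_iff₀ hpow, mul_comm]
    exact hbound m N
  have hsum := summable_of_sum_range_le (fun k => norm_nonneg _) hsqrt
  exact ⟨hsum, le_of_tendsto' ((hsum.hasSum.tendsto_sum_nat.pow 2).const_mul _) (hbound m)⟩

lemma rpow_mul_sq_div_equatorValue_le (hσ : σ ≤ s) (m : ℤ) (x : ℝ) :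
    ((m.natAbs : ℝ) + 1) ^ (2 * (σ + 1)) * (x / equatorValue m 0) ^ 2 ≤
      4 * π * (((m.natAbs : ℝ) + 1) ^ (2 * (s + 3 / 4)) * x ^ 2) := by
  have hpos := equatorValue_zero_pos m
  rw [div_pow, ← mul_div_assoc, div_le_iff₀ (pow_pos hpos 2)]
  have hexp : ((m.natAbs : ℝ) + 1) ^ (2 * (σ + 1)) ≤
      ((m.natAbs : ℝ) + 1) ^ (2 * (s + 3 / 4)) * √((m.natAbs : ℝ) + 1) := by
    rw [Real.sqrt_eq_rpow, ← Real.rpow_add (by positivity)]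
    exact Real.rpow_le_rpow_of_exponent_le (le_add_of_nonneg_left m.natAbs.cast_nonneg)
      (by linarith)
  calc _ ≤ ((m.natAbs : ℝ) + 1) ^ (2 * (s + 3 / 4)) * (4 * π * equatorValue m 0 ^ 2) * x ^ 2 := by
        gcongr
        exact hexp.trans (by gcongr; exact sqrt_natAbs_add_one_le m)
    _ = _ := by ring

lemma summable_rpow_mul_norm_aTilde_sq {f : ℝ → ℝ → ℂ} {h : ℝ → ℂ} (h0 : 0 ≤ σ) (h1 : σ < s)
    (hf : Summable (sobolevDensity s f))
    (hh : Summable fun m : ℤ =>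
      ((m.natAbs : ℝ) + 1) ^ (2 * (s + 3 / 4)) * ‖equatorCoeff h m‖ ^ 2) :
    Summable fun m : ℤ => ((m.natAbs : ℝ) + 1) ^ (2 * (σ + 1)) * ‖aTilde f h m‖ ^ 2 := by
  obtain ⟨C, hC⟩ := exists_rpow_mul_sq_tsum_norm_bCoef_le h0 h1 hf
  have hdensity := ((summable_prod_of_nonneg (sobolevDensity_nonneg s f)).1 hf).2
  refine .of_norm_bounded_eventually ((hh.mul_left (2 * (4 * π))).add
    ((hdensity.mul_left C).mul_left 2)) ?_
  filter_upwards [(Set.finite_singleton (0 : ℤ)).compl_mem_cofinite] with m hm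
  obtain ⟨hsum, hb⟩ := hC m
  rw [Real.norm_of_nonneg (by positivity)]
  calc ((m.natAbs : ℝ) + 1) ^ (2 * (σ + 1)) * ‖aTilde f h m‖ ^ 2
      ≤ ((m.natAbs : ℝ) + 1) ^ (2 * (σ + 1)) * (‖equatorCoeff h m‖ / equatorValue m 0 +
        ∑' k : ℕ, ‖bCoef f (m.natAbs + 2 * k) m‖) ^ 2 := by
        gcongr
        exact norm_aTilde_le h hm hsum
    _ ≤ ((m.natAbs : ℝ) + 1) ^ (2 * (σ + 1)) * (2 * ((‖equatorCoeff h m‖ / equatorValue m 0) ^ 2 +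
        (∑' k : ℕ, ‖bCoef f (m.natAbs + 2 * k) m‖) ^ 2)) := by
        gcongr
        exact add_sq_le
    _ ≤ _ := by linarith [rpow_mul_sq_div_equatorValue_le h1.le m ‖equatorCoeff h m‖]

lemma norm_cCoef_sq_le (f : ℝ → ℝ → ℂ) (h : ℝ → ℂ) (m : ℤ) (n : ℕ) :
    ‖cCoef f h (m.natAbs + n) m‖ ^ 2 ≤ (1 / 3) ^ n * ‖aTilde f h m‖ ^ 2 := by
  rw [cCoef, Nat.add_sub_cancel_left]
  split_ifs with hn
  · rw [norm_mul, mul_pow, Complex.norm_real]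
    gcongr
    calc ‖GammaKM m (n / 2)‖ ^ 2 ≤ ((1 / 3) ^ (n / 2)) ^ 2 :=
          pow_le_pow_left₀ (norm_nonneg _) (abs_GammaKM_le _ _) 2
      _ = (1 / 3) ^ n := by rw [← pow_mul]; congr 1; omega
  · rw [norm_zero, zero_pow two_ne_zero]
    positivity

lemma sobolevSummable_cCoef {f : ℝ → ℝ → ℂ} {h : ℝ → ℂ} (ht0 : 0 ≤ t) (ht : 2 * t ≤ 5)
    (ha : Summable fun m : ℤ => ((m.natAbs : ℝ) + 1) ^ (2 * t) * ‖aTilde f h m‖ ^ 2) :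
    SobolevSummable t (cCoef f h) := by
  have hgeom : Summable fun n : ℕ => ((n : ℝ) + 1) ^ 5 * (1 / 3 : ℝ) ^ n := by
    have hshift := (summable_nat_add_iff (f := fun n : ℕ => (n : ℝ) ^ 5 * (1 / 3 : ℝ) ^ n) 1).2
      (summable_pow_mul_geometric_of_norm_lt_one 5 (by norm_num))
    refine (hshift.mul_left 3).congr fun n => ?_
    rw [pow_succ (1 / 3 : ℝ) n]
    push_cast
    ring
  refine .of_nonneg_of_le (fun p => by positivity) (fun ⟨m, n⟩ => ?_)
    (ha.mul_of_nonneg hgeom (fun m => by positivity) fun n => by positivity)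
  have hweight : ((m.natAbs : ℝ) + n + 1) ^ (2 * t) ≤
      ((m.natAbs : ℝ) + 1) ^ (2 * t) * ((n : ℝ) + 1) ^ 5 := by
    calc ((m.natAbs : ℝ) + n + 1) ^ (2 * t)
        ≤ (((m.natAbs : ℝ) + 1) * ((n : ℝ) + 1)) ^ (2 * t) := by
          gcongr
          linarith [mul_nonneg (m.natAbs.cast_nonneg (α := ℝ)) n.cast_nonneg]
      _ = ((m.natAbs : ℝ) + 1) ^ (2 * t) * ((n : ℝ) + 1) ^ (2 * t) :=
          Real.mul_rpow (by positivity) (by positivity)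
      _ ≤ _ := by
          rw [← Real.rpow_natCast _ 5]
          gcongr
          · exact le_add_of_nonneg_left n.cast_nonneg
          · exact_mod_cast ht
  calc _ ≤ (((m.natAbs : ℝ) + 1) ^ (2 * t) * ((n : ℝ) + 1) ^ 5) *
        ((1 / 3) ^ n * ‖aTilde f h m‖ ^ 2) := by
        gcongr
        exact norm_cCoef_sq_le f h m n
    _ = _ := by ring

/-- The coefficients gain one order over `f`, whence `BlockSummable 1` for every `s > 1`; the bound
`5 / 4` on the auxiliary exponent only serves `add_two_rpow_le_two_mul`. -/
theorem blockSummable_bCoef_solutionCoeff {f : ℝ → ℝ → ℂ} {h : ℝ → ℂ} (hs : 1 < s)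
    (hf : Summable (sobolevDensity s f))
    (hh : Summable fun m : ℤ =>
      ((m.natAbs : ℝ) + 1) ^ (2 * (s + 3 / 4)) * ‖equatorCoeff h m‖ ^ 2) :
    BlockSummable 1 (bCoef f) ∧ BlockSummable 1 (solutionCoeff f h) := by
  obtain ⟨σ, h1, h2⟩ := exists_between (lt_min hs (show (1 : ℝ) < 5 / 4 by norm_num))
  obtain ⟨hσs, hσ⟩ := lt_min_iff.1 h2
  have hb : SobolevSummable (σ + 1) (bCoef f) :=
    sobolevSummable_bCoef (by linarith) (by linarith) (by linarith) hf
  have hc : SobolevSummable (σ + 1) (cCoef f h) :=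
    sobolevSummable_cCoef (by linarith) (by linarith)
      (summable_rpow_mul_norm_aTilde_sq (by linarith) hσs hf hh)
  have hlt : ((1 : ℕ) : ℝ) + 1 < σ + 1 := by push_cast; linarith
  exact ⟨hb.blockSummable hlt, (hb.add hc).blockSummable hlt⟩

end HomogeneousCoefficients

section SphereIntegrals

variable {ψ : ℝ → ℝ → ℂ} {g : ℝ → ℂ}

/-- The measure `cos θ dθ` on the latitudes `[-π/2, π/2]`, the first factor of the surface
measure of the sphere. -/
def latitudeMeasure : Measure ℝ :=
  (volume.restrict (Set.Icc (-(π / 2)) (π / 2))).withDensity fun θ => ENNReal.ofReal (cos θ)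

lemma sphereMeasure_eq_prod :
    sphereMeasure = latitudeMeasure.prod (volume.restrict (Set.Ico (-π) π)) := by
  rw [latitudeMeasure, prod_withDensity_left (by fun_prop), Measure.prod_restrict]
  rfl

lemma latitudeMeasure_le :
    latitudeMeasure ≤ volume.restrict (Set.Icc (-(π / 2)) (π / 2)) := by
  refine (withDensity_mono (Eventually.of_forall fun θ => ?_)).trans_eq withDensity_one
  exact ENNReal.ofReal_le_one.2 (cos_le_one θ)

lemma sphereMeasure_le :
    sphereMeasure ≤ volume.restrict (Set.Icc (-(π / 2)) (π / 2) ×ˢ Set.Icc (-π) π) := by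
  refine (withDensity_mono (Eventually.of_forall fun p => ?_)).trans
    (withDensity_one.trans_le
      (Measure.restrict_mono (Set.prod_mono subset_rfl Set.Ico_subset_Icc_self) le_rfl))
  exact ENNReal.ofReal_le_one.2 (cos_le_one p.1)

instance isFiniteMeasure_latitudeMeasure : IsFiniteMeasure latitudeMeasure :=
  isFiniteMeasure_of_le _ latitudeMeasure_le

instance isFiniteMeasure_sphereMeasure : IsFiniteMeasure sphereMeasure := by
  rw [sphereMeasure_eq_prod]
  infer_instance

lemma integrable_latitudeMeasure_of_continuous (hg : Continuous g) :
    Integrable g latitudeMeasure :=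
  Integrable.mono_measure (hg.continuousOn.integrableOn_compact isCompact_Icc) latitudeMeasure_le

lemma integrable_sphereMeasure_of_continuous {g : ℝ × ℝ → ℂ} (hg : Continuous g) :
    Integrable g sphereMeasure :=
  Integrable.mono_measure
    (hg.continuousOn.integrableOn_compact (isCompact_Icc.prod isCompact_Icc)) sphereMeasure_le

lemma integral_latitudeMeasure {E : Type*} [NormedAddCommGroup E] [NormedSpace ℝ E] (g : ℝ → E) :
    ∫ θ, g θ ∂latitudeMeasure = ∫ θ in (-(π / 2))..(π / 2), cos θ • g θ := by
  rw [latitudeMeasure, integral_withDensity_eq_integral_toReal_smul (by fun_prop) (by simp),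
    intervalIntegral.integral_of_le (by linarith [pi_pos]), ← integral_Icc_eq_integral_Ioc]
  refine setIntegral_congr_fun measurableSet_Icc fun θ hθ => ?_
  simp only [ENNReal.toReal_ofReal (cos_nonneg_of_mem_Icc hθ)]

lemma ae_mem_Icc_latitudeMeasure : ∀ᵐ θ ∂latitudeMeasure, θ ∈ Set.Icc (-(π / 2)) (π / 2) :=
  ae_mono latitudeMeasure_le (ae_restrict_mem measurableSet_Icc)

lemma continuous_assocLegendre (l m : ℕ) : Continuous (assocLegendre l m) := by
  unfold assocLegendre
  refine (continuous_const.mul ?_).mul (Polynomial.continuous _)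
  exact Continuous.rpow_const (by fun_prop) fun _ => Or.inr (by positivity)

lemma continuous_latitudeFactor (l : ℕ) (m : ℤ) : Continuous (latitudeFactor l m) :=
  continuous_const.mul ((continuous_assocLegendre l m.natAbs).comp continuous_sin)

lemma continuous_Ylm (l : ℕ) (m : ℤ) : Continuous fun p : ℝ × ℝ => Ylm l m p.1 p.2 := by
  have := continuous_latitudeFactor l m
  simp only [Ylm_eq]
  fun_prop

lemma exists_forall_norm_Ylm_le (l : ℕ) (m : ℤ) : ∃ C, ∀ θ φ, ‖Ylm l m θ φ‖ ≤ C := by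
  obtain ⟨C, hC⟩ := (isCompact_Icc (a := (-1 : ℝ)) (b := 1)).exists_bound_of_continuousOn
    (continuous_assocLegendre l m.natAbs).continuousOn
  refine ⟨|alphaY l m| * C, fun θ φ => ?_⟩
  have hexp : ‖Complex.exp (Complex.I * m * φ)‖ = 1 := by simp [Complex.norm_exp]
  rw [Ylm, norm_mul, hexp, mul_one, Complex.norm_real, norm_mul, Real.norm_eq_abs]
  exact mul_le_mul_of_nonneg_left (hC _ ⟨neg_one_le_sin θ, sin_le_one θ⟩) (abs_nonneg _)

lemma conj_Ylm (l : ℕ) (m : ℤ) (θ φ : ℝ) :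
    (starRingEnd ℂ) (Ylm l m θ φ) =
      (latitudeFactor l m θ : ℂ) * Complex.exp (-(Complex.I * m * φ)) := by
  rw [Ylm_eq, map_mul, Complex.conj_ofReal, ← Complex.exp_conj]
  simp

lemma integrable_mul_conj_Ylm {g : ℝ × ℝ → ℂ} (hg : Integrable g sphereMeasure) (l : ℕ) (m : ℤ) :
    Integrable (fun p => g p * (starRingEnd ℂ) (Ylm l m p.1 p.2)) sphereMeasure := by
  obtain ⟨C, hC⟩ := exists_forall_norm_Ylm_le l m
  refine hg.mul_bdd (c := C) ?_ (Eventually.of_forall fun p => ?_)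
  · exact (Complex.continuous_conj.comp (continuous_Ylm l m)).aestronglyMeasurable
  · rw [Complex.norm_conj]
    exact hC _ _

lemma setIntegral_mul_exp_eq_equatorCoeff (h : ℝ → ℂ) (m : ℤ) :
    ∫ φ in Set.Ico (-π) π, h φ * Complex.exp (-(Complex.I * m * φ)) =
      2 * π * equatorCoeff h m := by
  have hpi : (π : ℂ) ≠ 0 := Complex.ofReal_ne_zero.2 pi_ne_zero
  rw [equatorCoeff, intervalIntegral.integral_of_le (by linarith [pi_pos]),
    ← integral_Ico_eq_integral_Ioc]
  field_simp

lemma flCoeff_eq_integral_equatorCoeff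
    (hψ : Integrable (fun p : ℝ × ℝ => ψ p.1 p.2) sphereMeasure) (l : ℕ) (m : ℤ) :
    flCoeff ψ l m =
      2 * π * ∫ θ, (latitudeFactor l m θ : ℂ) * equatorCoeff (ψ θ) m ∂latitudeMeasure := by
  have hi := integrable_mul_conj_Ylm hψ l m
  rw [sphereMeasure_eq_prod] at hi
  rw [flCoeff, sphereMeasure_eq_prod, integral_prod _ hi, ← integral_const_mul]
  refine integral_congr_ae (Eventually.of_forall fun θ => ?_)
  simp only [conj_Ylm, mul_left_comm _ (latitudeFactor l m θ : ℂ)]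
  rw [integral_const_mul, setIntegral_mul_exp_eq_equatorCoeff]

lemma exp_neg_int_mul_pi (m : ℤ) :
    Complex.exp (-(Complex.I * m * (-π : ℝ))) = Complex.exp (-(Complex.I * m * (π : ℝ))) := by
  rw [Complex.exp_eq_exp_iff_exists_int]
  exact ⟨m, by push_cast; ring⟩

lemma hasDerivAt_exp_neg_int_mul (m : ℤ) (φ : ℝ) :
    HasDerivAt (fun φ : ℝ => Complex.exp (-(Complex.I * m * φ)))
      (-(Complex.I * m) * Complex.exp (-(Complex.I * m * φ))) φ := by
  have h := ((Complex.ofRealCLM.hasDerivAt (x := φ)).const_mul (Complex.I * m)).neg.cexp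
  refine h.congr_deriv ?_
  simp [mul_comm]

lemma equatorCoeff_deriv {h : ℝ → ℂ} (hd : Differentiable ℝ h)
    (hper : ∀ φ, h (φ + 2 * π) = h φ) (hi : IntegrableOn (deriv h) (Set.Ico (-π) π)) (m : ℤ) :
    equatorCoeff (deriv h) m = Complex.I * m * equatorCoeff h m := by
  have hi' : IntervalIntegrable (deriv h) volume (-π) π := by
    rwa [intervalIntegrable_iff_integrableOn_Ico_of_le (by linarith [pi_pos])]
  have hends : h π = h (-π) := by rw [← hper (-π), show -π + 2 * π = π by ring]
  have hparts := intervalIntegral.integral_mul_deriv_eq_deriv_mul (a := -π) (b := π)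
    (fun φ _ => hasDerivAt_exp_neg_int_mul m φ) (fun φ _ => (hd φ).hasDerivAt)
    (Continuous.intervalIntegrable (by fun_prop) _ _) hi'
  rw [exp_neg_int_mul_pi, hends, sub_self, zero_sub] at hparts
  calc equatorCoeff (deriv h) m
      = 1 / (2 * π) * ∫ φ in (-π)..π, Complex.exp (-(Complex.I * m * φ)) * deriv h φ := by
        simp only [equatorCoeff, mul_comm]
    _ = 1 / (2 * π) * (Complex.I * m *
          ∫ φ in (-π)..π, h φ * Complex.exp (-(Complex.I * m * φ))) := by
        rw [hparts, ← intervalIntegral.integral_const_mul, ← intervalIntegral.integral_neg]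
        congr 2 with φ
        ring
    _ = Complex.I * m * equatorCoeff h m := by
        rw [equatorCoeff]
        ring

theorem flCoeff_deriv {f : ℝ → ℝ → ℂ} (hfd : ∀ θ : ℝ, Differentiable ℝ (f θ))
    (hfper : ∀ θ φ : ℝ, f θ (φ + 2 * π) = f θ φ)
    (hf : Integrable (fun p : ℝ × ℝ => f p.1 p.2) sphereMeasure)
    (hf' : Integrable (fun p : ℝ × ℝ => deriv (f p.1) p.2) sphereMeasure) (l : ℕ) (m : ℤ) :
    flCoeff (fun θ φ => deriv (f θ) φ) l m = Complex.I * m * flCoeff f l m := by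
  have hslice : ∀ᵐ θ ∂latitudeMeasure, IntegrableOn (deriv (f θ)) (Set.Ico (-π) π) := by
    rw [sphereMeasure_eq_prod] at hf'
    exact hf'.prod_right_ae
  rw [flCoeff_eq_integral_equatorCoeff (ψ := fun θ φ => deriv (f θ) φ) hf',
    flCoeff_eq_integral_equatorCoeff (ψ := f) hf, mul_left_comm,
    ← integral_const_mul (Complex.I * m)]
  refine congrArg (2 * (π : ℂ) * ·) (integral_congr_ae ?_)
  filter_upwards [hslice] with θ hθ
  rw [equatorCoeff_deriv (hfd θ) (hfper θ) hθ]
  ring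

end SphereIntegrals

section FourierCoefficients

variable {s : ℝ} {h : ℝ → ℂ} {f : ℝ → ℝ → ℂ}

theorem hasSum_equatorCoeff_mul_exp (hc : Continuous h) (hper : ∀ φ, h (φ + 2 * π) = h φ)
    (hs : Summable fun m : ℤ => equatorCoeff h m) (φ : ℝ) :
    HasSum (fun m : ℤ => equatorCoeff h m * Complex.exp (Complex.I * m * φ)) (h φ) := by
  have : Fact (0 < 2 * π) := ⟨two_pi_pos⟩
  have hperiodic : Function.Periodic h (2 * π) := hper
  have hpi : (π : ℂ) ≠ 0 := Complex.ofReal_ne_zero.2 pi_ne_zero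
  let F : C(AddCircle (2 * π), ℂ) := ⟨hperiodic.lift, continuous_coinduced_dom.2 hc⟩
  have hF (x : ℝ) : F (x : AddCircle (2 * π)) = h x := hperiodic.lift_coe x
  have hfourier (m : ℤ) (x : ℝ) :
      fourier m (x : AddCircle (2 * π)) = Complex.exp (Complex.I * m * x) := by
    rw [fourier_coe_apply]
    congr 1
    push_cast
    field_simp
  have hcoeff (m : ℤ) : fourierCoeff F m = equatorCoeff h m := by
    rw [fourierCoeff_eq_intervalIntegral _ _ (-π), equatorCoeff, show -π + 2 * π = π by ring,
      Complex.real_smul]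
    simp only [hF, hfourier, smul_eq_mul, mul_comm (h _)]
    push_cast
    simp only [mul_neg, neg_mul]
  have hsum := has_pointwise_sum_fourier_series_of_summable
    (hs.congr fun m => (hcoeff m).symm) (φ : AddCircle (2 * π))
  simpa only [hF, hcoeff, hfourier, smul_eq_mul] using hsum

lemma MemHs.sobolevSummable (hf : MemHs s f) : SobolevSummable s (flCoeff f) := by
  refine (hf.2.comp_injective injective_natAbs_add).congr fun p => ?_
  simp only [Function.comp_apply, Nat.cast_add]

lemma MemHs.integrable (hf : MemHs s f) : Integrable (fun p : ℝ × ℝ => f p.1 p.2) sphereMeasure :=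
  hf.1.integrable one_le_two

theorem summable_sobolevDensity (hfd : ∀ θ : ℝ, Differentiable ℝ (f θ))
    (hfper : ∀ θ φ : ℝ, f θ (φ + 2 * π) = f θ φ) (hf : MemHs s f)
    (hfφ : MemHs (s - 1 / 2) fun θ φ => deriv (f θ) φ) : Summable (sobolevDensity s f) := by
  refine (Summable.add hf.sobolevSummable hfφ.sobolevSummable).congr fun p => ?_
  have hpos : 0 < (p.1.natAbs : ℝ) + p.2 + 1 := by positivity
  have hrpow : ((p.1.natAbs : ℝ) + p.2 + 1) ^ (2 * s) =
      ((p.1.natAbs : ℝ) + p.2 + 1) ^ (2 * (s - 1 / 2)) * ((p.1.natAbs : ℝ) + p.2 + 1) := by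
    rw [← Real.rpow_add_one hpos.ne']
    ring_nf
  have hnorm : ‖(p.1 : ℂ)‖ = p.1.natAbs := by
    rw [Complex.norm_intCast, Nat.cast_natAbs, Int.cast_abs]
  rw [flCoeff_deriv hfd hfper hf.integrable hfφ.integrable, sobolevDensity, norm_mul, norm_mul,
    Complex.norm_I, hnorm, hrpow]
  field_simp

lemma MemHsE.summable_equatorCoeff (hs : 1 / 2 < s) (hh : MemHsE s h) :
    Summable fun m : ℤ => equatorCoeff h m := by
  have hnat : Summable fun n : ℕ => ((n : ℝ) + 1) ^ (-(2 * s)) :=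
    summable_add_one_rpow (by linarith)
  have hint : Summable fun m : ℤ => ((m.natAbs : ℝ) + 1) ^ (-(2 * s)) := by
    refine Summable.of_nat_of_neg ?_ ?_
    · simpa only [Int.natAbs_natCast] using hnat
    · simpa only [Int.natAbs_neg, Int.natAbs_natCast] using hnat
  refine Summable.of_norm_bounded (hint.add hh.2) fun m => ?_
  have hpos : 0 < ((m.natAbs : ℝ) + 1) ^ (2 * s) := by positivity
  rw [Real.rpow_neg (by positivity)]
  set a := ((m.natAbs : ℝ) + 1) ^ (2 * s)
  set y := ‖equatorCoeff h m‖
  have hsquare : a⁻¹ + a * y ^ 2 - y = a⁻¹ * ((a * y - 1 / 2) ^ 2 + 3 / 4) := by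
    field_simp
    ring
  have hnonneg : 0 ≤ a⁻¹ * ((a * y - 1 / 2) ^ 2 + 3 / 4) := by positivity
  linarith

end FourierCoefficients

section Orthogonality

variable {w : ℕ → ℤ → ℂ} {l : ℕ} {m : ℤ}

lemma latitudeFactor_mul_latitudeFactor (l l' : ℕ) (m : ℤ) (θ : ℝ) :
    latitudeFactor l m θ * latitudeFactor l' m θ =
      harmonicNorm l m.natAbs * harmonicNorm l' m.natAbs * ((1 - sin θ ^ 2) ^ m.natAbs *
        reducedLegendre l m.natAbs (sin θ) * reducedLegendre l' m.natAbs (sin θ)) := by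
  obtain ⟨c, hc, hfactor⟩ := exists_forall_latitudeFactor_eq m θ
  rw [hfactor, hfactor, ← hc]
  ring

lemma integral_latitudeFactor_mul_eq_legendreGram (l l' : ℕ) (m : ℤ) :
    ∫ θ, latitudeFactor l m θ * latitudeFactor l' m θ ∂latitudeMeasure =
      harmonicNorm l m.natAbs * harmonicNorm l' m.natAbs * legendreGram m.natAbs l l' := by
  have hl := continuous_reducedLegendre l m.natAbs
  have hl' := continuous_reducedLegendre l' m.natAbs
  have hsubst := intervalIntegral.integral_comp_mul_deriv (a := -(π / 2)) (b := π / 2)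
    (g := fun t => (1 - t ^ 2) ^ m.natAbs * reducedLegendre l m.natAbs t *
      reducedLegendre l' m.natAbs t)
    (fun θ _ => hasDerivAt_sin θ) continuous_cos.continuousOn (by fun_prop)
  rw [sin_neg, sin_pi_div_two] at hsubst
  rw [integral_latitudeMeasure, legendreGram, ← hsubst, ← intervalIntegral.integral_const_mul]
  refine intervalIntegral.integral_congr fun θ _ => ?_
  simp only [latitudeFactor_mul_latitudeFactor, Function.comp_apply, smul_eq_mul]
  ring

theorem integral_latitudeFactor_mul (h : m.natAbs ≤ l) (l' : ℕ) :
    ∫ θ, latitudeFactor l m θ * latitudeFactor l' m θ ∂latitudeMeasure =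
      if l' = l then 1 / (2 * π) else 0 := by
  rw [integral_latitudeFactor_mul_eq_legendreGram]
  split_ifs with hl
  · rw [hl, ← sq, harmonicNorm_sq, mul_assoc, factorialRatio_mul_legendreGram_self_eq h]
    have hdegree : 2 * (l : ℝ) + 1 ≠ 0 := by positivity
    field_simp
    norm_num
  · rw [legendreGram_of_ne _ (Ne.symm hl), mul_zero]

lemma integral_exp_int_mul {j : ℤ} (hj : j ≠ 0) :
    ∫ φ in (-π)..π, Complex.exp (Complex.I * j * φ) = 0 := by
  rw [integral_exp_mul_complex (mul_ne_zero Complex.I_ne_zero (Int.cast_ne_zero.2 hj))]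
  have h := exp_neg_int_mul_pi (-j)
  simp only [Int.cast_neg, mul_neg, neg_mul, neg_neg] at h
  rw [h, sub_self, zero_div]

lemma equatorCoeff_mul_exp (c : ℂ) (m j : ℤ) :
    equatorCoeff (fun φ => c * Complex.exp (Complex.I * j * φ)) m = if m = j then c else 0 := by
  have hexp (φ : ℝ) : c * Complex.exp (Complex.I * j * φ) * Complex.exp (-(Complex.I * m * φ)) =
      c * Complex.exp (Complex.I * (j - m : ℤ) * φ) := by
    rw [mul_assoc, ← Complex.exp_add]
    congr 2
    push_cast
    ring
  simp only [equatorCoeff, hexp, intervalIntegral.integral_const_mul]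
  split_ifs with h
  · have hpi : (π : ℂ) ≠ 0 := Complex.ofReal_ne_zero.2 pi_ne_zero
    simp only [h, sub_self, Int.cast_zero, mul_zero, zero_mul, Complex.exp_zero,
      intervalIntegral.integral_const, Complex.real_smul]
    push_cast
    field_simp
    ring
  · rw [integral_exp_int_mul (sub_ne_zero.2 (Ne.symm h)), mul_zero, mul_zero]

lemma equatorCoeff_sum_mul_exp (s : Finset ℤ) (c : ℤ → ℂ) (m : ℤ) :
    equatorCoeff (fun φ => ∑ j ∈ s, c j * Complex.exp (Complex.I * j * φ)) m =
      if m ∈ s then c m else 0 := by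
  rw [← Finset.sum_ite_eq s m c]
  simp only [← equatorCoeff_mul_exp, equatorCoeff, Finset.sum_mul]
  rw [intervalIntegral.integral_finsetSum fun j _ =>
    Continuous.intervalIntegrable (by fun_prop) _ _, Finset.mul_sum]

lemma continuous_sphCoord : Continuous fun p : ℝ × ℝ => sphCoord p.1 p.2 := by
  refine (PiLp.continuous_toLp 2 _).comp (continuous_pi fun i => ?_)
  fin_cases i
  · exact (continuous_cos.comp continuous_fst).mul (continuous_cos.comp continuous_snd)
  · exact (continuous_cos.comp continuous_fst).mul (continuous_sin.comp continuous_snd)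
  · exact continuous_sin.comp continuous_fst

lemma continuous_harmonicBlock_sphCoord (w : ℕ → ℤ → ℂ) (l : ℕ) :
    Continuous fun p : ℝ × ℝ => harmonicBlock w l (sphCoord p.1 p.2) :=
  (continuousOn_harmonicBlock w l).comp_continuous continuous_sphCoord
    fun _ => sphCoord_mem_closedExt _ _

lemma BlockSummable.continuous_harmonicSeries_sphCoord (hw : BlockSummable 0 w) :
    Continuous fun p : ℝ × ℝ => harmonicSeries w (sphCoord p.1 p.2) :=
  hw.contDiffOn_closedExt.continuousOn.comp_continuous continuous_sphCoord
    fun _ => sphCoord_mem_closedExt _ _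

lemma equatorCoeff_harmonicBlock (w : ℕ → ℤ → ℂ) (k : ℕ) (m : ℤ) {θ : ℝ} (hθ : 0 ≤ cos θ) :
    equatorCoeff (fun φ => harmonicBlock w k (sphCoord θ φ)) m =
      if m ∈ Finset.Icc (-(k : ℤ)) k then w k m * latitudeFactor k m θ else 0 := by
  have hsum := equatorCoeff_sum_mul_exp (Finset.Icc (-(k : ℤ)) k)
    (fun j => w k j * latitudeFactor k j θ) m
  simpa only [harmonicBlock, exteriorHarmonic_sphCoord _ _ hθ, Ylm_eq, mul_assoc] using hsum

theorem flCoeff_harmonicBlock (w : ℕ → ℤ → ℂ) (k : ℕ) (h : m.natAbs ≤ l) :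
    flCoeff (fun θ φ => harmonicBlock w k (sphCoord θ φ)) l m = if k = l then w l m else 0 := by
  rw [flCoeff_eq_integral_equatorCoeff
    (ψ := fun θ φ => harmonicBlock w k (sphCoord θ φ))
    (integrable_sphereMeasure_of_continuous (continuous_harmonicBlock_sphCoord w k)),
    integral_congr_ae (g := fun θ => (if m ∈ Finset.Icc (-(k : ℤ)) k then w k m else 0) *
      ((latitudeFactor l m θ * latitudeFactor k m θ : ℝ) : ℂ)),
    integral_const_mul, integral_complex_ofReal, integral_latitudeFactor_mul h]
  · have hpi : (π : ℂ) ≠ 0 := Complex.ofReal_ne_zero.2 pi_ne_zero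
    by_cases hk : k = l
    · rw [if_pos hk, if_pos hk, hk, if_pos (mem_Icc_neg_iff_natAbs_le.2 h)]
      push_cast
      field_simp
    · rw [if_neg hk, if_neg hk, Complex.ofReal_zero, mul_zero, mul_zero]
  · filter_upwards [ae_mem_Icc_latitudeMeasure] with θ hθ
    rw [equatorCoeff_harmonicBlock w k m (cos_nonneg_of_mem_Icc hθ)]
    split_ifs
    · push_cast
      ring
    · rw [mul_zero, zero_mul]

theorem hasSum_flCoeff {F : ℕ → ℝ → ℝ → ℂ} {b : ℕ → ℝ}
    (hF : ∀ k, Continuous fun p : ℝ × ℝ => F k p.1 p.2) (hb : Summable b)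
    (hFb : ∀ k θ φ, ‖F k θ φ‖ ≤ b k) (l : ℕ) (m : ℤ) :
    HasSum (fun k => flCoeff (F k) l m) (flCoeff (fun θ φ => ∑' k, F k θ φ) l m) := by
  obtain ⟨C, hC⟩ := exists_forall_norm_Ylm_le l m
  refine hasSum_integral_of_dominated_convergence (fun k _ => b k * C) (fun k => ?_) (fun k => ?_)
    (Eventually.of_forall fun _ => hb.mul_right C) (integrable_const _)
    (Eventually.of_forall fun p => ?_)
  · exact (integrable_mul_conj_Ylm
      (integrable_sphereMeasure_of_continuous (hF k)) l m).aestronglyMeasurable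
  · refine Eventually.of_forall fun p => ?_
    rw [norm_mul, Complex.norm_conj]
    exact mul_le_mul (hFb k _ _) (hC _ _) (norm_nonneg _) ((norm_nonneg _).trans (hFb k 0 0))
  · exact (Summable.of_norm_bounded hb fun k => hFb k _ _).hasSum.mul_right _

theorem BlockSummable.flCoeff_harmonicSeries (hw : BlockSummable 0 w) (h : m.natAbs ≤ l) :
    flCoeff (fun θ φ => harmonicSeries w (sphCoord θ φ)) l m = w l m := by
  have hsum := hasSum_flCoeff (F := fun k θ φ => harmonicBlock w k (sphCoord θ φ))
    (continuous_harmonicBlock_sphCoord w) hw.summable_blockBound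
    (fun k θ φ => norm_harmonicBlock_le_blockBound w k (sphCoord_mem_closedExt θ φ)) l m
  simp only [flCoeff_harmonicBlock w _ h] at hsum
  exact hsum.unique (hasSum_ite_eq l _)

end Orthogonality

section Completeness

variable {f g : ℝ → ℝ → ℂ} {m : ℤ}

lemma integral_eval_mul_eq_zero {X : Type*} [MeasurableSpace X] {μ : Measure X} {g : X → ℂ}
    {t : X → ℝ} (hg : ∀ j : ℕ, Integrable (fun x => ((t x ^ j : ℝ) : ℂ) * g x) μ)
    (h : ∀ j : ℕ, ∫ x, ((t x ^ j : ℝ) : ℂ) * g x ∂μ = 0) (p : Polynomial ℝ) :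
    Integrable (fun x => ((p.eval (t x) : ℝ) : ℂ) * g x) μ ∧
      ∫ x, ((p.eval (t x) : ℝ) : ℂ) * g x ∂μ = 0 := by
  induction p using Polynomial.induction_on' with
  | add p q hp hq =>
    simp only [Polynomial.eval_add, Complex.ofReal_add, add_mul]
    exact ⟨hp.1.add hq.1, by rw [integral_add hp.1 hq.1, hp.2, hq.2, add_zero]⟩
  | monomial n a =>
    simp only [Polynomial.eval_monomial, Complex.ofReal_mul, mul_assoc]
    exact ⟨(hg n).const_mul _, by rw [integral_const_mul, h, mul_zero]⟩

theorem integral_comp_mul_eq_zero_of_forall_pow {X : Type*} [MeasurableSpace X] {μ : Measure X}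
    {g : X → ℂ} {t : X → ℝ} {a b : ℝ} (hg : Integrable g μ) (ht : Measurable t)
    (hab : ∀ x, t x ∈ Set.Icc a b) (h : ∀ j : ℕ, ∫ x, ((t x ^ j : ℝ) : ℂ) * g x ∂μ = 0)
    {u : ℝ → ℝ} (hu : Continuous u) : ∫ x, (u (t x) : ℂ) * g x ∂μ = 0 := by
  have hmul {v : ℝ → ℝ} (hv : Continuous v) : Integrable (fun x => (v (t x) : ℂ) * g x) μ := by
    obtain ⟨C, hC⟩ := isCompact_Icc.exists_bound_of_continuousOn (s := Set.Icc a b) hv.continuousOn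
    refine hg.bdd_mul (c := C) ?_ (Eventually.of_forall fun x => ?_)
    · exact (Complex.measurable_ofReal.comp (hv.measurable.comp ht)).aestronglyMeasurable
    · simpa only [Complex.norm_real] using hC _ (hab x)
  have hle {ε : ℝ} (hε : 0 < ε) : ‖∫ x, (u (t x) : ℂ) * g x ∂μ‖ ≤ ε * ∫ x, ‖g x‖ ∂μ := by
    obtain ⟨p, hp⟩ := exists_polynomial_near_of_continuousOn a b u hu.continuousOn ε hε
    obtain ⟨hpi, hp0⟩ := integral_eval_mul_eq_zero (fun j => hmul (continuous_pow j)) h p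
    rw [← sub_zero (∫ x, _ ∂μ), ← hp0, ← integral_sub (hmul hu) hpi, ← integral_const_mul]
    refine norm_integral_le_of_norm_le (hg.norm.const_mul ε) (Eventually.of_forall fun x => ?_)
    rw [← sub_mul, ← Complex.ofReal_sub, norm_mul, Complex.norm_real, norm_sub_rev]
    exact mul_le_mul_of_nonneg_right (hp _ (hab x)).le (norm_nonneg _)
  have hlim : Tendsto (fun ε : ℝ => ε * ∫ x, ‖g x‖ ∂μ) (𝓝[>] 0) (𝓝 0) :=
    tendsto_nhdsWithin_of_tendsto_nhds (Continuous.tendsto' (by fun_prop) _ _ (zero_mul _))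
  exact norm_le_zero_iff.1 (ge_of_tendsto hlim (eventually_nhdsWithin_of_forall fun _ => hle))

theorem eq_zero_of_integral_sin_pow_mul {g : ℝ → ℂ} (hg : Continuous g)
    (h : ∀ j : ℕ, ∫ θ, ((sin θ ^ j : ℝ) : ℂ) * g θ ∂latitudeMeasure = 0) {θ : ℝ}
    (hθ : θ ∈ Set.Ioo (-(π / 2)) (π / 2)) : g θ = 0 := by
  have hmoment {u : ℝ → ℝ} (hu : Continuous u) :=
    integral_comp_mul_eq_zero_of_forall_pow (integrable_latitudeMeasure_of_continuous hg)
      measurable_sin sin_mem_Icc h hu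
  have hnorm : ∫ θ, ((‖g θ‖ ^ 2 : ℝ) : ℂ) ∂latitudeMeasure = 0 := by
    have hre := hmoment (u := fun t => (g (arcsin t)).re) (by fun_prop)
    have him := hmoment (u := fun t => (g (arcsin t)).im) (by fun_prop)
    calc
      _ = ∫ θ, (((g (arcsin (sin θ))).re : ℂ) * g θ -
          Complex.I * (((g (arcsin (sin θ))).im : ℂ) * g θ)) ∂latitudeMeasure := by
        refine integral_congr_ae ?_
        filter_upwards [ae_mem_Icc_latitudeMeasure] with x hx
        have hstar : (starRingEnd ℂ) (g x) = (g x).re - Complex.I * (g x).im := by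
          apply Complex.ext <;> simp
        rw [arcsin_sin hx.1 hx.2, Complex.ofReal_pow, ← Complex.conj_mul', hstar]
        ring
      _ = 0 := by
        rw [integral_sub (integrable_latitudeMeasure_of_continuous (by fun_prop))
          (integrable_latitudeMeasure_of_continuous (by fun_prop)), integral_const_mul, hre, him,
          mul_zero, sub_zero]
  by_contra hne
  have hpos : 0 < ∫ θ in (-(π / 2))..(π / 2), cos θ * ‖g θ‖ ^ 2 := by
    refine intervalIntegral.integral_pos (by linarith [pi_pos]) (by fun_prop)
      (fun x hx => ?_) ⟨θ, Set.Ioo_subset_Icc_self hθ, ?_⟩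
    · exact mul_nonneg (cos_nonneg_of_mem_Icc (Set.Ioc_subset_Icc_self hx)) (sq_nonneg _)
    · exact mul_pos (cos_pos_of_mem_Ioo hθ) (pow_pos (norm_pos_iff.2 hne) 2)
  simp only [integral_latitudeMeasure, Complex.real_smul, ← Complex.ofReal_mul,
    intervalIntegral.integral_ofReal, Complex.ofReal_eq_zero] at hnorm
  exact hpos.ne' hnorm

lemma latitudeFactor_eq_zero_of_lt {l : ℕ} (h : l < m.natAbs) (θ : ℝ) :
    latitudeFactor l m θ = 0 := by
  obtain ⟨c, -, hfactor⟩ := exists_forall_latitudeFactor_eq m θ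
  rw [hfactor, reducedLegendre_eq_zero_of_lt h, mul_zero, mul_zero]

lemma latitudeFactor_natAbs_ne_zero (m : ℤ) {θ : ℝ} (hθ : 0 < cos θ) :
    latitudeFactor m.natAbs m θ ≠ 0 := by
  obtain ⟨c, hc, hfactor⟩ := exists_forall_latitudeFactor_eq m θ
  have hc0 : c ≠ 0 := by
    rintro rfl
    rw [← cos_sq', zero_pow two_ne_zero] at hc
    exact (pow_pos (pow_pos hθ 2) _).ne hc
  rw [hfactor]
  exact mul_ne_zero hc0
    (mul_pos (harmonicNorm_pos _ _) (reducedLegendre_self_pos _ _)).ne'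

lemma sin_mul_latitudeFactor {l : ℕ} (h : m.natAbs ≤ l) (θ : ℝ) :
    sin θ * latitudeFactor l m θ = betaLM (l + 1) m * latitudeFactor (l + 1) m θ +
      betaLM l m * latitudeFactor (l - 1) m θ := by
  obtain ⟨c, -, hfactor⟩ := exists_forall_latitudeFactor_eq m θ
  simp only [hfactor]
  linear_combination c * mul_harmonicNorm_mul_reducedLegendre h (sin θ)

lemma integral_sin_pow_mul_latitudeFactor_mul_eq_zero {g : ℝ → ℂ} (hg : Continuous g)
    (h : ∀ l, m.natAbs ≤ l → ∫ θ, (latitudeFactor l m θ : ℂ) * g θ ∂latitudeMeasure = 0)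
    (j l : ℕ) :
    ∫ θ, ((sin θ ^ j : ℝ) : ℂ) * (latitudeFactor l m θ * g θ) ∂latitudeMeasure = 0 := by
  have hint (j l : ℕ) : Integrable
      (fun θ => ((sin θ ^ j : ℝ) : ℂ) * (latitudeFactor l m θ * g θ)) latitudeMeasure := by
    have hl := continuous_latitudeFactor l m
    exact integrable_latitudeMeasure_of_continuous (by fun_prop)
  induction j generalizing l with
  | zero =>
    obtain hl | hl := le_or_gt m.natAbs l
    · simpa only [pow_zero, Complex.ofReal_one, one_mul] using h l hl
    · simp only [latitudeFactor_eq_zero_of_lt hl, Complex.ofReal_zero, zero_mul, mul_zero,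
        integral_zero]
  | succ j ih =>
    obtain hl | hl := le_or_gt m.natAbs l
    · have hrec (θ : ℝ) : ((sin θ ^ (j + 1) : ℝ) : ℂ) * (latitudeFactor l m θ * g θ) =
          betaLM (l + 1) m * (((sin θ ^ j : ℝ) : ℂ) * (latitudeFactor (l + 1) m θ * g θ)) +
            betaLM l m * (((sin θ ^ j : ℝ) : ℂ) * (latitudeFactor (l - 1) m θ * g θ)) := by
        have hsin := congrArg ((↑) : ℝ → ℂ) (sin_mul_latitudeFactor hl θ)
        push_cast at hsin ⊢
        linear_combination Complex.sin θ ^ j * g θ * hsin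
      simp only [hrec]
      rw [integral_add ((hint _ _).const_mul _) ((hint _ _).const_mul _), integral_const_mul,
        integral_const_mul, ih, ih, mul_zero, mul_zero, add_zero]
    · simp only [latitudeFactor_eq_zero_of_lt hl, Complex.ofReal_zero, zero_mul, mul_zero,
        integral_zero]

lemma continuous_equatorCoeff (hg : Continuous fun p : ℝ × ℝ => g p.1 p.2) (m : ℤ) :
    Continuous fun θ => equatorCoeff (g θ) m := by
  refine continuous_const.mul
    (intervalIntegral.continuous_parametric_intervalIntegral_of_continuous' (μ := volume)
      (f := fun θ φ => g θ φ * Complex.exp (-(Complex.I * m * φ))) ?_ _ _)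
  exact hg.mul (by fun_prop)

theorem equatorCoeff_eq_zero_of_flCoeff_eq_zero (hg : Continuous fun p : ℝ × ℝ => g p.1 p.2)
    (h : ∀ l, m.natAbs ≤ l → flCoeff g l m = 0) {θ : ℝ}
    (hθ : θ ∈ Set.Ioo (-(π / 2)) (π / 2)) : equatorCoeff (g θ) m = 0 := by
  have hzero (l : ℕ) (hl : m.natAbs ≤ l) :
      ∫ θ, (latitudeFactor l m θ : ℂ) * equatorCoeff (g θ) m ∂latitudeMeasure = 0 := by
    have hfl := h l hl
    rw [flCoeff_eq_integral_equatorCoeff (ψ := g) (integrable_sphereMeasure_of_continuous hg)]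
      at hfl
    have hpi : (π : ℂ) ≠ 0 := Complex.ofReal_ne_zero.2 pi_ne_zero
    exact (mul_eq_zero.1 hfl).resolve_left (mul_ne_zero two_ne_zero hpi)
  have hcont := continuous_equatorCoeff hg m
  have hfactor := continuous_latitudeFactor m.natAbs m
  have hprod := eq_zero_of_integral_sin_pow_mul (by fun_prop)
    (fun j => integral_sin_pow_mul_latitudeFactor_mul_eq_zero hcont hzero j m.natAbs) hθ
  exact (mul_eq_zero.1 hprod).resolve_left
    (Complex.ofReal_ne_zero.2 (latitudeFactor_natAbs_ne_zero m (cos_pos_of_mem_Ioo hθ)))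

theorem eq_zero_of_flCoeff_eq_zero (hg : Continuous fun p : ℝ × ℝ => g p.1 p.2)
    (hper : ∀ θ φ, g θ (φ + 2 * π) = g θ φ)
    (h : ∀ (l : ℕ) (m : ℤ), m.natAbs ≤ l → flCoeff g l m = 0) {θ : ℝ}
    (hθ : θ ∈ Set.Icc (-(π / 2)) (π / 2)) (φ : ℝ) : g θ φ = 0 := by
  have hinterior : Set.Ioo (-(π / 2)) (π / 2) ⊆ {θ | g θ φ = 0} := fun θ hθ => by
    have hcoeff (m : ℤ) : equatorCoeff (g θ) m = 0 :=
      equatorCoeff_eq_zero_of_flCoeff_eq_zero hg (fun l => h l m) hθ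
    have hsum := hasSum_equatorCoeff_mul_exp (h := g θ) (by fun_prop) (hper θ)
      (by simpa only [hcoeff] using summable_zero) φ
    simp only [hcoeff, zero_mul] at hsum
    exact hsum.unique hasSum_zero
  have hclosed : IsClosed {θ | g θ φ = 0} := isClosed_eq (by fun_prop) continuous_const
  have hclosure := closure_minimal hinterior hclosed
  rw [closure_Ioo (by linarith [pi_pos])] at hclosure
  exact hclosure hθ

lemma sphCoord_add_two_pi (θ φ : ℝ) : sphCoord θ (φ + 2 * π) = sphCoord θ φ := by
  simp only [sphCoord, cos_add_two_pi, sin_add_two_pi]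

theorem hasSum_harmonicBlock_flCoeff_sphCoord (hf : Continuous fun p : ℝ × ℝ => f p.1 p.2)
    (hper : ∀ θ φ, f θ (φ + 2 * π) = f θ φ) (hw : BlockSummable 0 (flCoeff f)) {θ : ℝ}
    (hθ : θ ∈ Set.Icc (-(π / 2)) (π / 2)) (φ : ℝ) :
    HasSum (fun l => harmonicBlock (flCoeff f) l (sphCoord θ φ)) (f θ φ) := by
  have hseries := hw.continuous_harmonicSeries_sphCoord
  have hzero := eq_zero_of_flCoeff_eq_zero
    (g := fun θ φ => f θ φ - harmonicSeries (flCoeff f) (sphCoord θ φ)) (hf.sub hseries)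
    (fun θ φ => by rw [hper, sphCoord_add_two_pi]) (fun l m hlm => ?_) hθ φ
  · rw [sub_eq_zero.1 hzero]
    exact (hw.summable_harmonicBlock (sphCoord_mem_closedExt θ φ)).hasSum
  · have hsub := integral_sub
      (integrable_mul_conj_Ylm (integrable_sphereMeasure_of_continuous hf) l m)
      (integrable_mul_conj_Ylm (integrable_sphereMeasure_of_continuous hseries) l m)
    rw [flCoeff]
    simp only [sub_mul]
    exact hsub.trans (sub_eq_zero.2 (hw.flCoeff_harmonicSeries hlm).symm)

end Completeness

section EquatorialData

variable {s : ℝ} {f : ℝ → ℝ → ℂ} {h : ℝ → ℂ} {w : ℕ → ℤ → ℂ}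

lemma latitudeFactor_add_odd_zero (m : ℤ) (k : ℕ) :
    latitudeFactor (m.natAbs + (2 * k + 1)) m 0 = 0 := by
  have hrec {l : ℕ} (hl : m.natAbs ≤ l) := sin_mul_latitudeFactor hl 0
  simp only [sin_zero, zero_mul] at hrec
  induction k with
  | zero =>
    have h := hrec le_rfl
    rw [betaLM_natAbs, zero_mul, add_zero] at h
    exact (mul_eq_zero.1 h.symm).resolve_left (betaLM_succ_pos le_rfl).ne'
  | succ k ih =>
    have hl : m.natAbs ≤ m.natAbs + (2 * k + 2) := Nat.le_add_right _ _
    have h := hrec hl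
    rw [show m.natAbs + (2 * k + 2) - 1 = m.natAbs + (2 * k + 1) by lia, ih, mul_zero,
      add_zero] at h
    exact (mul_eq_zero.1 h.symm).resolve_left (betaLM_succ_pos hl).ne'

lemma latitudeFactor_add_even_zero (m : ℤ) (k : ℕ) :
    latitudeFactor (m.natAbs + 2 * k) m 0 = PzeroM m k := by
  rw [latitudeFactor, PzeroM, sin_zero]

lemma hasSum_mul_latitudeFactor_zero_iff {c : ℕ → ℂ} {m : ℤ} {a : ℂ} :
    HasSum (fun n => c n * latitudeFactor (m.natAbs + n) m 0) a ↔
      HasSum (fun k => c (2 * k) * (PzeroM m k : ℂ)) a := by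
  rw [← (mul_right_injective₀ (two_ne_zero (α := ℕ))).hasSum_iff]
  · simp only [Function.comp_def, latitudeFactor_add_even_zero]
  · intro n hn
    obtain ⟨k, rfl | rfl⟩ := n.even_or_odd'
    · exact absurd ⟨k, rfl⟩ hn
    · rw [latitudeFactor_add_odd_zero, Complex.ofReal_zero, mul_zero]

lemma BlockSummable.hasSum_equator (hw : BlockSummable 0 w) (φ : ℝ) :
    HasSum (fun p : ℤ × ℕ => w (p.1.natAbs + p.2) p.1 *
      latitudeFactor (p.1.natAbs + p.2) p.1 0 * Complex.exp (Complex.I * p.1 * φ))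
      (harmonicSeries w (sphCoord 0 φ)) := by
  have hsum := (hasSum_natAbs_add_iff fun p hp => by
    rw [exteriorHarmonic_eq_zero_of_lt hp, mul_zero]).2
      (hw.hasSum_exteriorHarmonic (sphCoord_mem_closedExt 0 φ))
  have hcos : 0 ≤ cos 0 := by rw [cos_zero]; exact zero_le_one
  simpa only [exteriorHarmonic_sphCoord _ _ hcos, Ylm_eq, mul_assoc] using hsum

lemma BlockSummable.summable_mul_PzeroM (hw : BlockSummable 0 w) (m : ℤ) :
    Summable fun k => w (m.natAbs + 2 * k) m * (PzeroM m k : ℂ) := by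
  have hfiber := (hw.hasSum_equator 0).summable.prod_factor m
  simp only [Complex.ofReal_zero, mul_zero, Complex.exp_zero, mul_one] at hfiber
  exact (hasSum_mul_latitudeFactor_zero_iff (c := fun n => w (m.natAbs + n) m)).1
    hfiber.hasSum |>.summable

theorem BlockSummable.harmonicSeries_equator_eq (hw : BlockSummable 0 w) (hc : Continuous h)
    (hper : ∀ φ, h (φ + 2 * π) = h φ) (hs : Summable fun m => equatorCoeff h m)
    (hfiber : ∀ m : ℤ, HasSum (fun k => w (m.natAbs + 2 * k) m * (PzeroM m k : ℂ))
      (equatorCoeff h m)) (φ : ℝ) :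
    harmonicSeries w (sphCoord 0 φ) = h φ := by
  refine ((hw.hasSum_equator φ).prod_fiberwise fun m => ?_).unique
    (hasSum_equatorCoeff_mul_exp hc hper hs φ)
  exact ((hasSum_mul_latitudeFactor_zero_iff (c := fun n => w (m.natAbs + n) m)).2
    (hfiber m)).mul_right _

lemma summable_GammaKM_mul_PzeroM (m : ℤ) : Summable fun k => GammaKM m k * PzeroM m k := by
  obtain ⟨ε, -, hε⟩ := exists_forall_PzeroM_eq m
  refine ((summable_GammaKM_mul_equatorValue m).mul_left ε).congr fun k => ?_
  rw [hε]
  ring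

lemma cCoef_natAbs_add (f : ℝ → ℝ → ℂ) (h : ℝ → ℂ) (m : ℤ) (k : ℕ) :
    cCoef f h (m.natAbs + 2 * k) m = (GammaKM m k : ℂ) * aTilde f h m := by
  rw [cCoef, if_pos (by lia), show (m.natAbs + 2 * k - m.natAbs) / 2 = k by lia]

theorem hasSum_solutionCoeff_mul_PzeroM (hb : BlockSummable 0 (bCoef f)) (h : ℝ → ℂ) (m : ℤ) :
    HasSum (fun k => solutionCoeff f h (m.natAbs + 2 * k) m * (PzeroM m k : ℂ))
      (equatorCoeff h m) := by
  have hB := (hb.summable_mul_PzeroM m).hasSum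
  have hC := (Complex.hasSum_ofReal.2 (summable_GammaKM_mul_PzeroM m).hasSum).mul_left
    (aTilde f h m)
  have hne := Complex.ofReal_ne_zero.2 (tsum_GammaKM_mul_PzeroM_ne_zero m)
  convert hB.add hC using 1
  · ext k
    rw [solutionCoeff, cCoef_natAbs_add]
    push_cast
    ring
  · rw [aTilde, div_mul_cancel₀ _ hne, add_sub_cancel]

end EquatorialData

/-- Lemma 3.3: regularity of the series solution.
For `s > 1`, if `f ∈ H^s(𝕊)` with `f_φ ∈ H^{s-1/2}(𝕊)` and `h ∈ H^{s+3/4}(ℰ)`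
(realized by continuous, `2π`-periodic representatives), then the series solution
`v = Σ (b_l^m + c_l^m) r^{-l-1} Y_l^m` belongs to `C²(Ω) ∩ C¹(cl Ω)` and solves the
oblique derivative problem in the classical sense. -/
theorem series_solution_is_classical_solution (s : ℝ) (hs : 1 < s)
    (f : ℝ → ℝ → ℂ) (h : ℝ → ℂ)
    (hfc : Continuous fun q : ℝ × ℝ => f q.1 q.2)
    (hfd : ∀ θ : ℝ, Differentiable ℝ (f θ))
    (hfper : ∀ θ φ : ℝ, f θ (φ + 2 * Real.pi) = f θ φ)
    (hf : MemHs s f)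
    (hfφ : MemHs (s - 1 / 2) (fun θ φ => deriv (f θ) φ))
    (hhc : Continuous h)
    (hhper : ∀ φ : ℝ, h (φ + 2 * Real.pi) = h φ)
    (hh : MemHsE (s + 3 / 4) h) :
    SolvesObliqueC (vFun f h) f h := by
  obtain ⟨hb, hw⟩ := blockSummable_bCoef_solutionCoeff hs
    (summable_sobolevDensity hfd hfper hf hfφ) hh.2
  have hf₀ : BlockSummable 0 (flCoeff f) := hf.sobolevSummable.blockSummable (by simpa using hs)
  have hexpansion : ∀ θ ∈ Set.Icc (-(π / 2)) (π / 2), ∀ φ,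
      HasSum (fun l => harmonicBlock (flCoeff f) l (sphCoord θ φ)) (f θ φ) :=
    fun _ => hasSum_harmonicBlock_flCoeff_sphCoord hfc hfper hf₀
  have hequator (φ : ℝ) : harmonicSeries (solutionCoeff f h) (sphCoord 0 φ) = h φ :=
    (hw.mono zero_le_one).harmonicSeries_equator_eq hhc hhper
      (hh.summable_equatorCoeff (by linarith))
      (hasSum_solutionCoeff_mul_PzeroM (hb.mono zero_le_one) h) φ
  exact solvesObliqueC_vFun hw hexpansion hequator

end
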